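/- arXiv:1504.00547 — 2 statements merged into one kernel-verified Lean document; each statement's English description precedes it below -/
import Mathlib

section
/- Let n ≥ 1 with n ≠ 4, and set kₙ = ⌈C(n+3,3)/(n+1)⌉. For a generic choice of kₙ points p₁,…,p_{kₙ} ∈ ℂ^{n+1}, the only homogeneous cubic polynomial in ℂ[x₀,…,xₙ] that is singular at all of these points is the zero polynomial. -/
/-!
Write `n + 1 = d + 3 * m` with a core of `d ∈ {1, 3, 8}` variables and `m` blocks of three variables
(for `n = 1` take `d = 2` and `m = 0`). By lifting a maximal minor (`exists_injectivity_certificate`,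
`generic_of_exists`), it is enough to find one configuration of at most `kₙ` points admitting no
nonzero singular cubic; missing points are filled up with the origin.

The configuration contains the `n + 1` coordinate points. A cubic singular there has only squarefree
monomials `x_i x_j x_k` (`coeff_eq_zero_of_two_le`). For every set `A` of at most two blocks there
are further points supported on the core and the blocks in `A`: `⌈C(d,3)/d⌉` points if `A` is empty,
`d` if `A` has one element, and `3` if it has two. All their coordinates are algebraically
independent. The number of points is at most `kₙ` (`card_le`).

By induction on a set `B` of blocks, all coefficients of triples inside the core and the blocks of
`B` vanish (`eq_zero_of_blockPt`). Triples missing a block of `B` are covered by a smaller set. If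
some triple meets every block of `B`, then `B` has at most three elements. A point supported on
blocks in `B`, differentiated along a variable of `B` or of the core, gives a linear equation only
in the triples inside `B`, so what is needed is that the resulting equations on the triples meeting
every block of `B` have full column rank (`stage`). Up to permuting the blocks this depends only on
`d` and `r = |B| ≤ 3`, which leaves twelve matrices. Full rank for algebraically independent
coordinates follows from full rank for one specialization in `ℤ/31`, and there it is established by
a Gaussian elimination that the kernel evaluates (`stageCheck_eq_true`, `elim_sound`).
-/

open MvPolynomial

noncomputable section

/-- The linear form `a₀x₀ + ⋯ + aₙxₙ` with coefficient vector `a`. -/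
def linForm {n : ℕ} (a : Fin (n + 1) → ℂ) : MvPolynomial (Fin (n + 1)) ℂ :=
  ∑ i, C (a i) * X i

/-- Evaluation at the point `v`, as a linear map. -/
def evalAt {n : ℕ} (v : Fin (n + 1) → ℂ) : MvPolynomial (Fin (n + 1)) ℂ →ₗ[ℂ] ℂ :=
  (aeval v).toLinearMap

/-- The linear map `f ↦ (∂f/∂xᵢ)(p)`. -/
def evalPDeriv {n : ℕ} (p : Fin (n + 1) → ℂ) (i : Fin (n + 1)) :
    MvPolynomial (Fin (n + 1)) ℂ →ₗ[ℂ] ℂ :=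
  evalAt p ∘ₗ (pderiv i).toLinearMap

/-- `f` is singular at `p`: all partial derivatives of `f` vanish at `p`. -/
def SingularAt {n : ℕ} (f : MvPolynomial (Fin (n + 1)) ℂ) (p : Fin (n + 1) → ℂ) : Prop :=
  ∀ i, evalPDeriv p i f = 0

/-- The space of homogeneous degree-`d` polynomials in `n+1` variables that vanish at every
point of `V` and are singular at every point of `S`. -/
def SingSpace (n : ℕ) (d : ℕ) (S V : Set (Fin (n + 1) → ℂ)) :
    Submodule ℂ (MvPolynomial (Fin (n + 1)) ℂ) :=
  homogeneousSubmodule (Fin (n + 1)) ℂ d ⊓ (⨅ v ∈ V, LinearMap.ker (evalAt v)) ⊓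
    ⨅ p ∈ S, ⨅ i, LinearMap.ker (evalPDeriv p i)

/-- A property of parameters `t : ι → ℂ` holds for a generic choice of `t` if there is a
nonzero polynomial `F` in the variables `ι` such that the property holds whenever
`F(t) ≠ 0`. -/
def Generic {ι : Type} [Fintype ι] (P : (ι → ℂ) → Prop) : Prop :=
  ∃ F : MvPolynomial ι ℂ, F ≠ 0 ∧ ∀ t : ι → ℂ, eval t F ≠ 0 → P t

end

/-! ### Gaussian elimination modulo a prime -/

/-- `force x f = f x`, arranged so that kernel reduction evaluates `x` to a numeral before it is
substituted into `f`. -/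
def force {α : Type} (x : ℕ) (f : ℕ → α) : α :=
  match x with
  | 0 => f 0
  | y + 1 => f (y + 1)

lemma force_eq {α : Type} (x : ℕ) (f : ℕ → α) : force x f = f x := by
  cases x <;> rfl

/-- Applies `K` to the reversed list of values `g a`, `a ∈ l` (followed by `acc`), forcing each
value. -/
def mapForce (g : ℕ → ℕ) (K : List ℕ → Bool) : List ℕ → List ℕ → Bool
  | [], acc => K acc
  | a :: l, acc => force (g a) fun y => mapForce g K l (y :: acc)

lemma mapForce_eq (g : ℕ → ℕ) (K : List ℕ → Bool) (l acc : List ℕ) :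
    mapForce g K l acc = K ((l.map g).reverse ++ acc) := by
  induction l generalizing acc with
  | nil => rfl
  | cons a l ih => simp [mapForce, force_eq, ih]

/-- Fraction-free Gaussian elimination modulo `p`, testing whether rows with `k` entries have
rank `k`. The row `(v₀, …, v_{k-1})` is packed into the single natural number `∑ vⱼ Bʲ`. Entries
are never reduced modulo `p` except to form multipliers, so a row operation is one linear
combination of two natural numbers, and division by `B` deletes the leading column. -/
def elim (p B : ℕ) : ℕ → List ℕ → Bool
  | 0, _ => true
  | k + 1, rows =>
    match rows.find? fun r => r % B % p != 0 with
    | none => false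
    | some r => mapForce (fun s => ((r % B % p) * s + (p - s % B % p) * r) / B)
        (elim p B k) rows []

/-- The number `r` packs a row with `k` entries below `(2 * p)^e` which is orthogonal to `x`. -/
def PackedRelation (p B e k : ℕ) (x : ℕ → ZMod p) (r : ℕ) : Prop :=
  ∃ v : ℕ → ℕ, (∀ j, v j < (2 * p) ^ e) ∧ r = ∑ j ∈ Finset.range k, v j * B ^ j ∧
    ∑ j ∈ Finset.range k, (v j : ZMod p) * x j = 0

lemma packed_succ (B k : ℕ) (v : ℕ → ℕ) : ∑ j ∈ Finset.range (k + 1), v j * B ^ j =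
    v 0 + B * ∑ j ∈ Finset.range k, v (j + 1) * B ^ j := by
  rw [Finset.sum_range_succ', Finset.mul_sum, add_comm]
  simp only [pow_zero, mul_one]
  congr 1
  exact Finset.sum_congr rfl fun j _ => by ring

/-- If the elimination succeeds, the only vector orthogonal to all rows is zero. Each step
multiplies the bound on the entries by at most `2 * p`, so no carries occur while
`(2 * p)^(e + k) ≤ B`. -/
lemma elim_sound {p B : ℕ} [Fact p.Prime] (k : ℕ) : ∀ (e : ℕ) (rows : List ℕ) (x : ℕ → ZMod p),
    (2 * p) ^ (e + k) ≤ B → elim p B k rows = true →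
    (∀ r ∈ rows, PackedRelation p B e k x r) → ∀ j < k, x j = 0 := by
  have hp : 0 < p := (Fact.out : p.Prime).pos
  induction k with
  | zero => intro e rows x _ _ _ j hj; omega
  | succ k ih =>
    intro e rows x hB hel hrows
    rw [elim] at hel
    split at hel
    · exact absurd hel (by simp)
    rename_i r hr
    rw [mapForce_eq, List.append_nil] at hel
    have hpiv : r % B % p ≠ 0 := by simpa using List.find?_some hr
    obtain ⟨v, hv, hrv, hvx⟩ := hrows r (List.mem_of_find?_eq_some hr)
    rw [packed_succ] at hrv
    have hlt : ∀ f, f ≤ e + (k + 1) → (2 * p) ^ f ≤ B := fun f hf =>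
      (Nat.pow_le_pow_right (by omega) hf).trans hB
    have hmod : ∀ (u : ℕ → ℕ), (∀ j, u j < (2 * p) ^ e) → ∀ T, (u 0 + B * T) % B = u 0 :=
      fun u hu T => by
        rw [Nat.add_mul_mod_self_left, Nat.mod_eq_of_lt ((hu 0).trans_le (hlt e (by omega)))]
    have hr0 : r % B = v 0 := by rw [hrv]; exact hmod v hv _
    have hc : (((r % B % p : ℕ)) : ZMod p) = v 0 := by rw [hr0, ZMod.natCast_mod]
    have hv0 : (v 0 : ZMod p) ≠ 0 := by
      rw [hr0] at hpiv
      rwa [Ne, ZMod.natCast_eq_zero_iff, Nat.dvd_iff_mod_eq_zero]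
    have htail : ∀ j < k, x (j + 1) = 0 := by
      refine ih (e + 1) _ (fun j => x (j + 1)) (hlt _ (by omega)) hel fun r' hr' => ?_
      rw [List.mem_reverse, List.mem_map] at hr'
      obtain ⟨s, hs, rfl⟩ := hr'
      obtain ⟨u, hu, hsu, hux⟩ := hrows s hs
      rw [packed_succ] at hsu
      have hs0 : s % B = u 0 := by rw [hsu]; exact hmod u hu _
      set c := r % B % p with hcdef
      have hcp : c < p := Nat.mod_lt _ hp
      set c' := p - s % B % p with hc'def
      have hc' : (c' : ZMod p) = -u 0 := by
        rw [hc'def, hs0, Nat.cast_sub (Nat.mod_lt _ hp).le, ZMod.natCast_mod]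
        simp
      have hc'p : c' ≤ p := Nat.sub_le _ _
      have hbd : ∀ j, c * u j + c' * v j < (2 * p) ^ (e + 1) := fun j => by
        have h1 := hu j
        have h2 := hv j
        have h3 : c * u j ≤ p * u j := Nat.mul_le_mul_right _ hcp.le
        have h4 : c' * v j ≤ p * v j := Nat.mul_le_mul_right _ hc'p
        have h5 : p * u j < p * (2 * p) ^ e := Nat.mul_lt_mul_of_pos_left h1 hp
        have h6 : p * v j < p * (2 * p) ^ e := Nat.mul_lt_mul_of_pos_left h2 hp
        rw [pow_succ]
        linarith
      refine ⟨fun j => c * u (j + 1) + c' * v (j + 1), fun j => hbd _, ?_, ?_⟩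
      · have h0 := (hbd 0).trans_le (hlt (e + 1) (by omega))
        have : c * s + c' * r = (c * u 0 + c' * v 0) +
            B * ∑ j ∈ Finset.range k, (c * u (j + 1) + c' * v (j + 1)) * B ^ j := by
          simp only [add_mul, Finset.sum_add_distrib, mul_assoc, ← Finset.mul_sum]
          conv_lhs => rw [hsu, hrv]
          ring
        rw [this, Nat.add_mul_div_left _ _ (by omega), Nat.div_eq_of_lt h0, zero_add]
      · rw [Finset.sum_range_succ'] at hvx hux
        push_cast
        rw [hc, hc']
        simp only [add_mul, Finset.sum_add_distrib, mul_assoc, ← Finset.mul_sum]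
        linear_combination (v 0 : ZMod p) * hux - (u 0 : ZMod p) * hvx
    have hx0 : x 0 = 0 := by
      rw [Finset.sum_range_succ', Finset.sum_eq_zero fun j hj => by
        rw [htail j (Finset.mem_range.1 hj), mul_zero], zero_add] at hvx
      exact (mul_eq_zero.1 hvx).resolve_left hv0
    intro j hj
    cases j with
    | zero => exact hx0
    | succ j => exact htail j (by omega)

/-! ### Spreading out full rank -/

/-- Nonsingularity spreads out from one specialization: if a matrix over `R` becomes injective
over the field `K`, there is `D : R`, nonzero in `K`, such that the matrix becomes injective over
every field in which `D` is nonzero. Here `D` is a lift of a maximal minor, up to a left factor. -/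
lemma exists_injectivity_certificate {R K m n : Type} [CommRing R] [Field K] [Fintype m]
    [Fintype n] [DecidableEq m] [DecidableEq n] (M : Matrix m n R) (φ : R →+* K)
    (hφ : Function.Surjective φ)
    (hM : ∀ x : n → K, (M.map φ).mulVec x = 0 → x = 0) :
    ∃ D : R, φ D ≠ 0 ∧ ∀ (S : Type) [Field S] (ψ : R →+* S), ψ D ≠ 0 →
      ∀ x : n → S, (M.map ψ).mulVec x = 0 → x = 0 := by
  obtain ⟨g, hg⟩ := LinearMap.exists_leftInverse_of_injective (M.map φ).mulVecLin
    (LinearMap.ker_eq_bot'.2 hM)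
  choose lift hlift using hφ
  let G : Matrix n m R := (LinearMap.toMatrix' g).map lift
  have hG : G.map φ = LinearMap.toMatrix' g := by ext i j; simp [G, hlift]
  refine ⟨(G * M).det, ?_, fun S _ ψ hψ x hx => ?_⟩
  · have : (G * M).map φ = 1 := by
      rw [Matrix.map_mul, hG, ← LinearMap.toMatrix'_toLin' (M.map φ), ← LinearMap.toMatrix'_comp]
      change LinearMap.toMatrix' (g ∘ₗ (M.map φ).mulVecLin) = 1
      rw [hg, LinearMap.toMatrix'_id]
    rw [RingHom.map_det, RingHom.mapMatrix_apply, this, Matrix.det_one]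
    exact one_ne_zero
  · rw [RingHom.map_det, RingHom.mapMatrix_apply, Matrix.map_mul] at hψ
    refine Matrix.eq_zero_of_mulVec_eq_zero hψ ?_
    rw [← Matrix.mulVec_mulVec, hx, Matrix.mulVec_zero]

/-! ### Points and triples on at most three blocks -/

/-- The number of general points attached to a set of `k` blocks, when the core has `d`
variables: `⌈C(d,3)/d⌉`, `d`, `3`, and none for `k ≥ 3`. -/
def multi (d k : ℕ) : ℕ :=
  if k = 0 then (d.choose 3 + d - 1) / d else if k = 1 then d else if k = 2 then 3 else 0

/-- The triple `c` is full: it meets each of the `r` blocks `{v | d ≤ v ∧ (v - d) / 3 = b}`. The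
comparison `Nat.ble d v` guards against the truncated subtraction `v - d` on the core. -/
def isFull (d r : ℕ) (c : ℕ × ℕ × ℕ) : Bool :=
  (List.range r).all fun b =>
    (Nat.ble d c.1 && (c.1 - d) / 3 == b) || (Nat.ble d c.2.1 && (c.2.1 - d) / 3 == b)
      || (Nat.ble d c.2.2 && (c.2.2 - d) / 3 == b)

/-- The squarefree cubic monomials which involve the core and `r` blocks and meet every block: the
triples satisfying `isFull`. -/
def cols (d r : ℕ) : List (ℕ × ℕ × ℕ) :=
  ((List.range (d + 3 * r)).flatMap fun k => (List.range k).flatMap fun j =>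
    (List.range j).map fun i => (i, j, k)).filter (isFull d r)

/-- The points used for `r` blocks: pairs `(h, s)` of a set `h` of blocks, encoded by its
binary digits, and an index `s`. The sets are chosen so that their derivative conditions have full
rank on `cols d r`: for three blocks the pairs of blocks suffice. -/
def labels (d r : ℕ) : List (ℕ × ℕ) :=
  (match r with
  | 0 => [0]
  | 1 => [0, 1]
  | 2 => [1, 2, 3]
  | _ => [3, 5, 6]).flatMap fun h : ℕ =>
    (List.range (multi d ((List.range r).countP fun i => h.testBit i))).map fun s => (h, s)

/-- Row indices `(h, s, l)`: the point `(h, s)` and the direction `l` of differentiation. -/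
def rowIdx (d r : ℕ) : List (ℕ × ℕ × ℕ) :=
  (labels d r).flatMap fun a => (List.range (d + 3 * r)).map fun l => (a.1, a.2, l)

/-- The value at `P` of `∂/∂X_l` of the monomial `X_i X_j X_k`, where `c = (i, j, k)` has distinct
entries. -/
def entry {R : Type} [CommSemiring R] (P : ℕ → R) (l : ℕ) (c : ℕ × ℕ × ℕ) : R :=
  if l = c.1 then P c.2.1 * P c.2.2 else if l = c.2.1 then P c.1 * P c.2.2
  else if l = c.2.2 then P c.1 * P c.2.1 else 0

/-- The support of the points with label `h`: the core and the blocks in `h`. -/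
def inSupp (d h v : ℕ) : Bool := Nat.blt v d || h.testBit ((v - d) / 3)

/-- The family `t` truncated to the required supports. -/
def truncPt {R : Type} [CommSemiring R] (d : ℕ) (t : ℕ × ℕ × ℕ → R) (a : ℕ × ℕ) (v : ℕ) : R :=
  bif inSupp d a.1 v then t (a.1, a.2, v) else 0

/-- Pseudo-random coordinates modulo `31`. The formula has no significance beyond making
`stageCheck_eq_true` hold for all twelve pairs `(d, r)`. -/
def wt (a : ℕ × ℕ × ℕ) : ℕ := (17 * (8 * a.1 + a.2.1) + a.2.2) ^ 17 % 31

/-- `truncPt d wt`, spelled without instances so that it computes in the kernel. -/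
def wtPt (d : ℕ) (h s v : ℕ) : ℕ := bif inSupp d h v then wt (h, s, v) else 0

/-- `entry` for natural numbers, spelled without instances. -/
def entryNat (P : ℕ → ℕ) (l : ℕ) (c : ℕ × ℕ × ℕ) : ℕ :=
  if l = c.1 then P c.2.1 * P c.2.2 else if l = c.2.1 then P c.1 * P c.2.2
  else if l = c.2.2 then P c.1 * P c.2.1 else 0

/-- The row of the point `P` and direction `l`, packed in base `B`. -/
def packRow (B : ℕ) (P : ℕ → ℕ) (l : ℕ) : List (ℕ × ℕ × ℕ) → ℕ
  | [] => 0
  | c :: t => entryNat P l c + B * packRow B P l t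

/-- Elimination applied to the derivative conditions of the points `wtPt`. The initial entries are
products of two residues, hence below `62 ^ 2`, and `elim_sound` requires the base
`(2 * 31) ^ (2 + k)` for `k` columns. -/
def stageCheck (d r : ℕ) : Bool :=
  force (62 ^ ((cols d r).length + 2)) fun B =>
    mapForce id (elim 31 B (cols d r).length)
      ((rowIdx d r).map fun a => packRow B (wtPt d a.1 a.2.1) a.2.2 (cols d r)) []

lemma stageCheck_eq_true {d r : ℕ} (hd : d = 1 ∨ d = 3 ∨ d = 8) (hr : r ≤ 3) :
    stageCheck d r = true := by
  rcases hd with rfl | rfl | rfl <;> interval_cases r <;> decide +kernel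

lemma mem_cols {d r i j k : ℕ} : (i, j, k) ∈ cols d r ↔
    (i < j ∧ j < k ∧ k < d + 3 * r) ∧ ∀ b < r, (d ≤ i ∧ (i - d) / 3 = b) ∨
      (d ≤ j ∧ (j - d) / 3 = b) ∨ (d ≤ k ∧ (k - d) / 3 = b) := by
  simp only [cols, isFull, List.mem_filter, List.mem_flatMap, List.mem_map, List.mem_range,
    List.all_eq_true, Bool.or_eq_true, Bool.and_eq_true, Nat.ble_eq, beq_iff_eq, or_assoc,
    Prod.mk.injEq]
  constructor
  · rintro ⟨⟨k', hk, j', hj, i', hi, rfl, rfl, rfl⟩, h⟩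
    exact ⟨⟨hi, hj, hk⟩, h⟩
  · rintro ⟨⟨hi, hj, hk⟩, h⟩
    exact ⟨⟨k, hk, j, hj, i, hi, rfl, rfl, rfl⟩, h⟩

lemma nodup_cols (d r : ℕ) : (cols d r).Nodup := by
  refine List.Nodup.filter _ (List.nodup_flatMap.2 ⟨fun k _ => List.nodup_flatMap.2
    ⟨fun j _ => List.nodup_range.map fun a b h => by simpa using h,
      List.nodup_range.imp fun h => ?_⟩, List.nodup_range.imp fun h => ?_⟩)
  · intro a ha hb
    simp only [List.mem_map] at ha hb
    obtain ⟨_, _, rfl⟩ := ha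
    obtain ⟨_, _, h'⟩ := hb
    simp only [Prod.mk.injEq] at h'
    exact h h'.2.1.symm
  · intro a ha hb
    simp only [List.mem_flatMap, List.mem_map] at ha hb
    obtain ⟨_, _, _, _, rfl⟩ := ha
    obtain ⟨_, _, _, _, h'⟩ := hb
    simp only [Prod.mk.injEq] at h'
    exact h h'.2.2.symm

lemma map_entry {R S : Type} [CommRing R] [CommRing S] (ψ : R →+* S) (P : ℕ → R) (l : ℕ)
    (c : ℕ × ℕ × ℕ) : ψ (entry P l c) = entry (fun v => ψ (P v)) l c := by
  simp only [entry, apply_ite ψ, map_mul, map_zero]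

lemma map_truncPt {R S : Type} [CommRing R] [CommRing S] (ψ : R →+* S) (d : ℕ)
    (t : ℕ × ℕ × ℕ → R) (a : ℕ × ℕ) (v : ℕ) :
    ψ (truncPt d t a v) = truncPt d (fun b => ψ (t b)) a v := by
  unfold truncPt
  cases inSupp d a.1 v <;> simp

lemma packRow_eq (B : ℕ) (P : ℕ → ℕ) (l : ℕ) (L : List (ℕ × ℕ × ℕ)) :
    packRow B P l L =
      ∑ j ∈ Finset.range L.length, entryNat P l (L.getD j (0, 0, 0)) * B ^ j := by
  induction L with
  | nil => simp [packRow]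
  | cons c L ih =>
    rw [List.length_cons, packed_succ, packRow, ih]
    simp

/-- The matrix of derivative conditions, with columns indexed by the full triples. -/
def stageMatrix {R : Type} [CommSemiring R] (d r : ℕ) (t : ℕ × ℕ × ℕ → R) :
    Matrix (Fin (rowIdx d r).length) (Fin (cols d r).length) R :=
  fun i j => entry (truncPt d t (((rowIdx d r).get i).1, ((rowIdx d r).get i).2.1))
    ((rowIdx d r).get i).2.2 ((cols d r).get j)

lemma map_stageMatrix {R S : Type} [CommRing R] [CommRing S] (ψ : R →+* S) (d r : ℕ)
    (t : ℕ × ℕ × ℕ → R) : (stageMatrix d r t).map ψ = stageMatrix d r fun b => ψ (t b) := by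
  ext i j
  simp only [stageMatrix, Matrix.map_apply, map_entry, map_truncPt]

lemma wt_lt (a : ℕ × ℕ × ℕ) : wt a < 31 := Nat.mod_lt _ (by norm_num)

lemma wtPt_lt (d h s v : ℕ) : wtPt d h s v < 31 := by
  unfold wtPt
  cases inSupp d h v
  · simp
  · exact wt_lt _

lemma entryNat_lt (d h s l : ℕ) (c : ℕ × ℕ × ℕ) : entryNat (wtPt d h s) l c < (2 * 31) ^ 2 := by
  have h : ∀ u v, wtPt d h s u * wtPt d h s v < (2 * 31) ^ 2 := fun u v =>
    (Nat.mul_le_mul (wtPt_lt d h s u).le (wtPt_lt d h s v).le).trans_lt (by norm_num)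
  unfold entryNat
  split_ifs
  exacts [h _ _, h _ _, h _ _, by norm_num]

lemma cast_entryNat (d h s l : ℕ) (c : ℕ × ℕ × ℕ) :
    ((entryNat (wtPt d h s) l c : ℕ) : ZMod 31) =
      entry (truncPt d (fun a => (wt a : ZMod 31)) (h, s)) l c := by
  have h : ∀ v, ((wtPt d h s v : ℕ) : ZMod 31) =
      truncPt d (fun a => (wt a : ZMod 31)) (h, s) v := fun v => by
    unfold wtPt truncPt
    cases inSupp d h v <;> simp
  simp only [entry, entryNat, ← h, apply_ite (Nat.cast (R := ZMod 31)), Nat.cast_mul,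
    Nat.cast_zero]

lemma stageMatrix_injective_mod {d r : ℕ} (hd : d = 1 ∨ d = 3 ∨ d = 8) (hr : r ≤ 3)
    (x : Fin (cols d r).length → ZMod 31)
    (hx : (stageMatrix d r fun a => (wt a : ZMod 31)).mulVec x = 0) : x = 0 := by
  have : Fact (Nat.Prime 31) := ⟨by norm_num⟩
  have hch := stageCheck_eq_true hd hr
  rw [stageCheck, force_eq, mapForce_eq] at hch
  have key := elim_sound (p := 31) (cols d r).length 2 _
    (fun j => if h : j < (cols d r).length then x ⟨j, h⟩ else 0)
    (by rw [add_comm]) hch fun q hq => ?_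
  · funext j
    simpa using key j j.2
  · simp only [List.map_id, List.append_nil, List.mem_reverse, List.mem_map] at hq
    obtain ⟨a, ha, rfl⟩ := hq
    obtain ⟨i, rfl⟩ := List.get_of_mem ha
    refine ⟨_, fun j => entryNat_lt _ _ _ _ _, packRow_eq _ _ _ _, ?_⟩
    rw [Finset.sum_range]
    have := congrFun hx i
    simp only [Matrix.mulVec, dotProduct, stageMatrix, Pi.zero_apply] at this
    refine (Finset.sum_congr rfl fun j _ => ?_).trans this
    beta_reduce
    rw [cast_entryNat, dif_pos j.2, List.getD_eq_getElem _ _ j.2]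
    rfl

/-- For algebraically independent coordinates the derivative conditions of the points in `labels`
force the coefficients of all full triples to vanish. -/
lemma stage {d r : ℕ} (hd : d = 1 ∨ d = 3 ∨ d = 8) (hr : r ≤ 3) {t : ℕ × ℕ × ℕ → ℂ}
    (ht : AlgebraicIndependent ℤ t) (x : ℕ × ℕ × ℕ → ℂ)
    (hx : ∀ a ∈ labels d r, ∀ l < d + 3 * r,
      ∑ c ∈ (cols d r).toFinset, x c * entry (truncPt d t a) l c = 0) :
    ∀ c ∈ cols d r, x c = 0 := by
  have : Fact (Nat.Prime 31) := ⟨by norm_num⟩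
  let φ : MvPolynomial (ℕ × ℕ × ℕ) ℤ →+* ZMod 31 :=
    eval₂Hom (Int.castRingHom _) fun a => (wt a : ZMod 31)
  obtain ⟨D, hD, hinj⟩ := exists_injectivity_certificate (stageMatrix d r X) φ
    (fun z => ⟨C (z.val : ℤ), by simp [φ]⟩) (fun y hy => by
      rw [map_stageMatrix] at hy
      simp only [φ, coe_eval₂Hom, eval₂_X] at hy
      exact stageMatrix_injective_mod hd hr y hy)
  have hψ : (aeval t).toRingHom D ≠ 0 := fun h => hD <| by
    rw [ht (h.trans (map_zero (aeval t)).symm : aeval t D = aeval t 0), map_zero]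
  have := hinj ℂ (aeval t).toRingHom hψ (fun j => x ((cols d r).get j)) ?_
  · intro c hc
    obtain ⟨j, rfl⟩ := List.get_of_mem hc
    exact congrFun this j
  · rw [map_stageMatrix]
    funext i
    have hi := List.get_mem (rowIdx d r) i
    generalize hri : (rowIdx d r).get i = a at hi
    simp only [rowIdx, List.mem_flatMap, List.mem_map, List.mem_range] at hi
    obtain ⟨b, hb, l, hl, rfl⟩ := hi
    have h := hx b hb l hl
    rw [List.sum_toFinset _ (nodup_cols d r), ← Fin.sum_univ_fun_getElem] at h
    refine Eq.trans (Finset.sum_congr rfl fun j _ => ?_ :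
      ∑ j, stageMatrix d r (fun b => (aeval t).toRingHom (X b)) i j * x ((cols d r).get j) = _) h
    simp only [stageMatrix, hri, RingHom.coe_coe, AlgHom.toRingHom_eq_coe, aeval_X, mul_comm]
    rfl

/-! ### Moving blocks -/

lemma labels_spec {d r h s : ℕ} (hr : r ≤ 3) (hs : (h, s) ∈ labels d r) :
    (∀ i, h.testBit i → i < r) ∧ s < multi d h.bitIndices.toFinset.card := by
  simp only [labels, List.mem_flatMap, List.mem_map, List.mem_range, Prod.mk.injEq] at hs
  obtain ⟨h', hh, s', hs', rfl, rfl⟩ := hs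
  have hlt : h' < 2 ^ r := by
    interval_cases r <;> simp at hh <;> omega
  have hbit : ∀ i, h'.testBit i → i < r := fun i hi => by
    by_contra hir
    have := Nat.testBit_eq_false_of_lt (hlt.trans_le (Nat.pow_le_pow_right (by norm_num)
      (not_lt.1 hir)))
    simp [this] at hi
  refine ⟨hbit, ?_⟩
  have : h'.bitIndices.toFinset = ((List.range r).filter fun i => h'.testBit i).toFinset := by
    ext i
    simpa using hbit i
  rwa [this, List.toFinset_card_of_nodup (List.nodup_range.filter _),
    ← List.countP_eq_length_filter]

/-- The value at `P` of `∂/∂X_l` of the squarefree monomial `∏_{i ∈ S} X_i`. -/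
def gradMon (P : ℕ → ℂ) (l : ℕ) (S : Finset ℕ) : ℂ :=
  if l ∈ S then ∏ i ∈ S.erase l, P i else 0

lemma gradMon_triple (P : ℕ → ℂ) {l a b c : ℕ} (hab : a ≠ b) (hac : a ≠ c) (hbc : b ≠ c) :
    gradMon P l {a, b, c} = entry P l (a, b, c) := by
  unfold gradMon entry
  simp only [Finset.mem_insert, Finset.mem_singleton]
  split_ifs with h h1 h2 h3 <;> try tauto
  · subst h1
    rw [Finset.erase_insert (by simp [hab, hac]), Finset.prod_pair hbc]
  · subst h2
    rw [Finset.insert_comm, Finset.erase_insert (by simp [hab.symm, hbc]), Finset.prod_pair hac]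
  · subst h3
    rw [Finset.pair_comm, Finset.insert_comm, Finset.erase_insert (by simp [hac.symm, hbc.symm]),
      Finset.prod_pair hab]

lemma exists_sorted_triple {S : Finset ℕ} (hS : S.card = 3) :
    ∃ i j k, i < j ∧ j < k ∧ S = {i, j, k} := by
  obtain ⟨a, b, c, hab, hac, hbc, rfl⟩ := Finset.card_eq_three.1 hS
  rcases lt_or_gt_of_ne hab with h1 | h1 <;> rcases lt_or_gt_of_ne hac with h2 | h2 <;>
    rcases lt_or_gt_of_ne hbc with h3 | h3
  · exact ⟨a, b, c, h1, h3, rfl⟩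
  · exact ⟨a, c, b, h2, h3, by rw [Finset.pair_comm]⟩
  · omega
  · exact ⟨c, a, b, h2, h1, by ext; simp; tauto⟩
  · exact ⟨b, a, c, h1, h2, by ext; simp; tauto⟩
  · omega
  · exact ⟨b, c, a, h3, h2, by ext; simp; tauto⟩
  · exact ⟨c, b, a, h3, h1, by ext; simp; tauto⟩

lemma sorted_triple_inj {i j k i' j' k' : ℕ} (h1 : i < j) (h2 : j < k) (h1' : i' < j')
    (h2' : j' < k') (h : ({i, j, k} : Finset ℕ) = {i', j', k'}) :
    (i, j, k) = (i', j', k') := by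
  have H : ∀ v, (v = i ∨ v = j ∨ v = k) ↔ (v = i' ∨ v = j' ∨ v = k') := fun v => by
    simpa using Finset.ext_iff.1 h v
  have a1 := (H i).1 (by simp)
  have a2 := (H j).1 (by simp)
  have a3 := (H k).1 (by simp)
  have b1 := (H i').2 (by simp)
  have b2 := (H j').2 (by simp)
  have b3 := (H k').2 (by simp)
  simp only [Prod.mk.injEq]
  omega

/-- The permutation reduces any set of blocks to an initial segment, where `stage` applies. -/
lemma exists_perm_image_range (B : Finset ℕ) :
    ∃ g : Equiv.Perm ℕ, (Finset.range B.card).image g = B := by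
  induction B using Finset.induction with
  | empty => exact ⟨1, by simp⟩
  | insert b B hb ih =>
    obtain ⟨g, hg⟩ := ih
    have hmem : ∀ i < B.card, g i ∈ B := fun i hi => by
      rw [← hg]; exact Finset.mem_image_of_mem _ (Finset.mem_range.2 hi)
    refine ⟨g.trans (Equiv.swap (g B.card) b), ?_⟩
    rw [Finset.card_insert_of_notMem hb, Finset.range_add_one, Finset.image_insert]
    congr 1
    · simp
    · conv_rhs => rw [← hg]
      refine Finset.image_congr fun i hi => ?_
      have hi := Finset.mem_range.1 hi
      refine Equiv.swap_apply_of_ne_of_ne (fun h => hi.ne (g.injective h)) fun h => ?_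
      exact hb (h ▸ hmem i hi)

/-- The map on variables which is the identity on the core and moves the blocks by `g`. -/
def moveVar (d : ℕ) (g : ℕ → ℕ) (v : ℕ) : ℕ :=
  if v < d then v else d + 3 * g ((v - d) / 3) + (v - d) % 3

lemma moveVar_lt {d : ℕ} {g : ℕ → ℕ} {v : ℕ} : moveVar d g v < d ↔ v < d := by
  unfold moveVar; split_ifs <;> omega

lemma block_moveVar {d : ℕ} {g : ℕ → ℕ} {v : ℕ} (hv : d ≤ v) :
    (moveVar d g v - d) / 3 = g ((v - d) / 3) := by
  unfold moveVar; split_ifs <;> omega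

lemma moveVar_injective {d : ℕ} {g : ℕ → ℕ} (hg : Function.Injective g) :
    Function.Injective (moveVar d g) := by
  intro v w h
  rcases lt_or_ge v d with hv | hv
  · have hw : w < d := moveVar_lt.1 (h ▸ moveVar_lt.2 hv)
    simpa [moveVar, hv, hw] using h
  · have hw : d ≤ w := not_lt.1 fun hw => (moveVar_lt.1 (h ▸ moveVar_lt.2 hw)).not_ge hv
    have hb : (v - d) / 3 = (w - d) / 3 := hg <| by
      rw [← block_moveVar (g := g) hv, ← block_moveVar (g := g) hw, h]
    simp only [moveVar, hv.not_gt, hw.not_gt, if_false, hb] at h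
    omega

/-- The variables of the core and of the blocks in `B`. -/
def blockVars (d : ℕ) (B : Finset ℕ) : Finset ℕ :=
  Finset.range d ∪ B.biUnion fun b => {d + 3 * b, d + 3 * b + 1, d + 3 * b + 2}

lemma mem_blockVars {d : ℕ} {B : Finset ℕ} {v : ℕ} :
    v ∈ blockVars d B ↔ v < d ∨ d ≤ v ∧ (v - d) / 3 ∈ B := by
  simp only [blockVars, Finset.mem_union, Finset.mem_range, Finset.mem_biUnion, Finset.mem_insert,
    Finset.mem_singleton]
  refine or_congr_right' fun h => ⟨?_, fun ⟨h1, h2⟩ => ⟨_, h2, by omega⟩⟩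
  rintro ⟨b, hb, hv⟩
  have : (v - d) / 3 = b := by omega
  exact ⟨by omega, this ▸ hb⟩

lemma blockVars_range (d m : ℕ) : blockVars d (Finset.range m) = Finset.range (d + 3 * m) := by
  ext v
  rw [mem_blockVars, Finset.mem_range, Finset.mem_range]
  omega

lemma blockVars_mono {d : ℕ} {A B : Finset ℕ} (h : A ⊆ B) :
    blockVars d A ⊆ blockVars d B := fun v hv => by
  rw [mem_blockVars] at *
  exact hv.imp_right fun ⟨h1, h2⟩ => ⟨h1, h h2⟩

lemma blockVars_image (d r : ℕ) (g : ℕ → ℕ) :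
    blockVars d ((Finset.range r).image g) = (Finset.range (d + 3 * r)).image (moveVar d g) := by
  ext w
  simp only [mem_blockVars, Finset.mem_image, Finset.mem_range]
  constructor
  · rintro (h | ⟨h, b, hb, hw⟩)
    · exact ⟨w, by omega, by simp [moveVar, h]⟩
    · refine ⟨d + 3 * b + (w - d) % 3, by omega, ?_⟩
      have h1 : ¬ d + 3 * b + (w - d) % 3 < d := by omega
      have h2 : (d + 3 * b + (w - d) % 3 - d) / 3 = b := by omega
      simp only [moveVar, h1, if_false, h2, hw]
      omega
  · rintro ⟨v, hv, rfl⟩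
    rcases lt_or_ge v d with h | h
    · exact Or.inl (moveVar_lt.2 h)
    · exact Or.inr ⟨not_lt.1 fun h' => h.not_gt (moveVar_lt.1 h'), (v - d) / 3, by omega,
        (block_moveVar h).symm⟩

/-- The point with label `(A, s)`: its coordinates are taken from `t` on the core and on the
blocks in `A`, and vanish elsewhere. -/
def blockPt (d : ℕ) (t : Finset ℕ × ℕ × ℕ → ℂ) (A : Finset ℕ) (s v : ℕ) : ℂ :=
  if v ∈ blockVars d A then t (A, s, v) else 0

/-- Reading a family indexed by sets of blocks through the encoding of `labels`, after moving
the blocks by `g`. -/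
def pullFamily (d : ℕ) (g : Equiv.Perm ℕ) (t : Finset ℕ × ℕ × ℕ → ℂ) (a : ℕ × ℕ × ℕ) : ℂ :=
  t (a.1.bitIndices.toFinset.image g, a.2.1, moveVar d g a.2.2)

lemma pullFamily_algebraicIndependent {d : ℕ} (g : Equiv.Perm ℕ) {t : Finset ℕ × ℕ × ℕ → ℂ}
    (ht : AlgebraicIndependent ℤ t) : AlgebraicIndependent ℤ (pullFamily d g t) := by
  refine ht.comp (fun a : ℕ × ℕ × ℕ =>
    (a.1.bitIndices.toFinset.image g, a.2.1, moveVar d g a.2.2)) ?_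
  rintro ⟨h, s, v⟩ ⟨h', s', v'⟩ heq
  simp only [Prod.mk.injEq] at heq ⊢
  exact ⟨Finset.equivBitIndices.injective (Finset.image_injective g.injective heq.1), heq.2.1,
    moveVar_injective g.injective heq.2.2⟩

lemma blockPt_moveVar {d : ℕ} (g : Equiv.Perm ℕ) (t : Finset ℕ × ℕ × ℕ → ℂ) (h s v : ℕ) :
    blockPt d t (h.bitIndices.toFinset.image g) s (moveVar d g v) =
      truncPt d (pullFamily d g t) (h, s) v := by
  have : moveVar d g v ∈ blockVars d (h.bitIndices.toFinset.image g) ↔ inSupp d h v = true := by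
    have hb : Nat.blt v d = true ↔ v < d := iff_of_eq Nat.blt_eq
    rw [mem_blockVars, inSupp, Bool.or_eq_true, hb, moveVar_lt]
    refine or_congr_right' fun hv => ?_
    rw [block_moveVar (not_lt.1 hv), and_iff_right (not_lt.1 fun h' => hv (moveVar_lt.1 h')),
      g.injective.mem_finset_image]
    simp
  unfold blockPt truncPt pullFamily
  cases hc : inSupp d h v <;> simp [hc, this]

/-! ### Induction on the set of blocks -/

/-- A coefficient family `x` on triples of variables vanishes if the corresponding squarefree
cubic is singular at all the points `blockPt`. Induction on the set `B` of blocks: triples inside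
`blockVars d B` missing some block of `B` are handled by a smaller set, and the remaining ones by
`stage`, because a point supported on `blockVars d A`, `A ⊆ B`, does not see the triples outside
`blockVars d B`. -/
lemma eq_zero_of_blockPt {d m : ℕ} (hd : d = 1 ∨ d = 3 ∨ d = 8) {t : Finset ℕ × ℕ × ℕ → ℂ}
    (ht : AlgebraicIndependent ℤ t) (x : Finset ℕ → ℂ)
    (hx : ∀ A ⊆ Finset.range m, ∀ s < multi d A.card, ∀ l < d + 3 * m,
      ∑ S ∈ (Finset.range (d + 3 * m)).powersetCard 3, x S * gradMon (blockPt d t A s) l S = 0) :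
    ∀ B ⊆ Finset.range m, ∀ S ∈ (blockVars d B).powersetCard 3, x S = 0 := by
  intro B
  induction B using Finset.strongInduction with
  | H B ih =>
  intro hB
  -- triples missing a block of `B`
  have hnot : ∀ S ∈ (blockVars d B).powersetCard 3,
      (¬ ∀ b ∈ B, ∃ v ∈ S, d ≤ v ∧ (v - d) / 3 = b) → x S = 0 := by
    intro S hS hfull
    push Not at hfull
    obtain ⟨b, hb, hmiss⟩ := hfull
    refine ih (B.erase b) (Finset.erase_ssubset hb) ((Finset.erase_subset _ _).trans hB) S ?_
    rw [Finset.mem_powersetCard] at hS ⊢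
    refine ⟨fun v hv => ?_, hS.2⟩
    have := hS.1 hv
    rw [mem_blockVars] at this ⊢
    exact this.imp_right fun ⟨h1, h2⟩ => ⟨h1, Finset.mem_erase.2 ⟨hmiss v hv h1, h2⟩⟩
  intro S hS
  by_cases hfull : ∀ b ∈ B, ∃ v ∈ S, d ≤ v ∧ (v - d) / 3 = b
  swap
  · exact hnot S hS hfull
  have hS' := Finset.mem_powersetCard.1 hS
  have hr : B.card ≤ 3 := by
    rw [← hS'.2]
    refine (Finset.card_le_card (t := S.image fun v => (v - d) / 3) fun b hb => ?_).trans
      Finset.card_image_le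
    obtain ⟨v, hv, -, rfl⟩ := hfull b hb
    exact Finset.mem_image_of_mem _ hv
  obtain ⟨g, hg⟩ := exists_perm_image_range B
  have he := moveVar_injective (d := d) g.injective
  have hVB : blockVars d B = (Finset.range (d + 3 * B.card)).image (moveVar d g) := by
    conv_lhs => rw [← hg]
    exact blockVars_image _ _ _
  let tri : ℕ × ℕ × ℕ → Finset ℕ := fun c => ({c.1, c.2.1, c.2.2} : Finset ℕ).image (moveVar d g)
  have htri : ∀ c, tri c = {moveVar d g c.1, moveVar d g c.2.1, moveVar d g c.2.2} := fun c => by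
    simp [tri, Finset.image_insert]
  have hsurj : ∀ T ∈ (blockVars d B).powersetCard 3,
      (∀ b ∈ B, ∃ v ∈ T, d ≤ v ∧ (v - d) / 3 = b) → T ∈ (cols d B.card).toFinset.image tri := by
    intro T hT hTf
    rw [Finset.mem_powersetCard, hVB] at hT
    obtain ⟨T', hT', rfl⟩ := Finset.subset_image_iff.1 hT.1
    rw [Finset.card_image_of_injective _ he] at hT
    obtain ⟨i, j, k, hij, hjk, rfl⟩ := exists_sorted_triple hT.2
    refine Finset.mem_image.2 ⟨(i, j, k), List.mem_toFinset.2 (mem_cols.2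
      ⟨⟨hij, hjk, Finset.mem_range.1 (hT' (by simp))⟩, fun b hb => ?_⟩), rfl⟩
    have hgb : g b ∈ B := by
      rw [← hg]
      exact Finset.mem_image_of_mem _ (Finset.mem_range.2 hb)
    obtain ⟨w, hw, hdw, hwb⟩ := hTf _ hgb
    obtain ⟨v, hv, rfl⟩ := Finset.mem_image.1 hw
    have hdv : d ≤ v := not_lt.1 fun h => hdw.not_gt (moveVar_lt.2 h)
    rw [block_moveVar hdv] at hwb
    have hvb := g.injective hwb
    simp only [Finset.mem_insert, Finset.mem_singleton] at hv
    rcases hv with rfl | rfl | rfl <;> simp [hdv, hvb]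
  have hcols : ∀ c ∈ cols d B.card, x (tri c) = 0 := by
    refine stage hd hr (pullFamily_algebraicIndependent (d := d) g ht) (fun c => x (tri c)) ?_
    rintro ⟨h, s⟩ hlab l hl
    obtain ⟨hbit, hs⟩ := labels_spec hr hlab
    set A := h.bitIndices.toFinset.image g with hA
    have hAB : A ⊆ B := by
      rw [← hg]
      refine Finset.image_subset_image fun i hi => ?_
      exact Finset.mem_range.2 (hbit i (by simpa using hi))
    have hlB : moveVar d g l ∈ blockVars d B := by
      rw [hVB]
      exact Finset.mem_image_of_mem _ (Finset.mem_range.2 hl)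
    have hlV : moveVar d g l < d + 3 * m := by
      have := blockVars_mono hB hlB
      rwa [blockVars_range, Finset.mem_range] at this
    have key := hx A (hAB.trans hB) s (by rwa [hA, Finset.card_image_of_injective _ g.injective])
      _ hlV
    have hsub : (cols d B.card).toFinset.image tri ⊆
        (Finset.range (d + 3 * m)).powersetCard 3 := by
      intro T hT
      obtain ⟨⟨i, j, k⟩, hc, rfl⟩ := Finset.mem_image.1 hT
      obtain ⟨⟨hij, hjk, hk⟩, -⟩ := mem_cols.1 (List.mem_toFinset.1 hc)
      rw [Finset.mem_powersetCard, ← blockVars_range]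
      refine ⟨Finset.Subset.trans ?_ (blockVars_mono hB), ?_⟩
      · rw [hVB]
        refine Finset.image_subset_image fun v hv => ?_
        simp only [Finset.mem_insert, Finset.mem_singleton] at hv
        rw [Finset.mem_range]
        omega
      · rw [Finset.card_image_of_injective _ he, Finset.card_eq_three]
        exact ⟨i, j, k, hij.ne, (hij.trans hjk).ne, hjk.ne, rfl⟩
    rw [← Finset.sum_subset hsub, Finset.sum_image] at key
    · rw [← key]
      refine Finset.sum_congr rfl fun c hc => ?_
      obtain ⟨i, j, k⟩ := c
      obtain ⟨⟨hij, hjk, hk⟩, -⟩ := mem_cols.1 (List.mem_toFinset.1 hc)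
      rw [htri, gradMon_triple _ (he.ne hij.ne) (he.ne (hij.trans hjk).ne) (he.ne hjk.ne)]
      simp only [entry, he.eq_iff, hA, blockPt_moveVar]
    · rintro ⟨i, j, k⟩ hc ⟨i', j', k'⟩ hc' heq
      obtain ⟨⟨hij, hjk, hk⟩, -⟩ := mem_cols.1 (List.mem_toFinset.1 hc)
      obtain ⟨⟨hij', hjk', hk'⟩, -⟩ := mem_cols.1 (List.mem_toFinset.1 hc')
      exact sorted_triple_inj hij hjk hij' hjk' (Finset.image_injective he heq)
    · intro T hT hTc
      by_cases hTB : T ⊆ blockVars d B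
      · by_cases hTf : ∀ b ∈ B, ∃ v ∈ T, d ≤ v ∧ (v - d) / 3 = b
        · exact absurd (hsurj T (Finset.mem_powersetCard.2
            ⟨hTB, (Finset.mem_powersetCard.1 hT).2⟩) hTf) hTc
        · rw [hnot T (Finset.mem_powersetCard.2 ⟨hTB, (Finset.mem_powersetCard.1 hT).2⟩) hTf,
            zero_mul]
      · obtain ⟨v, hvT, hvB⟩ := Finset.not_subset.1 hTB
        unfold gradMon
        split_ifs
        · rw [Finset.prod_eq_zero (i := v), mul_zero]
          · exact Finset.mem_erase.2 ⟨fun h => hvB (h ▸ hlB), hvT⟩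
          · exact if_neg fun h => hvB (blockVars_mono hAB h)
        · rw [mul_zero]
  obtain ⟨c, hc, rfl⟩ := Finset.mem_image.1 (hsurj S hS hfull)
  exact hcols c (List.mem_toFinset.1 hc)

/-! ### Cubics singular at the coordinate points -/

/-- The exponents of degree `3` in `x₀, …, xₙ`. -/
abbrev cubicExps (n : ℕ) : Finset (Fin (n + 1) →₀ ℕ) := Finset.univ.finsuppAntidiag 3

lemma mem_cubicExps {n : ℕ} {δ : Fin (n + 1) →₀ ℕ} : δ ∈ cubicExps n ↔ ∑ j, δ j = 3 := by
  simp [Finset.mem_finsuppAntidiag]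

lemma coeff_eq_zero_of_notMem {n : ℕ} {f : MvPolynomial (Fin (n + 1)) ℂ} (hf : f.IsHomogeneous 3)
    {δ : Fin (n + 1) →₀ ℕ} (hδ : δ ∉ cubicExps n) : coeff δ f = 0 := by
  refine hf.coeff_eq_zero fun h => hδ ?_
  rw [mem_cubicExps, ← h, Finsupp.degree_eq_sum]

lemma cubic_eq_sum {n : ℕ} {f : MvPolynomial (Fin (n + 1)) ℂ} (hf : f.IsHomogeneous 3) :
    f = ∑ δ ∈ cubicExps n, monomial δ (coeff δ f) := by
  conv_lhs => rw [← support_sum_monomial_coeff f]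
  refine Finset.sum_subset (fun δ hδ => ?_) fun δ _ hδ => ?_
  · by_contra h
    exact mem_support_iff.1 hδ (coeff_eq_zero_of_notMem hf h)
  · rw [notMem_support_iff.1 hδ, map_zero]

lemma evalPDeriv_eq {n : ℕ} (P : Fin (n + 1) → ℂ) (l : Fin (n + 1))
    (f : MvPolynomial (Fin (n + 1)) ℂ) : evalPDeriv P l f = eval P (pderiv l f) := by
  simp [evalPDeriv, evalAt, aeval_eq_eval]

lemma evalPDeriv_monomial {n : ℕ} (P : Fin (n + 1) → ℂ) (l : Fin (n + 1))
    (δ : Fin (n + 1) →₀ ℕ) (a : ℂ) : evalPDeriv P l (monomial δ a) =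
      a * (δ l * ∏ j, P j ^ (δ - Finsupp.single l 1 : Fin (n + 1) →₀ ℕ) j) := by
  rw [evalPDeriv_eq, pderiv_monomial, eval_monomial, Finsupp.prod_fintype _ _ (by simp), mul_assoc]

lemma evalPDeriv_cubic {n : ℕ} (P : Fin (n + 1) → ℂ) (l : Fin (n + 1))
    {f : MvPolynomial (Fin (n + 1)) ℂ} (hf : f.IsHomogeneous 3) :
    evalPDeriv P l f =
      ∑ δ ∈ cubicExps n,
        coeff δ f * (δ l * ∏ j, P j ^ (δ - Finsupp.single l 1 : Fin (n + 1) →₀ ℕ) j) := by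
  conv_lhs => rw [cubic_eq_sum hf]
  simp only [map_sum, evalPDeriv_monomial]

lemma coeff_eq_zero_of_singularAt_single {n : ℕ} {f : MvPolynomial (Fin (n + 1)) ℂ}
    (hf : f.IsHomogeneous 3) {i : Fin (n + 1)} (hi : SingularAt f (Pi.single i 1))
    (l : Fin (n + 1)) : coeff (Finsupp.single i 2 + Finsupp.single l 1) f = 0 := by
  have h := hi l
  rw [evalPDeriv_cubic _ _ hf, Finset.sum_eq_single (Finsupp.single i 2 + Finsupp.single l 1)] at h
  · rw [add_tsub_cancel_right, Finset.prod_eq_one, mul_one] at h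
    · refine (mul_eq_zero.1 h).resolve_right ?_
      rw [Finsupp.add_apply, Finsupp.single_eq_same]
      exact Nat.cast_ne_zero.2 (by omega)
    · intro j _
      rcases eq_or_ne j i with rfl | hj
      · simp
      · simp [hj]
  -- at `eᵢ` only `δ = 2 eᵢ + e_l` contributes: the derivative along `x_l` of every other
  -- monomial is zero or involves a vanishing coordinate
  · intro δ hδ hne
    rw [mem_cubicExps] at hδ
    rcases Nat.eq_zero_or_pos (δ l) with h0 | h0
    · simp [h0]
    rw [Finset.prod_eq_zero_iff.2, mul_zero, mul_zero]
    by_contra hcon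
    push Not at hcon
    obtain ⟨ε, hε⟩ : ∃ ε, ε = δ - Finsupp.single l 1 := ⟨_, rfl⟩
    have hδε : δ = ε + Finsupp.single l 1 := by
      rw [hε, tsub_add_cancel_of_le]
      exact Finsupp.single_le_iff.2 h0
    rw [← hε] at hcon
    have hε0 : ∀ j, j ≠ i → ε j = 0 := fun j hj => by
      by_contra h'
      exact hcon j (Finset.mem_univ _) (by simp [hj, h'])
    have hsum : ∑ j, ε j + 1 = 3 := by
      rw [← hδ, hδε]
      simp [Finset.sum_add_distrib, Finsupp.single_apply]
    rw [Finset.sum_eq_single i (fun j _ hj => hε0 j hj) (by simp)] at hsum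
    refine hne ?_
    rw [hδε]
    congr 1
    ext j
    rcases eq_or_ne j i with rfl | hj
    · rw [Finsupp.single_eq_same]; omega
    · rw [hε0 j hj, Finsupp.single_eq_of_ne hj]
  · intro hno
    rw [coeff_eq_zero_of_notMem hf hno, zero_mul]

/-- A cubic which is singular at the coordinate points has only squarefree monomials. -/
lemma coeff_eq_zero_of_two_le {n : ℕ} {f : MvPolynomial (Fin (n + 1)) ℂ}
    (hf : f.IsHomogeneous 3) (hs : ∀ i, SingularAt f (Pi.single i 1)) {δ : Fin (n + 1) →₀ ℕ}
    (hδ : δ ∈ cubicExps n) {i : Fin (n + 1)} (hi : 2 ≤ δ i) : coeff δ f = 0 := by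
  rw [mem_cubicExps] at hδ
  obtain ⟨ε, rfl⟩ : ∃ ε, δ = Finsupp.single i 2 + ε :=
    ⟨δ - Finsupp.single i 2, (add_tsub_cancel_of_le (Finsupp.single_le_iff.2 hi)).symm⟩
  have hsum : ∑ j, ε j = 1 := by
    simp only [Finsupp.add_apply, Finset.sum_add_distrib, Finsupp.single_apply,
      Finset.sum_ite_eq, Finset.mem_univ, if_true] at hδ
    omega
  obtain ⟨l, hl⟩ : ∃ l, ε l ≠ 0 := by
    by_contra! h
    simp [h] at hsum
  obtain ⟨ζ, rfl⟩ : ∃ ζ, ε = ζ + Finsupp.single l 1 :=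
    ⟨ε - Finsupp.single l 1,
      (tsub_add_cancel_of_le (Finsupp.single_le_iff.2 (Nat.pos_of_ne_zero hl))).symm⟩
  have hζ : ζ = 0 := by
    have : ∑ j, ζ j = 0 := by
      simp only [Finsupp.add_apply, Finset.sum_add_distrib, Finsupp.single_apply,
        Finset.sum_ite_eq, Finset.mem_univ, if_true] at hsum
      omega
    ext j
    exact Finset.sum_eq_zero_iff.1 this j (Finset.mem_univ _)
  rw [hζ, zero_add]
  exact coeff_eq_zero_of_singularAt_single hf (hs i) l

/-- The exponent of the squarefree monomial `∏_{i ∈ S} x_i`. -/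
noncomputable def indExp (n : ℕ) (S : Finset ℕ) : Fin (n + 1) →₀ ℕ :=
  Finsupp.equivFunOnFinite.symm fun j => if (j : ℕ) ∈ S then 1 else 0

lemma indExp_apply (n : ℕ) (S : Finset ℕ) (j : Fin (n + 1)) :
    indExp n S j = if (j : ℕ) ∈ S then 1 else 0 := rfl

lemma exists_indExp {n : ℕ} {δ : Fin (n + 1) →₀ ℕ} (hδ : δ ∈ cubicExps n) (h1 : ∀ j, δ j < 2) :
    ∃ S ∈ (Finset.range (n + 1)).powersetCard 3, indExp n S = δ := by
  rw [mem_cubicExps] at hδ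
  refine ⟨δ.support.map Fin.valEmbedding, Finset.mem_powersetCard.2 ⟨fun v hv => ?_, ?_⟩, ?_⟩
  · obtain ⟨j, -, rfl⟩ := Finset.mem_map.1 hv
    exact Finset.mem_range.2 j.2
  · rw [Finset.card_map, ← hδ, Finset.card_eq_sum_ones,
      ← Finset.sum_subset (Finset.subset_univ δ.support) (by simp)]
    refine Finset.sum_congr rfl fun j hj => ?_
    have := h1 j
    have := Finsupp.mem_support_iff.1 hj
    omega
  · ext j
    rw [indExp_apply]
    have h := h1 j
    have : (j : ℕ) ∈ δ.support.map Fin.valEmbedding ↔ δ j ≠ 0 := by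
      rw [← Finsupp.mem_support_iff]
      exact Finset.mem_map' Fin.valEmbedding
    split_ifs with h2
    · have := this.1 h2
      omega
    · have : ¬ δ j ≠ 0 := fun h3 => h2 (this.2 h3)
      omega

lemma indExp_mem {n : ℕ} {S : Finset ℕ} (hS : S ∈ (Finset.range (n + 1)).powersetCard 3) :
    indExp n S ∈ cubicExps n := by
  rw [Finset.mem_powersetCard] at hS
  simp only [mem_cubicExps, indExp_apply]
  rw [Fin.sum_univ_eq_sum_range (fun j => if j ∈ S then 1 else 0), Finset.sum_ite_mem,
    Finset.inter_eq_right.2 hS.1]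
  simp [hS.2]

lemma indExp_injOn (n : ℕ) :
    Set.InjOn (indExp n) ((Finset.range (n + 1)).powersetCard 3) := by
  intro S hS T hT h
  have hS := (Finset.mem_powersetCard.1 hS).1
  have hT := (Finset.mem_powersetCard.1 hT).1
  ext v
  by_cases hv : v < n + 1
  · have := DFunLike.congr_fun h ⟨v, hv⟩
    simp only [indExp_apply] at this
    split_ifs at this <;> tauto
  · exact iff_of_false (fun h => hv (Finset.mem_range.1 (hS h)))
      fun h => hv (Finset.mem_range.1 (hT h))

lemma indExp_gradMon {n : ℕ} {S : Finset ℕ} (hS : S ⊆ Finset.range (n + 1)) (Q : ℕ → ℂ)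
    (l : Fin (n + 1)) :
    ((indExp n S l : ℕ) : ℂ) *
      ∏ j : Fin (n + 1), Q j ^ (indExp n S - Finsupp.single l 1 : Fin (n + 1) →₀ ℕ) j =
      gradMon Q l S := by
  rw [indExp_apply, gradMon]
  split_ifs with hl
  · have : ∀ j : Fin (n + 1), Q j ^ (indExp n S - Finsupp.single l 1 : Fin (n + 1) →₀ ℕ) j =
        if (j : ℕ) ∈ S.erase l then Q j else 1 := fun j => by
      rw [Finsupp.tsub_apply, indExp_apply, Finsupp.single_apply]
      simp only [Finset.mem_erase]
      rcases eq_or_ne j l with rfl | hj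
      · simp [hl]
      · have : (j : ℕ) ≠ l := fun h => hj (Fin.ext h)
        by_cases hjS : (j : ℕ) ∈ S <;> simp [hjS, this, hj.symm]
    simp only [this, Nat.cast_one, one_mul]
    rw [Fin.prod_univ_eq_prod_range (fun j => if j ∈ S.erase l then Q j else 1),
      Finset.prod_ite_mem, Finset.inter_eq_right.2 ((Finset.erase_subset _ _).trans hS)]
  · simp

lemma evalPDeriv_squarefree {n : ℕ} {f : MvPolynomial (Fin (n + 1)) ℂ}
    (hf : f.IsHomogeneous 3) (hs : ∀ i, SingularAt f (Pi.single i 1)) (Q : ℕ → ℂ)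
    (l : Fin (n + 1)) : evalPDeriv (fun j => Q j) l f =
      ∑ S ∈ (Finset.range (n + 1)).powersetCard 3, coeff (indExp n S) f * gradMon Q l S := by
  rw [evalPDeriv_cubic _ _ hf, ← Finset.sum_subset (s₁ := ((Finset.range (n + 1)).powersetCard
    3).image (indExp n)), Finset.sum_image (indExp_injOn n)]
  · refine Finset.sum_congr rfl fun S hS => ?_
    rw [indExp_gradMon (Finset.mem_powersetCard.1 hS).1]
  · exact Finset.image_subset_iff.2 fun S hS => indExp_mem hS
  · intro δ hδ hno
    obtain ⟨j, hj⟩ : ∃ j, 2 ≤ δ j := by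
      by_contra! h
      exact hno (Finset.mem_image.2 (exists_indExp hδ h))
    rw [coeff_eq_zero_of_two_le hf hs hδ hj, zero_mul]

/-! ### Genericity and counting points -/

lemma exists_algebraicIndependent :
    ∃ t : Finset ℕ × ℕ × ℕ → ℂ, AlgebraicIndependent ℤ t := by
  obtain ⟨ι, v, hv⟩ := exists_isTranscendenceBasis' ℤ ℂ
  have h : Cardinal.mk ℂ = Cardinal.mk ι :=
    IsAlgClosed.cardinal_eq_cardinal_transcendence_basis_of_aleph0_lt' v hv
      (by simp) (by rw [Cardinal.mk_complex]; exact Cardinal.aleph0_lt_continuum)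
  have hle : Cardinal.mk (Finset ℕ × ℕ × ℕ) ≤ Cardinal.mk ι := by
    rw [← h, Cardinal.mk_complex]
    exact Cardinal.mk_le_aleph0.trans Cardinal.aleph0_le_continuum
  obtain ⟨j⟩ := Cardinal.le_def _ _ |>.1 hle
  exact ⟨v ∘ j, hv.1.comp j j.injective⟩

/-- The matrix of the linear map sending the coefficients of a cubic to its derivatives at `k`
points, for indeterminate points. -/
noncomputable def gradMatrix (k n : ℕ) :
    Matrix (Fin k × Fin (n + 1)) (cubicExps n) (MvPolynomial (Fin k × Fin (n + 1)) ℂ) :=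
  fun a δ => rename (fun j => (a.1, j)) (pderiv a.2 (monomial δ.1 (1 : ℂ)))

lemma gradMatrix_mulVec {k n : ℕ} (t : Fin k × Fin (n + 1) → ℂ) (y : cubicExps n → ℂ)
    (a : Fin k × Fin (n + 1)) : ((gradMatrix k n).map (eval t)).mulVec y a =
      evalPDeriv (fun j => t (a.1, j)) a.2 (∑ δ, monomial δ.1 (y δ)) := by
  simp only [Matrix.mulVec, dotProduct, Matrix.map_apply, gradMatrix, eval_rename, map_sum]
  refine Finset.sum_congr rfl fun δ _ => ?_
  have : monomial δ.1 (y δ) = y δ • monomial δ.1 (1 : ℂ) := by simp [smul_monomial]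
  rw [this, map_smul, evalPDeriv_eq, smul_eq_mul, mul_comm]
  rfl

lemma sum_monomial_isHomogeneous {n : ℕ} (y : cubicExps n → ℂ) :
    (∑ δ, monomial δ.1 (y δ)).IsHomogeneous 3 := by
  refine IsHomogeneous.sum _ _ _ fun δ _ => isHomogeneous_monomial _ ?_
  rw [Finsupp.degree_eq_sum]
  exact mem_cubicExps.1 δ.2

lemma coeff_sum_monomial {n : ℕ} (y : cubicExps n → ℂ) (δ : cubicExps n) :
    coeff δ.1 (∑ δ, monomial δ.1 (y δ)) = y δ := by
  rw [coeff_sum, Finset.sum_eq_single δ]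
  · simp
  · intro ε _ hε
    rw [coeff_monomial, if_neg fun h => hε (Subtype.ext h)]
  · simp

/-- It suffices to exhibit one configuration of `k` points. -/
lemma generic_of_exists {k n : ℕ} (q : Fin k → Fin (n + 1) → ℂ)
    (hq : ∀ f : MvPolynomial (Fin (n + 1)) ℂ, f.IsHomogeneous 3 →
      (∀ i, SingularAt f (q i)) → f = 0) :
    Generic (ι := Fin k × Fin (n + 1)) fun t =>
      ∀ f : MvPolynomial (Fin (n + 1)) ℂ, f.IsHomogeneous 3 →
        (∀ i, SingularAt f (fun j => t (i, j))) → f = 0 := by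
  obtain ⟨F, hF, hinj⟩ := exists_injectivity_certificate (gradMatrix k n)
    (eval fun a : Fin k × Fin (n + 1) => q a.1 a.2) (fun z => ⟨C z, eval_C _⟩) fun y hy => by
      have h0 := hq _ (sum_monomial_isHomogeneous y) fun i l => by
        rw [← gradMatrix_mulVec (fun a : Fin k × Fin (n + 1) => q a.1 a.2) y (i, l), hy]
        rfl
      funext δ
      rw [← coeff_sum_monomial y δ, h0, coeff_zero, Pi.zero_apply]
  refine ⟨F, fun h => hF (by rw [h, map_zero]), fun t ht f hf hs => ?_⟩
  have hsum : ∑ δ : cubicExps n, monomial δ.1 (coeff δ.1 f) = f := by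
    conv_rhs => rw [cubic_eq_sum hf]
    exact Finset.sum_coe_sort (cubicExps n) fun δ => monomial δ (coeff δ f)
  have := hinj ℂ (eval t) ht (fun δ => coeff δ.1 f) <| by
    funext a
    rw [gradMatrix_mulVec, hsum]
    exact hs a.1 a.2
  rw [← hsum]
  exact Finset.sum_eq_zero fun δ _ => by rw [congrFun this δ, Pi.zero_apply, map_zero]

lemma sum_multi (d m : ℕ) : ∑ A ∈ (Finset.range m).powerset, multi d A.card =
    multi d 0 + m * d + m.choose 2 * 3 := by
  rw [Finset.sum_powerset_apply_card, Finset.card_range,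
    Finset.sum_subset (Finset.range_subset_range.2 (by omega : m + 1 ≤ m + 3)) fun k _ hk => by
      rw [Nat.choose_eq_zero_of_lt (by simpa using hk), zero_smul],
    Finset.sum_range_succ', Finset.sum_range_succ', Finset.sum_range_succ',
    Finset.sum_eq_zero fun k _ => by simp [multi]]
  simp [multi]
  ring

/-- The number of points used is at most `kₙ`. -/
lemma card_le (n d m : ℕ) (hn : n + 1 = d + 3 * m)
    (hd : (d = 1 ∨ d = 3 ∨ d = 8) ∨ d = 2 ∧ m = 0) :
    n + 1 + ∑ A ∈ (Finset.range m).powerset, multi d A.card ≤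
      ⌈(Nat.choose (n + 3) 3 : ℚ) / (n + 1)⌉₊ := by
  have hchoose : (Nat.choose (n + 3) 3 : ℚ) = (n + 3) * (n + 2) * (n + 1) / 6 := by
    have := Nat.descFactorial_eq_factorial_mul_choose (n + 3) 3
    simp only [Nat.descFactorial_succ, Nat.descFactorial_zero, Nat.factorial] at this
    have h2 : (n + 1) * ((n + 2) * (n + 3)) = 6 * (n + 3).choose 3 := by
      simpa using this
    have h3 : ((n : ℚ) + 1) * ((n + 2) * (n + 3)) = 6 * (n + 3).choose 3 := by exact_mod_cast h2
    linarith
  have hq : (Nat.choose (n + 3) 3 : ℚ) / (n + 1) = (n + 3) * (n + 2) / 6 := by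
    rw [hchoose]
    field_simp
  have hnq : (n : ℚ) = d + 3 * m - 1 := by
    have : ((n : ℚ) + 1) = d + 3 * m := by exact_mod_cast hn
    linarith
  rw [sum_multi, hq, add_comm n 1, add_assoc, Nat.one_add_le_iff, Nat.lt_ceil]
  push_cast
  rw [Nat.cast_choose_two, hnq]
  rcases hd with (rfl | rfl | rfl) | ⟨rfl, rfl⟩ <;> simp [multi, Nat.choose] <;> nlinarith

/-- Decomposition of the variables into a core and blocks of three. The residue `n % 3 = 1` starts
with a core of `8`, because `5` variables are the exception `n = 4`; the case of two variables needs
no blocks and no points beyond the coordinate points. -/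
lemma exists_core (n : ℕ) (hn : 1 ≤ n) (hn4 : n ≠ 4) :
    ∃ d m, n + 1 = d + 3 * m ∧ ((d = 1 ∨ d = 3 ∨ d = 8) ∨ d = 2 ∧ m = 0) := by
  have h3 : n % 3 = 0 ∨ n % 3 = 1 ∨ n % 3 = 2 := by omega
  rcases h3 with h | h | h
  · exact ⟨1, n / 3, by omega, by simp⟩
  · rcases eq_or_ne n 1 with rfl | h1
    · exact ⟨2, 0, by omega, by simp⟩
    · exact ⟨8, (n - 7) / 3, by omega, by simp⟩
  · exact ⟨3, (n - 2) / 3, by omega, by simp⟩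

/-- The coordinate points together with the points `blockPt` admit no singular cubic. -/
lemma eq_zero_of_singular {n d m : ℕ} (hn : n + 1 = d + 3 * m)
    (hd : (d = 1 ∨ d = 3 ∨ d = 8) ∨ d = 2 ∧ m = 0) {t : Finset ℕ × ℕ × ℕ → ℂ}
    (ht : AlgebraicIndependent ℤ t) {f : MvPolynomial (Fin (n + 1)) ℂ} (hf : f.IsHomogeneous 3)
    (hs : ∀ i, SingularAt f (Pi.single i 1))
    (hb : ∀ A ⊆ Finset.range m, ∀ s < multi d A.card,
      SingularAt f fun j => blockPt d t A s j) : f = 0 := by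
  have hx : ∀ S ∈ (Finset.range (n + 1)).powersetCard 3, coeff (indExp n S) f = 0 := by
    rcases hd with hd | ⟨rfl, rfl⟩
    · intro S hS
      refine eq_zero_of_blockPt hd ht (m := m) (fun S => coeff (indExp n S) f) ?_
        (Finset.range m) subset_rfl S (by rwa [blockVars_range, ← hn])
      intro A hA s hs' l hl
      have := hb A hA s hs' ⟨l, by omega⟩
      rw [evalPDeriv_squarefree hf hs] at this
      have hrange : Finset.range (d + 3 * m) = Finset.range (n + 1) := by rw [hn]
      rw [hrange]
      exact this
    · intro S hS
      rw [hn, Finset.powersetCard_eq_empty.2 (by simp)] at hS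
      simp at hS
  rw [cubic_eq_sum hf]
  refine Finset.sum_eq_zero fun δ hδ => ?_
  rw [monomial_eq_zero]
  by_cases h : ∃ j, 2 ≤ δ j
  · obtain ⟨j, hj⟩ := h
    exact coeff_eq_zero_of_two_le hf hs hδ hj
  · push Not at h
    obtain ⟨S, hS, rfl⟩ := exists_indExp hδ h
    exact hx S hS

theorem cubics_vanish_at_kn_points (n : ℕ) (hn : 1 ≤ n) (hn4 : n ≠ 4) :
    Generic (ι := Fin ⌈(Nat.choose (n + 3) 3 : ℚ) / (n + 1)⌉₊ × Fin (n + 1)) fun t =>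
      let p : Fin ⌈(Nat.choose (n + 3) 3 : ℚ) / (n + 1)⌉₊ → Fin (n + 1) → ℂ :=
        fun i j => t (i, j)
      ∀ f : MvPolynomial (Fin (n + 1)) ℂ, f.IsHomogeneous 3 →
        (∀ i, SingularAt f (p i)) → f = 0 := by
  obtain ⟨d, m, hnd, hd⟩ := exists_core n hn hn4
  obtain ⟨t, ht⟩ := exists_algebraicIndependent
  set k := ⌈(Nat.choose (n + 3) 3 : ℚ) / (n + 1)⌉₊ with hk
  let L := Fin (n + 1) ⊕ (Finset.range m).powerset.sigma fun A => Finset.range (multi d A.card)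
  have hcard : Fintype.card L ≤ Fintype.card (Fin k) := by
    rw [Fintype.card_sum, Fintype.card_coe, Finset.card_sigma, Fintype.card_fin, Fintype.card_fin]
    simpa using card_le n d m hnd hd
  obtain ⟨e⟩ := Function.Embedding.nonempty_of_card_le hcard
  let p : L → Fin (n + 1) → ℂ :=
    Sum.elim (fun i => Pi.single i 1) fun a j => blockPt d t a.1.1 a.1.2 j
  refine generic_of_exists (Function.extend e p 0) fun f hf hs => ?_
  have hp : ∀ a, SingularAt f (p a) := fun a => by
    have := hs (e a)
    rwa [e.injective.extend_apply] at this
  refine eq_zero_of_singular hnd hd ht hf (fun i => hp (Sum.inl i)) fun A hA s hs' => ?_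
  exact hp (Sum.inr ⟨⟨A, s⟩, Finset.mem_sigma.2
    ⟨Finset.mem_powerset.2 hA, Finset.mem_range.2 hs'⟩⟩)
end

section
/- Let n ≥ 1 with n ≢ 2 (mod 3), and set kₙ = ⌈C(n+3,3)/(n+1)⌉ = (n+3)(n+2)/6. For a generic choice of kₙ − 1 points p₁,…,p_{kₙ−1} ∈ ℂ^{n+1}, the ℂ-vector space of homogeneous cubic polynomials in ℂ[x₀,…,xₙ] that are singular at all of these points has dimension n+1, and moreover every nonzero vector q ∈ ℂ^{n+1} such that all cubics in this space are singular at q is a scalar multiple of some pᵢ (i.e., the common singular locus consists exactly of the kₙ − 1 points). -/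
/-!
Cubic forms correspond to symmetric 3-tensors `F`, and a cubic is singular at `p` exactly when
`F(p, p, ·) = 0` (`singSpace_eq`). Put `k = kₙ - 1`, so that `(k + 1)(n + 1)` is the dimension of the
space of cubics. Everything rests on one nondegeneracy statement: for generic points `p₁, …, p_k`,
a suitable vector `y` and suitable coordinates `z₁, z₂, z₃`, the only symmetric tensor with
`F(pᵢ, pᵢ, ·) = 0` for all `i`, with `F(p_j, y, ·) = 0` for one index `j`, and with `F z₁ z₂ z₃ = 0`,
is zero.

*Nondegeneracy.* Being the injectivity of a matrix, it is open (`nondeg_open`), so a single example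
for each `n` is enough. The coordinates are split into a base of four or five and `m` blocks of three;
some of the points live on the base, some on the base and one block, some on the base and two blocks.
A cubic monomial meets at most three blocks, so the statement for all `m` follows from four statements
about at most three blocks (`star_of_OK`). These are finite systems of linear equations with integer
coefficients, solved by an elimination procedure that is proved correct and run in the kernel
(`check_spec`). The case `n = 1` is done directly.

*Dimension count.* Generic points thus impose independent conditions, which gives the dimension
`n + 1`. Moreover `F ↦ F(p_j, y, ·)` maps the tensors singular at all the points onto the hyperplane of
vectors orthogonal to `p_j` (`star_conseq`); this also holds over extension fields of `ℂ` for points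
with algebraically independent coordinates.

*Contact locus.* If the second assertion fails for a Zariski dense set of parameters, an ultrapower of
`ℂ` contains points `pᵢ` with algebraically independent coordinates and a point `q`, not proportional
to any `pᵢ`, at which all cubics singular at the `pᵢ` are singular (`contact_generic`). By duality
(`exists_tangent_coeff`) the tangent space to the cone of cubes at `q` lies in the span of those at the
`pᵢ`; in particular `q³` is a sum of tangent vectors `pᵢ² xᵢ`. Differentiate this relation with
derivations dual to the coordinates of the `pᵢ` (`exists_dual_derivation`) and pair it with a tensor `F`
singular at all the `pᵢ`: the result is `F(pᵢ, xᵢ, ·) = 0`. By the surjectivity above `xᵢ` is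
a multiple of `pᵢ`, so `q³` is a combination of the cubes `pᵢ³`, and then independence of the
conditions at the points shows that `q` is a multiple of some `pᵢ` (`contact_core`).
-/

open MvPolynomial

set_option linter.unusedSectionVars false
set_option linter.unusedSimpArgs false

/-! ### Symmetric tensors and certified Gaussian elimination -/

section Tensors
variable {ι ι' ι'' : Type*} [Fintype ι] [Fintype ι'] [Fintype ι'']
variable {K : Type*} [Field K]

/-- The 3-tensor `F` is symmetric; two transpositions generating `S₃` suffice. -/
def IsSym (F : ι → ι → ι → K) : Prop :=
  (∀ a b c, F a b c = F b a c) ∧ ∀ a b c, F a b c = F a c b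

/-- The contraction `F(u, v, ·)` of a 3-tensor with two vectors. -/
def con (F : ι → ι → ι → K) (u v : ι → K) (c : ι) : K :=
  ∑ a, ∑ b, u a * v b * F a b c

end Tensors

/-- The value at `x` of the sparse integral linear form `∑ c · x j`, given by its list of pairs
`(c, j)`; in the algorithms below these lists are kept sorted by `j`. -/
def fEval {K : Type*} [Field K] (x : ℕ → K) (L : List (ℤ × ℕ)) : K :=
  (L.map fun p => (p.1 : K) * x p.2).sum

/-- The multiple of a sparse form by an integer. -/
def fScale (c : ℤ) (L : List (ℤ × ℕ)) : List (ℤ × ℕ) := L.map fun p => (c * p.1, p.2)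

/-- The combination `c L + d M` of two sparse forms, by merging the sorted lists. The natural number
is fuel that makes the recursion structural; once it runs out the two lists are concatenated, which
is still correct, only not sorted. -/
def fComb (c d : ℤ) : ℕ → List (ℤ × ℕ) → List (ℤ × ℕ) → List (ℤ × ℕ)
  | 0, L, M => fScale c L ++ fScale d M
  | _ + 1, [], M => fScale d M
  | _ + 1, L, [] => fScale c L
  | n + 1, (a, i) :: L, (b, j) :: M =>
    bif Nat.beq i j then
      (let e := c * a + d * b
       bif Nat.beq e.natAbs 0 then fComb c d n L M else (e, i) :: fComb c d n L M)
    else bif Nat.ble i j then (c * a, i) :: fComb c d n L ((b, j) :: M)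
    else (d * b, j) :: fComb c d n ((a, i) :: L) M

/-- The gcd of the coefficients of a sparse form. -/
def fContent : List (ℤ × ℕ) → ℕ
  | [] => 0
  | (c, _) :: t => Nat.gcd c.natAbs (fContent t)

/-- A sparse form divided by its content. -/
def fPrim (L : List (ℤ × ℕ)) : List (ℤ × ℕ) :=
  let g := fContent L
  bif Nat.ble g 1 then L else L.map fun p => (p.1 / (g : ℤ), p.2)

/-- The first row whose leading term involves the variable `k`, as leading coefficient and tail. -/
def fPivot (k : ℕ) : List (List (ℤ × ℕ)) → Option (ℤ × List (ℤ × ℕ))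
  | [] => none
  | [] :: rs => fPivot k rs
  | ((c, j) :: t) :: rs => bif Nat.beq j k && !(Nat.beq c.natAbs 0) then some (c, t) else fPivot k rs

/-- Elimination of the variable `k` from the leading terms of the rows, the pivot row being
`c · x k + piv`. -/
def fStep (k : ℕ) (c : ℤ) (piv : List (ℤ × ℕ)) :
    List (List (ℤ × ℕ)) → List (List (ℤ × ℕ))
  | [] => []
  | [] :: rs => fStep k c piv rs
  | ((d, j) :: t) :: rs =>
    bif Nat.beq j k then fPrim (fComb c (-d) 1000 t piv) :: fStep k c piv rs
    else ((d, j) :: t) :: fStep k c piv rs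

/-- Gaussian elimination: tests whether vanishing of all rows forces the variables `ks` to vanish.
Only the implication from `true` is ever used, see `fSolve_spec`. -/
def fSolve : List ℕ → List (List (ℤ × ℕ)) → Bool
  | [], _ => true
  | k :: ks, rows =>
    match fPivot k rows with
    | none => false
    | some (c, t) => (t.all fun p => ks.any fun i => Nat.beq i p.2) && fSolve ks (fStep k c t rows)

section
variable {K : Type*} [Field K] [CharZero K] (x : ℕ → K)

lemma fEval_scale (c : ℤ) (L) : fEval x (fScale c L) = c * fEval x L := by
  induction L with
  | nil => simp [fEval, fScale]
  | cons p t ih => simp only [fEval, fScale, List.map_cons, List.sum_cons] at *; rw [ih]; push_cast; ring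

lemma fEval_comb (c d : ℤ) (n : ℕ) (L M) :
    fEval x (fComb c d n L M) = c * fEval x L + d * fEval x M := by
  induction n generalizing L M with
  | zero =>
    rw [fComb, ← fEval_scale, ← fEval_scale]; simp [fEval]
  | succ n ih =>
    match L, M with
    | [], M => rw [fComb, fEval_scale]; simp [fEval]
    | p :: L, [] => rw [fComb, fEval_scale]; simp [fEval]; simp
    | (a, i) :: L, (b, j) :: M =>
      have h1 : ∀ (a : ℤ) (i : ℕ) (L : List (ℤ × ℕ)),
        fEval x ((a, i) :: L) = a * x i + fEval x L := fun a i L => by simp [fEval]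
      rw [fComb]
      simp only [cond_eq_ite, Nat.beq_eq]
      split_ifs with h2 h3 h4
      · subst h2
        have h3 : (c * a + d * b : K) = 0 := by exact_mod_cast Int.natAbs_eq_zero.1 h3
        rw [ih, h1, h1]; linear_combination (-x i) * h3
      · subst h2; rw [h1, ih, h1, h1]; push_cast; ring
      · simp only [h1, ih]; push_cast; ring
      · simp only [h1, ih]; push_cast; ring

lemma fContent_dvd {L} : ∀ p ∈ L, (fContent L : ℤ) ∣ p.1 := by
  induction L with
  | nil => simp
  | cons q t ih =>
    intro p hp
    rcases List.mem_cons.1 hp with rfl | hp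
    · exact Int.natCast_dvd.2 (Nat.gcd_dvd_left _ _)
    · exact (Int.natCast_dvd_natCast.2 (Nat.gcd_dvd_right _ _)).trans (ih p hp)

lemma fEval_prim {L} (h : fEval x L = 0) : fEval x (fPrim L) = 0 := by
  unfold fPrim
  extract_lets g
  rw [cond_eq_ite]
  split_ifs with h1
  · exact h
  · have hg : g ≠ 0 := by rintro h0; simp [h0] at h1
    have h2 : fScale g (L.map fun p => (p.1 / (g : ℤ), p.2)) = L := by
      unfold fScale
      rw [List.map_map]
      conv_rhs => rw [← List.map_id L]
      refine List.map_congr_left fun p hp => ?_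
      simp [Int.mul_ediv_cancel' (fContent_dvd p hp), g]
    rw [← h2, fEval_scale] at h
    exact (mul_eq_zero.1 h).resolve_left (by exact_mod_cast hg)

lemma fPivot_spec {k : ℕ} {rows} {c : ℤ} {t} (h : fPivot k rows = some (c, t)) :
    c ≠ 0 ∧ (c, k) :: t ∈ rows := by
  induction rows with
  | nil => simp [fPivot] at h
  | cons r rs ih =>
    match r with
    | [] => rw [fPivot] at h; exact ⟨(ih h).1, List.mem_cons_of_mem _ (ih h).2⟩
    | (d, j) :: u =>
      rw [fPivot, cond_eq_ite] at h
      simp only [Bool.and_eq_true, Nat.beq_eq, Bool.not_eq_true'] at h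
      split_ifs at h with h1
      · simp only [Option.some.injEq, Prod.mk.injEq] at h
        obtain ⟨rfl, rfl⟩ := h
        obtain ⟨rfl, h2⟩ := h1
        exact ⟨(by intro h0; subst h0; simp at h2), by simp⟩
      · exact ⟨(ih h).1, List.mem_cons_of_mem _ (ih h).2⟩

lemma fStep_spec {k : ℕ} {c : ℤ} {t} (hp : fEval x ((c, k) :: t) = 0) {rows}
    (h : ∀ r ∈ rows, fEval x r = 0) : ∀ r ∈ fStep k c t rows, fEval x r = 0 := by
  induction rows with
  | nil => simp [fStep]
  | cons r rs ih =>
    have ih := ih fun r hr => h r (List.mem_cons_of_mem _ hr)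
    have hr := h r (by simp)
    match r with
    | [] => rw [fStep]; exact ih
    | (d, j) :: u =>
      rw [fStep, cond_eq_ite]
      simp only [Nat.beq_eq]
      split_ifs with h1
      · subst h1
        intro r' hr'
        rcases List.mem_cons.1 hr' with rfl | h2
        · apply fEval_prim
          rw [fEval_comb]
          simp only [fEval, List.map_cons, List.sum_cons] at *
          push_cast
          linear_combination c * hr - d * hp
        · exact ih _ h2
      · intro r' hr'
        rcases List.mem_cons.1 hr' with rfl | h2
        · exact hr
        · exact ih _ h2

/-- Soundness of the elimination: a positive answer of `fSolve` certifies that the linear system has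
only the zero solution in the variables `ks`, over any field of characteristic zero. -/
lemma fSolve_spec {ks : List ℕ} : ∀ {rows}, fSolve ks rows = true →
    (∀ r ∈ rows, fEval x r = 0) → ∀ k ∈ ks, x k = 0 := by
  induction ks with
  | nil => simp
  | cons k ks ih =>
    intro rows hs h
    rw [fSolve] at hs
    split at hs
    · simp at hs
    · rename_i c t hp
      obtain ⟨hc, hm⟩ := fPivot_spec hp
      rw [Bool.and_eq_true] at hs
      have hk := ih hs.2 (fStep_spec x (h _ hm) h)
      have ht : fEval x t = 0 := by
        apply List.sum_eq_zero
        intro y hy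
        obtain ⟨p, hpt, rfl⟩ := List.mem_map.1 hy
        have := List.all_eq_true.1 hs.1 p hpt
        rw [hk p.2 (by simpa [List.any_eq_true] using this), mul_zero]
      have h0 := h _ hm
      simp only [fEval, List.map_cons, List.sum_cons] at h0 ht
      rw [ht, add_zero] at h0
      intro j hj
      rcases List.mem_cons.1 hj with rfl | hj
      · exact (mul_eq_zero.1 h0).resolve_left (by exact_mod_cast hc)
      · exact hk j hj
end

/-- The variable number of the tensor entry at `a, b, c`: the sorted triple written in base 100, so
that permuted indices share a variable. -/
def mKey (a b c : ℕ) : ℕ :=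
  if a ≤ b then
    if b ≤ c then a * 10000 + b * 100 + c
    else if a ≤ c then a * 10000 + c * 100 + b else c * 10000 + a * 100 + b
  else
    if a ≤ c then b * 10000 + a * 100 + c
    else if b ≤ c then b * 10000 + c * 100 + a else c * 10000 + b * 100 + a

/-- The coordinates of an integer vector given as a list, extended by zero. -/
def vecZ (l : List ℤ) (a : ℕ) : ℤ := l.getD a 0

/-- The vector over `K` with the given list of integer coordinates. -/
def vec (K : Type*) [Field K] {N : ℕ} (l : List ℤ) (a : Fin N) : K := (vecZ l a : K)

/-- The equation `F(u, v, e_l) = 0`, as a sparse form in the entries of a symmetric tensor `F` whose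
entries marked by `z` are zero. -/
def rowOf (N : ℕ) (z : ℕ → ℕ → ℕ → Bool) (u v : List ℤ) (l : ℕ) : List (ℤ × ℕ) :=
  (List.range N).foldr (fun a acc => if vecZ u a = 0 then acc else
    (List.range N).foldr (fun b acc => if vecZ v b = 0 then acc else
      if z a b l then acc else fComb (vecZ u a * vecZ v b) 1 1000 [(1, mKey a b l)] acc) acc) []

/-- The variables of the system: sorted triples of indices not marked by `z`. -/
def keysOf (N : ℕ) (z : ℕ → ℕ → ℕ → Bool) : List ℕ :=
  (List.range N).flatMap fun a => (List.range N).flatMap fun b =>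
    (List.range N).filterMap fun c =>
      if a ≤ b ∧ b ≤ c ∧ z a b c = false then some (a * 10000 + b * 100 + c) else none

/-- Tests whether zero is the only symmetric tensor that vanishes at the entries marked by `z` and
satisfies `F(u, v, ·) = 0` for every pair `(u, v)` in the list. -/
def check (N : ℕ) (z : ℕ → ℕ → ℕ → Bool) (cs : List (List ℤ × List ℤ)) : Bool :=
  fSolve (keysOf N z) (cs.flatMap fun p => (List.range N).map (rowOf N z p.1 p.2))

section
variable {K : Type*} [Field K] [CharZero K]

lemma foldr_eval (x : ℕ → K) {α} (l : List α) (f : α → List (ℤ × ℕ) → List (ℤ × ℕ)) (g : α → K)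
    (h : ∀ a ∈ l, ∀ L, fEval x (f a L) = g a + fEval x L) (L) :
    fEval x (l.foldr f L) = (l.map g).sum + fEval x L := by
  induction l with
  | nil => simp
  | cons a t ih =>
    rw [List.foldr_cons, h a (by simp), ih fun b hb => h b (List.mem_cons_of_mem _ hb)]
    simp [add_assoc]

lemma list_sum_range (f : ℕ → K) (n : ℕ) :
    ((List.range n).map f).sum = ∑ i ∈ Finset.range n, f i := rfl

/-- Soundness of `check`: it turns a kernel computation with integers into a statement about tensors
over any field of characteristic zero. The bound on `N` makes the keys of `mKey` injective. -/
lemma check_spec {N : ℕ} (hN : N < 100) {z : ℕ → ℕ → ℕ → Bool}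
    {cs : List (List ℤ × List ℤ)} (h : check N z cs = true)
    {F : Fin N → Fin N → Fin N → K} (hF : IsSym F)
    (hz : ∀ a b c : Fin N, z a b c = true → F a b c = 0)
    (hc : ∀ p ∈ cs, ∀ l, con F (vec K p.1) (vec K p.2) l = 0) : F = 0 := by
  classical
  set x : ℕ → K := fun k => if h : k / 10000 < N ∧ k / 100 % 100 < N ∧ k % 100 < N then
    F ⟨_, h.1⟩ ⟨_, h.2.1⟩ ⟨_, h.2.2⟩ else 0 with hx
  have xk : ∀ a b c : Fin N, x (a.1 * 10000 + b * 100 + c) = F a b c := by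
    intro a b c
    have h1 : (a.1 * 10000 + b * 100 + c) / 10000 = a := by omega
    have h2 : (a.1 * 10000 + b * 100 + c) / 100 % 100 = b := by omega
    have h3 : (a.1 * 10000 + b * 100 + c) % 100 = c := by omega
    simp only [hx, h1, h2, h3]
    simp
  have xm : ∀ a b c : Fin N, x (mKey a b c) = F a b c := by
    intro a b c
    unfold mKey
    split_ifs <;> rw [xk]
    · exact (hF.2 _ _ _).symm
    · rw [hF.1, hF.2]
    · exact hF.1 _ _ _
    · rw [hF.2, hF.1]
    · rw [hF.1, hF.2, hF.1]
  have key := fSolve_spec x (h : fSolve _ _ = true) (by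
    intro r hr
    obtain ⟨p, hp, hr⟩ := List.mem_flatMap.1 hr
    obtain ⟨l, hl, rfl⟩ := List.mem_map.1 hr
    have hl := List.mem_range.1 hl
    have hcl := hc p hp ⟨l, hl⟩
    rw [← hcl]
    unfold rowOf
    rw [foldr_eval x _ _ (fun a => if ha : a < N then
      ∑ b : Fin N, (vecZ p.1 a : K) * vecZ p.2 b * F ⟨a, ha⟩ b ⟨l, hl⟩ else 0)]
    · simp only [fEval, List.map_nil, List.sum_nil, add_zero]
      rw [list_sum_range]
      rw [Finset.sum_range]
      unfold con
      refine Finset.sum_congr rfl fun a _ => ?_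
      simp [vec]
    · intro a ha L
      have ha := List.mem_range.1 ha
      simp only [ha, dite_true]
      split_ifs with h0
      · simp [h0]
      rw [foldr_eval x _ _ (fun b => if hb : b < N then
        (vecZ p.1 a : K) * vecZ p.2 b * F ⟨a, ha⟩ ⟨b, hb⟩ ⟨l, hl⟩ else 0)]
      · congr 1
        rw [list_sum_range]
        rw [Finset.sum_range]
        refine Finset.sum_congr rfl fun a _ => ?_
        simp
      · intro b hb L
        have hb := List.mem_range.1 hb
        simp only [hb, dite_true]
        split_ifs with h1 h2
        · simp [h1]
        · simp [hz ⟨a, ha⟩ ⟨b, hb⟩ ⟨l, hl⟩ h2]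
        · rw [fEval_comb]
          simp only [fEval, List.map_cons, List.map_nil, List.sum_cons, List.sum_nil,
            xm ⟨a, ha⟩ ⟨b, hb⟩ ⟨l, hl⟩]
          push_cast; ring)
  -- sorted triples
  have hs : ∀ a b c : Fin N, a ≤ b → b ≤ c → F a b c = 0 := by
    intro a b c hab hbc
    by_cases hzz : z a b c = true
    · exact hz _ _ _ hzz
    · rw [← xk]
      apply key
      simp only [keysOf, List.mem_flatMap, List.mem_filterMap, List.mem_range]
      exact ⟨a, a.2, b, b.2, c, c.2, by simp [Fin.le_def.1 hab, Fin.le_def.1 hbc, hzz]⟩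
  funext a b c
  show F a b c = 0
  rcases le_total a b with h1 | h1 <;> rcases le_total b c with h2 | h2 <;>
    rcases le_total a c with h3 | h3
  · exact hs _ _ _ h1 h2
  · exact hs _ _ _ h1 h2
  · rw [hF.2]; exact hs _ _ _ h3 h2
  · rw [hF.2, hF.1]; exact hs _ _ _ h3 h1
  · rw [hF.1]; exact hs _ _ _ h1 h3
  · rw [hF.1, hF.2]; exact hs _ _ _ h2 h3
  · rw [hF.1, hF.2, hF.1]; exact hs _ _ _ h2 h1
  · rw [hF.1, hF.2, hF.1]; exact hs _ _ _ h2 h1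
end

/-! ### Nondegenerate systems and openness -/

section Tensors
variable {ι ι' ι'' Γ : Type*} [Fintype ι] [Fintype ι'] [Fintype ι''] [DecidableEq ι] [DecidableEq ι'] [DecidableEq ι'']
  [Fintype Γ]
variable {K : Type*} [Field K]

/-- The pairs of vectors `(u γ, v γ)` form a nondegenerate system relative to `Z`: a symmetric tensor
with zero entries on `Z` and with `F(u γ, v γ, ·) = 0` for all `γ` is zero. -/
def Nondeg (Z : ι → ι → ι → Prop) (u v : Γ → ι → K) : Prop :=
  ∀ F : ι → ι → ι → K, IsSym F → (∀ a b c, Z a b c → F a b c = 0) →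
    (∀ γ l, con F (u γ) (v γ) l = 0) → F = 0

/-- The push-forward of a vector along a map of coordinate index sets. -/
def push {R : Type*} [AddCommMonoid R] (e : ι' → ι) (u : ι' → R) : ι → R :=
  fun x => ∑ a, if e a = x then u a else 0

lemma push_push (e : ι' → ι) (e' : ι'' → ι') (u : ι'' → K) :
    push e (push e' u) = push (e ∘ e') u := by
  funext x
  simp only [push, Function.comp]
  simp_rw [← Finset.sum_filter (fun a => e a = x)]
  rw [Finset.sum_comm]
  refine Finset.sum_congr rfl fun b _ => ?_
  rw [Finset.sum_ite_eq]
  simp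

lemma push_map {R S : Type*} [CommRing R] [CommRing S] (g : R →+* S) (e : ι' → ι) (u : ι' → R) :
    (fun x => g (push e u x)) = push e (fun x => g (u x)) := by
  funext x
  simp only [push, map_sum]
  refine Finset.sum_congr rfl fun b _ => ?_
  split_ifs <;> simp

lemma con_push (F : ι → ι → ι → K) (e : ι' → ι) (u v : ι' → K) (l : ι') :
    con F (push e u) (push e v) (e l) = con (fun a b c => F (e a) (e b) (e c)) u v l := by
  simp only [con, push]
  simp_rw [Finset.sum_mul_sum, Finset.sum_mul]
  have h : ∀ f : ι → ι → ι' → ι' → K, ∑ a, ∑ b, ∑ c, ∑ d, f a b c d =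
      ∑ c, ∑ d, ∑ a, ∑ b, f a b c d := by
    intro f
    have : ∀ a, ∑ b, ∑ c, ∑ d, f a b c d = ∑ c, ∑ d, ∑ b, f a b c d := fun a => by
      rw [Finset.sum_comm]
      exact Finset.sum_congr rfl fun c _ => Finset.sum_comm
    simp_rw [this]
    rw [Finset.sum_comm]
    exact Finset.sum_congr rfl fun c _ => Finset.sum_comm
  rw [h]
  refine Finset.sum_congr rfl fun a _ => Finset.sum_congr rfl fun b _ => ?_
  simp

/-- Injectivity of a matrix is an open condition: with `B` a left inverse at `t₀`, the determinant of
`B * M` is a polynomial certificate, valid after every ring homomorphism to a field. -/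
lemma matrix_open {σ β δ : Type*} [Fintype β] [Fintype δ] [DecidableEq β] [DecidableEq δ]
    (M : Matrix δ β (MvPolynomial σ ℂ)) (t₀ : σ → ℂ)
    (h : ∀ w, (M.map (eval t₀)).mulVec w = 0 → w = 0) :
    ∃ D : MvPolynomial σ ℂ, eval t₀ D ≠ 0 ∧ ∀ {K : Type} [Field K]
      (g : MvPolynomial σ ℂ →+* K), g D ≠ 0 → ∀ w, (M.map g).mulVec w = 0 → w = 0 := by
  obtain ⟨B, hB⟩ := LinearMap.exists_leftInverse_of_injective (Matrix.toLin' (M.map (eval t₀)))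
    (LinearMap.ker_eq_bot'.2 fun w hw => h w (by simpa using hw))
  have hB' : LinearMap.toMatrix' B * M.map (eval t₀) = 1 := by
    have := congrArg LinearMap.toMatrix' hB
    rwa [LinearMap.toMatrix'_comp, LinearMap.toMatrix'_toLin', LinearMap.toMatrix'_id] at this
  let B' : Matrix β δ (MvPolynomial σ ℂ) := Matrix.of fun i j => C (LinearMap.toMatrix' B i j)
  refine ⟨Matrix.det (B' * M), ?_, ?_⟩
  · rw [RingHom.map_det, RingHom.mapMatrix_apply, Matrix.map_mul]
    have : B'.map (eval t₀) = LinearMap.toMatrix' B := by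
      ext i j; simp [B']
    rw [this, hB']
    simp
  · intro K _ g hg w hw
    rw [RingHom.map_det, RingHom.mapMatrix_apply, Matrix.map_mul] at hg
    apply Matrix.eq_zero_of_mulVec_eq_zero hg
    rw [← Matrix.mulVec_mulVec, hw, Matrix.mulVec_zero]

/-- Nondegeneracy of a polynomial family at one point `t₀` spreads to all points, over any field, that
avoid a hypersurface not containing `t₀`. -/
lemma nondeg_open {σ : Type*} (Z : ι → ι → ι → Prop) (u v : Γ → ι → MvPolynomial σ ℂ)
    (t₀ : σ → ℂ) (h : Nondeg Z (fun γ a => eval t₀ (u γ a)) (fun γ a => eval t₀ (v γ a))) :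
    ∃ D : MvPolynomial σ ℂ, eval t₀ D ≠ 0 ∧ ∀ {K : Type} [Field K]
      (g : MvPolynomial σ ℂ →+* K), g D ≠ 0 →
      Nondeg Z (fun γ a => g (u γ a)) (fun γ a => g (v γ a)) := by
  classical
  let M : Matrix ((ι × ι × ι) ⊕ (ι × ι × ι) ⊕ (ι × ι × ι) ⊕ (Γ × ι)) (ι × ι × ι)
      (MvPolynomial σ ℂ) := Matrix.of fun d x => Sum.elim
    (fun y => (if x = y then 1 else 0) - if x = (y.2.1, y.1, y.2.2) then 1 else 0)
    (Sum.elim (fun y => (if x = y then 1 else 0) - if x = (y.1, y.2.2, y.2.1) then 1 else 0)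
    (Sum.elim (fun y => if x = y ∧ Z y.1 y.2.1 y.2.2 then 1 else 0)
      (fun y => if x.2.2 = y.2 then u y.1 x.1 * v y.1 x.2.1 else 0))) d
  have key : ∀ {K : Type} [Field K] (g : MvPolynomial σ ℂ →+* K),
      (∀ w, (M.map g).mulVec w = 0 → w = 0) ↔
      Nondeg Z (fun γ a => g (u γ a)) (fun γ a => g (v γ a)) := by
    intro K _ g
    have main : ∀ F : ι → ι → ι → K, (M.map g).mulVec (fun x => F x.1 x.2.1 x.2.2) = 0 ↔
        (IsSym F ∧ (∀ a b c, Z a b c → F a b c = 0) ∧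
          ∀ γ l, con F (fun a => g (u γ a)) (fun a => g (v γ a)) l = 0) := by
      intro F
      rw [funext_iff]
      simp only [Sum.forall, Prod.forall, Matrix.mulVec, dotProduct, Matrix.map_apply, M, Matrix.of_apply, Sum.elim_inl,
        Sum.elim_inr, map_sub, apply_ite g, map_one, map_zero, map_mul, sub_mul, ite_mul, one_mul,
        zero_mul, Finset.sum_sub_distrib, Finset.sum_ite_eq', Finset.mem_univ, if_true,
        Pi.zero_apply, sub_eq_zero, IsSym, and_assoc]
      refine and_congr Iff.rfl (and_congr Iff.rfl (and_congr ?_ ?_))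
      · refine forall_congr' fun a => forall_congr' fun b => forall_congr' fun c => ?_
        by_cases hz : Z a b c <;> simp [hz]
      · refine forall_congr' fun γ => forall_congr' fun l => ?_
        simp only [con, Fintype.sum_prod_type]
        simp
    constructor
    · intro h F h1 h2 h3
      have := h _ ((main F).2 ⟨h1, h2, h3⟩)
      funext a b c
      exact congrFun this (a, b, c)
    · intro h w hw
      have := (main fun a b c => w (a, b, c)).1 hw
      have := h _ this.1 this.2.1 this.2.2
      funext x
      exact congrFun (congrFun (congrFun this x.1) x.2.1) x.2.2
  obtain ⟨D, h1, h2⟩ := matrix_open M t₀ ((key (eval t₀)).2 h)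
  exact ⟨D, h1, fun g hg => (key g).1 (h2 g hg)⟩
end Tensors

/-! ### The block construction -/

/-- The coordinates are `r` base coordinates followed by blocks of three; this is the block number of
the coordinate `a`, with `0` standing for the base. -/
def blk (r a : ℕ) : ℕ := if a < r then 0 else (a - r) / 3 + 1

/-- The monomial `x_a x_b x_c` misses one of the `k` blocks. -/
def zC (r k a b c : ℕ) : Bool :=
  !((List.range k).all fun i => blk r a == i + 1 || blk r b == i + 1 || blk r c == i + 1)

/-- The inclusion of coordinates induced by a map `f` on blocks; it fixes the base coordinates. -/
def emb {r m k : ℕ} (f : Fin k → Fin m) (x : Fin (r + 3 * k)) : Fin (r + 3 * m) :=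
  if h : x.1 < r then ⟨x, by omega⟩
  else ⟨r + 3 * (f ⟨(x - r) / 3, by omega⟩).1 + (x - r) % 3, by
    have := (f ⟨(x - r) / 3, by omega⟩).2; omega⟩

lemma emb_comp {r m k l : ℕ} (f : Fin k → Fin m) (g : Fin l → Fin k) :
    (emb f ∘ emb g : Fin (r + 3 * l) → Fin (r + 3 * m)) = emb (f ∘ g) := by
  funext x
  apply Fin.ext
  by_cases h : x.1 < r
  · simp [emb, h]
  · have h1 : (r + 3 * (g ⟨(x - r) / 3, by omega⟩).1 + (x - r) % 3 - r) / 3 =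
      (g ⟨(x - r) / 3, by omega⟩).1 := by omega
    have h2 : (r + 3 * (g ⟨(x - r) / 3, by omega⟩).1 + (x - r) % 3 - r) % 3 = (x - r) % 3 := by
      omega
    have h3 : ¬ (r + 3 * (g ⟨(x - r) / 3, by omega⟩).1 + (x - r) % 3 < r) := by omega
    simp only [emb, h, h3, Function.comp, dif_neg, not_false_eq_true, h1, h2]

lemma mem_range_emb {r m k : ℕ} (f : Fin k → Fin m) (x : Fin (r + 3 * m))
    (h : r ≤ x.1 → ∃ i, (f i).1 = (x.1 - r) / 3) : ∃ y, emb f y = x := by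
  by_cases hx : x.1 < r
  · exact ⟨⟨x, by omega⟩, by simp [emb, hx]⟩
  · obtain ⟨i, hi⟩ := h (by omega)
    have hi2 := i.2
    refine ⟨⟨r + 3 * i.1 + (x - r) % 3, by omega⟩, ?_⟩
    apply Fin.ext
    have h1 : (r + 3 * i.1 + (x.1 - r) % 3 - r) / 3 = i := by omega
    have h2 : (r + 3 * i.1 + (x.1 - r) % 3 - r) % 3 = (x.1 - r) % 3 := by omega
    have h3 : ¬ (r + 3 * i.1 + (x.1 - r) % 3 < r) := by omega
    simp only [emb, h3, dif_neg, not_false_eq_true, h1, h2, Fin.eta, hi]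
    omega

/-- A monomial that misses a block comes from a configuration with one block less. -/
lemma zC_spec {r k : ℕ} {a b c : Fin (r + 3 * (k + 1))} (h : zC r (k + 1) a b c = true) :
    ∃ (i : Fin (k + 1)) (a' b' c' : Fin (r + 3 * k)),
      emb i.succAbove a' = a ∧ emb i.succAbove b' = b ∧ emb i.succAbove c' = c := by
  simp only [zC, Bool.not_eq_true', List.all_eq_false, List.mem_range, Bool.not_eq_true, Bool.or_eq_false_iff,
    beq_eq_false_iff_ne] at h
  obtain ⟨i, hi, ⟨ha, hb⟩, hc⟩ := h
  have key : ∀ a : Fin (r + 3 * (k + 1)), blk r a ≠ i + 1 →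
      ∃ a', emb (Fin.succAbove ⟨i, hi⟩) a' = a := by
    intro a ha
    apply mem_range_emb
    intro hr
    have hne : (⟨(a.1 - r) / 3, by omega⟩ : Fin (k + 1)) ≠ ⟨i, hi⟩ := by
      intro he
      have := congrArg Fin.val he
      simp only at this
      apply ha
      rw [blk, if_neg (by omega)]; omega
    obtain ⟨j, hj⟩ := Fin.exists_succAbove_eq hne
    exact ⟨j, by rw [hj]⟩
  obtain ⟨a', ha'⟩ := key a ha
  obtain ⟨b', hb'⟩ := key b hb
  obtain ⟨c', hc'⟩ := key c hc
  exact ⟨_, a', b', c', ha', hb', hc'⟩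

/-- The pairs of distinct blocks. -/
abbrev Pairs (m : ℕ) := {S : Finset (Fin m) // S.card = 2}

/-- The increasing enumeration of a pair of blocks. -/
def Pairs.map {m : ℕ} (S : Pairs m) : Fin 2 → Fin m := S.1.orderEmbOfFin S.2

/-- The pair of blocks given by the image of an injective map. -/
def Pairs.of {m : ℕ} (f : Fin 2 → Fin m) (hf : Function.Injective f) : Pairs m :=
  ⟨Finset.univ.image f, by rw [Finset.card_image_of_injective _ hf]; simp⟩

lemma Pairs.map_of {m : ℕ} (f : Fin 2 → Fin m) (hf : StrictMono f) :
    (Pairs.of f hf.injective).map = f :=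
  (Finset.orderEmbOfFin_unique _ (fun x => by simp [Pairs.of]) hf).symm

/-- The index type of the points: `s` in the base, `w` in each block, three in each pair of blocks. -/
abbrev Pts (s w m : ℕ) := Fin s ⊕ (Fin m × Fin w) ⊕ (Pairs m × Fin 3)

/-- The points: those of the base lie in the base coordinates, those of a block in the base and that
block, with the same coordinates for every block, and those of a pair in the base and the two blocks. -/
def blockPts {r s w m : ℕ} (b : Fin s → Fin (r + 3 * 0) → ℂ) (g : Fin w → Fin (r + 3 * 1) → ℂ)
    (P : Pairs m → Fin 3 → Fin (r + 3 * 2) → ℂ) : Pts s w m → Fin (r + 3 * m) → ℂ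
  | .inl i => push (emb (Fin.elim0 : Fin 0 → Fin m)) (b i)
  | .inr (.inl (j, i)) => push (emb fun _ : Fin 1 => j) (g i)
  | .inr (.inr (S, i)) => push (emb S.map) (P S i)

/-- The restriction of a tensor to the base and the blocks in the image of `f`. -/
def pullT {r m k : ℕ} (F : Fin (r + 3 * m) → Fin (r + 3 * m) → Fin (r + 3 * m) → ℂ)
    (f : Fin k → Fin m) : Fin (r + 3 * k) → Fin (r + 3 * k) → Fin (r + 3 * k) → ℂ :=
  fun a b c => F (emb f a) (emb f b) (emb f c)

section
variable {r s w : ℕ} (b : Fin s → Fin (r + 3 * 0) → ℂ) (k₀ : Fin s) (y : Fin (r + 3 * 0) → ℂ)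
    (z₁ z₂ z₃ : Fin (r + 3 * 0)) (g : Fin w → Fin (r + 3 * 1) → ℂ)

/-- The family `p` with the additional member `y`, at index `none`. -/
abbrev optFam {κ X : Type*} (p : κ → X) (y : X) : Option κ → X := fun o => o.elim y p

/-- The condition on the base: the points `b`, together with the equations `F(b k₀, y, ·) = 0` and
`F z₁ z₂ z₃ = 0`, force the tensor to be zero. -/
def BaseOK : Prop :=
  Nondeg (fun a b c => a = z₁ ∧ b = z₂ ∧ c = z₃) (optFam b (b k₀)) (optFam b y)

/-- The condition on the base and one block, for tensors whose restriction to the base is zero. -/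
def BlockOK : Prop :=
  Nondeg (K := ℂ) (fun a b c : Fin (r + 3 * 1) => zC r 1 a b c = true)
    (Sum.elim (fun o => push (emb Fin.elim0) (optFam b (b k₀) o)) g)
    (Sum.elim (fun o => push (emb Fin.elim0) (optFam b y o)) g)

/-- The points that live on the base and two blocks. -/
def pairVec (P : Fin 3 → Fin (r + 3 * 2) → ℂ) : Fin s ⊕ (Fin 2 × Fin w) ⊕ Fin 3 →
    Fin (r + 3 * 2) → ℂ :=
  Sum.elim (fun i => push (emb Fin.elim0) (b i))
    (Sum.elim (fun x => push (emb fun _ : Fin 1 => x.1) (g x.2)) P)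

/-- The condition on two blocks, for tensors supported on monomials that involve both of them. -/
def PairOK (P : Fin 3 → Fin (r + 3 * 2) → ℂ) : Prop :=
  Nondeg (fun a b c : Fin (r + 3 * 2) => zC r 2 a b c = true) (pairVec b g P) (pairVec b g P)

/-- The points that live on the three pairs among three blocks; the first index is the block left
out. -/
def tripVec {R : Type*} [AddCommMonoid R] {r : ℕ} (T : Fin 3 → Fin 3 → Fin (r + 3 * 2) → R) :
    Fin 3 × Fin 3 → Fin (r + 3 * 3) → R :=
  fun x => push (emb (Fin.succAbove x.1)) (T x.1 x.2)

/-- The condition on three blocks, for tensors supported on monomials with one variable from each. -/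
def TripleOK {r : ℕ} (T : Fin 3 → Fin 3 → Fin (r + 3 * 2) → ℂ) : Prop :=
  Nondeg (fun a b c : Fin (r + 3 * 3) => zC r 3 a b c = true) (tripVec T) (tripVec T)

variable {b k₀ y z₁ z₂ z₃ g}
/-- Assembly of the four conditions. A monomial of degree three involves at most three blocks, so the
tensor is shown to vanish on the base, then on one, two and three blocks, each time on the monomials
that do not come from fewer blocks. -/
lemma star_of_OK {m : ℕ} (hbase : BaseOK b k₀ y z₁ z₂ z₃) (hblock : BlockOK b k₀ y g)
    (P : Pairs m → Fin 3 → Fin (r + 3 * 2) → ℂ) (hpair : ∀ S, PairOK b g (P S))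
    (htrip : ∀ (f : Fin 3 → Fin m) (hf : StrictMono f), TripleOK fun q =>
      P (Pairs.of (f ∘ q.succAbove) (hf.comp (Fin.strictMono_succAbove q)).injective)) :
    Nondeg (fun a b c : Fin (r + 3 * m) => a = emb Fin.elim0 z₁ ∧ b = emb Fin.elim0 z₂ ∧
        c = emb Fin.elim0 z₃)
      (optFam (blockPts b g P) (blockPts b g P (Sum.inl k₀)))
      (optFam (blockPts b g P) (push (emb Fin.elim0) y)) := by
  intro F hF hz hc
  have psym : ∀ {k : ℕ} (f : Fin k → Fin m), IsSym (pullT F f) := fun f =>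
    ⟨fun _ _ _ => hF.1 _ _ _, fun _ _ _ => hF.2 _ _ _⟩
  have pcon : ∀ {k l : ℕ} (f : Fin k → Fin m) (h : Fin l → Fin k) (u v : Fin (r + 3 * l) → ℂ)
      (x : Fin (r + 3 * k)), con (pullT F f) (push (emb h) u) (push (emb h) v) x =
        con F (push (emb (f ∘ h)) u) (push (emb (f ∘ h)) v) (emb f x) := by
    intro k l f h u v x
    rw [← emb_comp, ← push_push, ← push_push]
    exact (con_push F (emb f) _ _ x).symm
  have pcon' : ∀ {k : ℕ} (f : Fin k → Fin m) (u v : Fin (r + 3 * k) → ℂ)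
      (x : Fin (r + 3 * k)), con (pullT F f) u v x =
        con F (push (emb f) u) (push (emb f) v) (emb f x) := by
    intro k f u v x
    exact (con_push F (emb f) u v x).symm
  have e0 : ∀ f : Fin 0 → Fin m, f = Fin.elim0 := fun f => Subsingleton.elim _ _
  have step : ∀ {k : ℕ} (f : Fin (k + 1) → Fin m), (∀ i : Fin (k + 1), pullT F (f ∘ i.succAbove) = 0) →
      ∀ a b c : Fin (r + 3 * (k + 1)), zC r (k + 1) a b c = true → pullT F f a b c = 0 := by
    intro k f h a b c hz
    obtain ⟨i, a', b', c', rfl, rfl, rfl⟩ := zC_spec hz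
    have := congrFun (congrFun (congrFun (h i) a') b') c'
    simp only [pullT, ← emb_comp] at this
    exact this
  have L0 : ∀ f : Fin 0 → Fin m, pullT F f = 0 := by
    intro f
    apply hbase _ (psym f)
    · rintro _ _ _ ⟨rfl, rfl, rfl⟩
      rw [e0 f]
      exact hz _ _ _ ⟨rfl, rfl, rfl⟩
    · intro o l
      rw [pcon', e0 f]
      cases o with
      | none => exact hc none _
      | some i => exact hc (some (Sum.inl i)) _
  have L1 : ∀ f : Fin 1 → Fin m, pullT F f = 0 := by
    intro f
    apply hblock _ (psym f)
    · exact step f fun i => L0 _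
    · rintro (o | i) l
      · simp only [Sum.elim_inl]
        rw [pcon, e0 (f ∘ _)]
        cases o with
        | none => exact hc none _
        | some i => exact hc (some (Sum.inl i)) _
      · simp only [Sum.elim_inr]
        rw [pcon']
        have : f = fun _ => f 0 := by funext j; rw [Subsingleton.elim j 0]
        rw [this]
        exact hc (some (Sum.inr (Sum.inl (f 0, i)))) _
  have L2 : ∀ f : Fin 2 → Fin m, StrictMono f → pullT F f = 0 := by
    intro f hf
    have hf' := Pairs.map_of f hf
    apply hpair (Pairs.of f hf.injective) _ (psym f)
    · exact step f fun i => L1 _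
    · rintro (i | ⟨j, i⟩ | i) l
      · simp only [pairVec, Sum.elim_inl]
        rw [pcon, e0 (f ∘ _)]
        exact hc (some (Sum.inl i)) _
      · simp only [pairVec, Sum.elim_inl, Sum.elim_inr]
        rw [pcon]
        exact hc (some (Sum.inr (Sum.inl (f j, i)))) _
      · simp only [pairVec, Sum.elim_inr]
        rw [pcon']
        have := hc (some (Sum.inr (Sum.inr (Pairs.of f hf.injective, i)))) (emb f l)
        simp only [optFam, Option.elim, blockPts, hf'] at this
        exact this
  have L3 : ∀ f : Fin 3 → Fin m, StrictMono f → pullT F f = 0 := by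
    intro f hf
    apply htrip f hf _ (psym f)
    · exact step f fun i => L2 _ (hf.comp (Fin.strictMono_succAbove i))
    · rintro ⟨q, i⟩ l
      simp only [tripVec]
      rw [pcon]
      have hf2 := hf.comp (Fin.strictMono_succAbove q)
      have := hc (some (Sum.inr (Sum.inr (Pairs.of _ hf2.injective, i)))) (emb f l)
      simp only [optFam, Option.elim, blockPts, Pairs.map_of _ hf2] at this
      exact this
  funext x y z
  classical
  -- the blocks of `x`, `y`, `z`
  let S : Finset (Fin m) := Finset.univ.filter fun i =>
    blk r x = i + 1 ∨ blk r y = i + 1 ∨ blk r z = i + 1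
  have hS : S.card ≤ 3 := by
    have : S.image (fun i => i.1 + 1) ⊆ {blk r x, blk r y, blk r z} := by
      intro i hi
      obtain ⟨j, hj, rfl⟩ := Finset.mem_image.1 hi
      have := (Finset.mem_filter.1 hj).2
      simp only [Finset.mem_insert, Finset.mem_singleton]
      tauto
    have h2 := Finset.card_le_card this
    rw [Finset.card_image_of_injective _ (fun i j h => Fin.ext (by simpa using h))] at h2
    exact h2.trans Finset.card_le_three
  have hmem : ∀ x : Fin (r + 3 * m), (∀ i : Fin m, blk r x = i + 1 → i ∈ S) →
      ∃ x', emb (S.orderEmbOfFin rfl) x' = x := by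
    intro x hx
    apply mem_range_emb
    intro hr
    have h1 := hx ⟨(x.1 - r) / 3, by omega⟩ (by rw [blk, if_neg (by omega)])
    have h2 : (⟨(x.1 - r) / 3, by omega⟩ : Fin m) ∈ Set.range (S.orderEmbOfFin rfl) := by
      rw [Finset.range_orderEmbOfFin]; exact h1
    obtain ⟨i, hi⟩ := h2
    exact ⟨i, by rw [hi]⟩
  obtain ⟨x', hx⟩ := hmem x fun i hi => Finset.mem_filter.2 ⟨Finset.mem_univ _, by tauto⟩
  obtain ⟨y', hy⟩ := hmem y fun i hi => Finset.mem_filter.2 ⟨Finset.mem_univ _, by tauto⟩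
  obtain ⟨z', hz⟩ := hmem z fun i hi => Finset.mem_filter.2 ⟨Finset.mem_univ _, by tauto⟩
  have hmono := (S.orderEmbOfFin rfl).strictMono
  have fin : ∀ k ≤ 3, ∀ f : Fin k → Fin m, StrictMono f → pullT F f = 0 := by
    intro k hk f hf
    interval_cases k
    exacts [L0 f, L1 f, L2 f hf, L3 f hf]
  have := congrFun (congrFun (congrFun (fin _ hS _ hmono) x') y') z'
  rw [← hx, ← hy, ← hz]
  exact this

/-- The points of the pairs can be chosen such that all pair and triple conditions hold together: each
is open and nonempty, and a product of nonzero polynomials is nonzero. -/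
lemma exists_params (m : ℕ) (hpair : ∃ P, PairOK b g P) (htrip : ∃ T, TripleOK (r := r) T) :
    ∃ P : Pairs m → Fin 3 → Fin (r + 3 * 2) → ℂ, (∀ S, PairOK b g (P S)) ∧
    (∀ (f : Fin 3 → Fin m) (hf : StrictMono f), TripleOK fun q =>
      P (Pairs.of (f ∘ q.succAbove) (hf.comp (Fin.strictMono_succAbove q)).injective)) := by
  classical
  obtain ⟨P₀, hP₀⟩ := hpair
  obtain ⟨T₀, hT₀⟩ := htrip
  -- the nondegeneracy of pairs is open
  let B : Fin s ⊕ (Fin 2 × Fin w) ⊕ Fin 3 → Fin (r + 3 * 2) →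
      MvPolynomial (Fin 3 × Fin (r + 3 * 2)) ℂ :=
    Sum.elim (fun i x => C (push (emb Fin.elim0) (b i) x))
      (Sum.elim (fun y x => C (push (emb fun _ : Fin 1 => y.1) (g y.2) x)) fun i x => X (i, x))
  have hB : ∀ t : Fin 3 × Fin (r + 3 * 2) → ℂ,
      (fun γ x => eval t (B γ x)) = pairVec b g fun i x => t (i, x) := by
    intro t
    funext γ x
    rcases γ with i | y | i <;> simp [B, pairVec]
  obtain ⟨D₂, hD₂, hD₂'⟩ := nondeg_open _ B B (fun x => P₀ x.1 x.2) (by rw [hB]; exact hP₀)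
  let T : Fin 3 × Fin 3 → Fin (r + 3 * 3) →
      MvPolynomial (Fin 3 × (Fin 3 × Fin (r + 3 * 2))) ℂ :=
    tripVec fun q i x => X (q, (i, x))
  have hT : ∀ t : Fin 3 × (Fin 3 × Fin (r + 3 * 2)) → ℂ,
      (fun γ x => eval t (T γ x)) = tripVec fun q i x => t (q, (i, x)) := by
    intro t
    funext γ
    simp only [T, tripVec]
    rw [push_map]
    simp
  obtain ⟨D₃, hD₃, hD₃'⟩ := nondeg_open _ T T (fun x => T₀ x.1 x.2.1 x.2.2)
    (by rw [hT]; exact hT₀)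
  let pr : {f : Fin 3 → Fin m // StrictMono f} → Fin 3 → Pairs m := fun f q =>
    Pairs.of (f.1 ∘ q.succAbove) (f.2.comp (Fin.strictMono_succAbove q)).injective
  have hpr : ∀ f, Function.Injective (pr f) := by
    intro f q q' h
    by_contra hne
    have h1 : f.1 q ∉ (pr f q).1 := by
      simp only [pr, Pairs.of, Finset.mem_image, not_exists, Finset.mem_univ, true_and, Function.comp]
      intro x hx
      exact Fin.succAbove_ne q x (f.2.injective hx)
    apply h1
    rw [h]
    obtain ⟨x, hx⟩ := Fin.exists_succAbove_eq hne
    simp only [pr, Pairs.of, Finset.mem_image, Finset.mem_univ, true_and, Function.comp]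
    exact ⟨x, by rw [hx]⟩
  let G : MvPolynomial (Pairs m × (Fin 3 × Fin (r + 3 * 2))) ℂ :=
    (∏ S : Pairs m, rename (fun x => (S, x)) D₂) *
      ∏ f : {f : Fin 3 → Fin m // StrictMono f}, rename (fun x => (pr f x.1, x.2)) D₃
  have ne0 : ∀ {σ : Type} {D : MvPolynomial σ ℂ} {t : σ → ℂ}, eval t D ≠ 0 → D ≠ 0 := by
    rintro σ D t h rfl
    simp at h
  have hG : G ≠ 0 := by
    refine mul_ne_zero (Finset.prod_ne_zero_iff.2 fun S _ => ?_)
      (Finset.prod_ne_zero_iff.2 fun f _ => ?_)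
    · rw [Ne, (map_eq_zero_iff _ (rename_injective _ (Prod.mk_right_injective S)))]
      exact ne0 hD₂
    · rw [Ne, (map_eq_zero_iff _ (rename_injective _ ?_))]
      · exact ne0 hD₃
      · rintro ⟨q, x⟩ ⟨q', x'⟩ h
        simp only [Prod.mk.injEq] at h ⊢
        exact ⟨hpr f h.1, h.2⟩
  obtain ⟨t, ht⟩ : ∃ t, eval t G ≠ 0 := by
    by_contra! h
    exact hG (MvPolynomial.funext fun t => by simpa using h t)
  rw [map_mul, map_prod, map_prod] at ht
  have ht2 := Finset.prod_ne_zero_iff.1 (left_ne_zero_of_mul ht)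
  have ht3 := Finset.prod_ne_zero_iff.1 (right_ne_zero_of_mul ht)
  refine ⟨fun S i x => t (S, (i, x)), fun S => ?_, fun f hf => ?_⟩
  · have := ht2 S (Finset.mem_univ _)
    rw [eval_rename] at this
    have := hD₂' (eval _) this
    rwa [hB] at this
  · have := ht3 ⟨f, hf⟩ (Finset.mem_univ _)
    rw [eval_rename] at this
    have := hD₃' (eval _) this
    rwa [hT] at this

/-- There are complex points `p` with a marked one `p k₀`, a vector `y` and a coordinate triple for
which zero is the only symmetric tensor with `F(p k, p k, ·) = 0` for all `k`, with
`F(p k₀, y, ·) = 0` and with `F z₁ z₂ z₃ = 0`. -/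
def StarExists (ι κ : Type) [Fintype ι] : Prop :=
  ∃ (p : κ → ι → ℂ) (k₀ : κ) (y : ι → ℂ) (z₁ z₂ z₃ : ι),
    Nondeg (fun a b c => a = z₁ ∧ b = z₂ ∧ c = z₃) (optFam p (p k₀)) (optFam p y)

lemma starExists_of_OK (m : ℕ) (hbase : BaseOK b k₀ y z₁ z₂ z₃) (hblock : BlockOK b k₀ y g)
    (hpair : ∃ P, PairOK b g P) (htrip : ∃ T, TripleOK (r := r) T) :
    StarExists (Fin (r + 3 * m)) (Pts s w m) := by
  obtain ⟨P, h1, h2⟩ := exists_params m hpair htrip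
  exact ⟨_, _, _, _, _, _, star_of_OK hbase hblock P h1 h2⟩

end

lemma card_pts (s w m : ℕ) : Fintype.card (Pts s w m) = s + m * w + m.choose 2 * 3 := by
  simp [Fintype.card_finset_len, add_assoc]

/-! ### Integer certificates -/

section Certificates

lemma nondeg_of_check {N : ℕ} (hN : N < 100) {Γ : Type*} {K : Type*} [Field K] [CharZero K]
    {Z : Fin N → Fin N → Fin N → Prop} {z : ℕ → ℕ → ℕ → Bool} {u v : Γ → Fin N → K}
    (G : List Γ) (U V : Γ → List ℤ) (hU : ∀ γ, u γ = vec K (U γ)) (hV : ∀ γ, v γ = vec K (V γ))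
    (hZ : ∀ F : Fin N → Fin N → Fin N → K, IsSym F → (∀ a b c, Z a b c → F a b c = 0) →
      ∀ a b c : Fin N, z a b c = true → F a b c = 0)
    (h : check N z (G.map fun γ => (U γ, V γ)) = true) : Nondeg Z u v := by
  intro F hF hz hc
  refine check_spec hN h hF (hZ F hF hz) ?_
  intro p hp l
  obtain ⟨γ, -, rfl⟩ := List.mem_map.1 hp
  rw [← hU, ← hV]
  exact hc γ l

/-- The push-forward `push` on lists of integer coordinates. -/
def pushZ {M N : ℕ} (e : Fin M → Fin N) (l : List ℤ) : List ℤ :=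
  List.ofFn fun x => ((List.finRange M).map fun a => if e a = x then vecZ l a else 0).sum

lemma push_vec {M N : ℕ} {K : Type*} [Field K] (e : Fin M → Fin N) (l : List ℤ) :
    push e (vec K l) = vec K (pushZ e l) := by
  funext x
  have : vecZ (pushZ e l) x = ∑ a, if e a = x then vecZ l a else 0 := by
    simp [vecZ, pushZ, Fin.sum_univ_def]
  rw [vec, this, push, Int.cast_sum]
  refine Finset.sum_congr rfl fun a _ => ?_
  split_ifs <;> simp [vec]

/-- The `i`-th vector in a list of integer vectors. -/
def nth (L : List (List ℤ)) {s : ℕ} (i : Fin s) : List ℤ := L.getD i []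

variable (r s w : ℕ) (b g P : List (List ℤ)) (y : List ℤ) (k₀ : Fin s)

/-- The complex base points with integer coordinates `b`. -/
noncomputable def bC : Fin s → Fin (r + 3 * 0) → ℂ := fun i => vec ℂ (nth b i)
/-- The complex vector with integer coordinates `y`. -/
noncomputable def yC : Fin (r + 3 * 0) → ℂ := vec ℂ y
/-- The complex points of a block with integer coordinates `g`. -/
noncomputable def gC : Fin w → Fin (r + 3 * 1) → ℂ := fun i => vec ℂ (nth g i)
/-- The complex points of a pair of blocks with integer coordinates `P`. -/
noncomputable def PC : Fin 3 → Fin (r + 3 * 2) → ℂ := fun i => vec ℂ (nth P i)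

/-- The triple `a, b, c` contains each of `i, j, k`; for distinct `i, j, k` it is a permutation of
them. -/
def zBase (i j k a b c : ℕ) : Bool := [i, j, k].all fun x => a == x || b == x || c == x

/-- The certificate for `BaseOK`. -/
def baseCheck (z₁ z₂ z₃ : ℕ) : Bool :=
  check (r + 3 * 0) (zBase z₁ z₂ z₃) (((List.finRange s).map some ++ [none]).map
    fun o => (optFam (nth b) (nth b k₀) o, optFam (nth b) y o))

/-- The certificate for `BlockOK`. -/
def blockCheck : Bool :=
  check (r + 3 * 1) (zC r 1)
    (((List.finRange s).map (fun i => Sum.inl (some i)) ++ (List.finRange w).map Sum.inr ++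
      [Sum.inl none]).map fun γ : Option (Fin s) ⊕ Fin w =>
    (Sum.elim (fun o => pushZ (emb (r := r) (m := 1) Fin.elim0) (optFam (nth b) (nth b k₀) o))
      (nth g) γ,
     Sum.elim (fun o => pushZ (emb (r := r) (m := 1) Fin.elim0) (optFam (nth b) y o)) (nth g) γ))

/-- The integer coordinates of `pairVec`. -/
def pairU : Fin s ⊕ (Fin 2 × Fin w) ⊕ Fin 3 → List ℤ :=
  Sum.elim (fun i => pushZ (emb (r := r) (m := 2) Fin.elim0) (nth b i))
    (Sum.elim (fun x => pushZ (emb (r := r) fun _ : Fin 1 => x.1) (nth g x.2)) (nth P))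

/-- The certificate for `PairOK`. -/
def pairCheck : Bool :=
  check (r + 3 * 2) (zC r 2)
    (((List.finRange s).map Sum.inl ++
      (List.finRange w).map (fun i => Sum.inr (Sum.inl ((0 : Fin 2), i))) ++
      (List.finRange w).map (fun i => Sum.inr (Sum.inl ((1 : Fin 2), i))) ++
      (List.finRange 3).map (fun i => Sum.inr (Sum.inr i))).map
      fun γ : Fin s ⊕ (Fin 2 × Fin w) ⊕ Fin 3 => (pairU r s w b g P γ, pairU r s w b g P γ))

/-- The certificate for `TripleOK`. -/
def tripCheck (T : Fin 3 → List (List ℤ)) : Bool :=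
  check (r + 3 * 3) (zC r 3)
    (((List.finRange 3).flatMap fun q => (List.finRange 3).map fun i => (q, i)).map
      fun γ : Fin 3 × Fin 3 => (pushZ (emb (r := r) (Fin.succAbove γ.1)) (nth (T γ.1) γ.2),
        pushZ (emb (r := r) (Fin.succAbove γ.1)) (nth (T γ.1) γ.2)))

variable {r s w b g P y k₀}

lemma baseOK_of_check (hr : r + 3 * 0 < 100) {z₁ z₂ z₃ : Fin (r + 3 * 0)}
    (hd : z₁ ≠ z₂ ∧ z₂ ≠ z₃ ∧ z₁ ≠ z₃)
    (h : baseCheck r s b y k₀ z₁ z₂ z₃ = true) :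
    BaseOK (bC r s b) k₀ (yC r y) z₁ z₂ z₃ := by
  refine nondeg_of_check hr _ _ _ ?_ ?_ ?_ h
  · rintro (_ | i) <;> rfl
  · rintro (_ | i) <;> rfl
  · intro F hF hz a b c h
    have h0 := hz _ _ _ ⟨rfl, rfl, rfl⟩
    obtain ⟨s1, s2⟩ := hF
    simp only [zBase, List.all_cons, List.all_nil, Bool.and_true, Bool.and_eq_true,
      Bool.or_eq_true, beq_iff_eq, Fin.val_inj] at h
    have f1 : F a b c = F b a c := s1 _ _ _
    have f2 : F a b c = F a c b := s2 _ _ _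
    have f3 : F b a c = F b c a := s2 _ _ _
    have f4 : F a c b = F c a b := s1 _ _ _
    have f5 : F c a b = F c b a := s2 _ _ _
    obtain ⟨h1, h2, h3⟩ := h
    obtain ⟨d1, d2, d3⟩ := hd
    clear hz s1 s2
    grind

lemma blockOK_of_check (hr : r + 3 * 1 < 100)
    (h : blockCheck r s w b g y k₀ = true) :
    BlockOK (bC r s b) k₀ (yC r y) (gC r w g) := by
  refine nondeg_of_check hr _ _ _ ?_ ?_ (fun F _ hz => hz) h
  · rintro ((_ | i) | i)
    · exact push_vec _ _
    · exact push_vec _ _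
    · rfl
  · rintro ((_ | i) | i)
    · exact push_vec _ _
    · exact push_vec _ _
    · rfl

lemma pairOK_of_check (hr : r + 3 * 2 < 100) (h : pairCheck r s w b g P = true) :
    PairOK (bC r s b) (gC r w g) (PC r P) := by
  have : ∀ γ, pairVec (bC r s b) (gC r w g) (PC r P) γ = vec ℂ (pairU r s w b g P γ) := by
    rintro (i | i | i)
    · exact push_vec _ _
    · exact push_vec _ _
    · rfl
  exact nondeg_of_check hr _ _ _ this this (fun F _ hz => hz) h

lemma tripleOK_of_check (hr : r + 3 * 3 < 100) {T : Fin 3 → List (List ℤ)}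
    (h : tripCheck r T = true) :
    TripleOK fun q => PC r (T q) := by
  have : ∀ γ, tripVec (fun q => PC r (T q)) γ =
    vec ℂ (pushZ (emb (r := r) (Fin.succAbove γ.1)) (nth (T γ.1) γ.2)) := fun γ => push_vec _ _
  exact nondeg_of_check hr _ _ _ this this (fun F _ hz => hz) h

/-- The integer points used on the pairs among three blocks, with zero base coordinates; `q` is the
block left out. -/
def trip (r : ℕ) (q : Fin 3) : List (List ℤ) :=
  (([[[1,0,0,0,-1,1],[1,1,0,1,0,0],[0,1,0,0,-1,0]],
    [[0,0,-1,1,0,1],[1,0,1,0,0,-1],[1,0,0,1,1,0]],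
    [[-1,0,1,0,0,1],[0,1,0,1,-1,0],[0,1,0,0,0,-1]]] : List (List (List ℤ))).getD q []).map
    fun l => List.replicate r 0 ++ l

/-! The certificates need integer points with small entries; apart from the coordinate points and
`y4`, `b5`, `y5`, they have no special structure, any generic choice would do. -/

/-- Base points for four base coordinates. -/
def b4 : List (List ℤ) := [[1,0,0,0],[0,1,0,0],[0,0,1,0],[0,0,0,1]]
/-- The residual direction for four base coordinates. -/
def y4 : List ℤ := [0,1,1,1]
/-- Block points for four base coordinates. -/
def g4 : List (List ℤ) := [[0,0,0,0,1,0,0],[0,0,0,0,0,1,0],[0,0,0,0,0,0,1],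
  [1,0,1,0,-1,1,1],[0,-1,1,0,-1,1,0],[1,0,-1,-1,1,1,1],[0,-1,1,1,0,1,-1]]
/-- Pair points for four base coordinates. -/
def P4 : List (List ℤ) :=
  [[0,0,0,-1,1,0,1,-1,0,1],[0,0,0,0,1,1,0,-1,0,-1],[1,0,0,0,0,1,1,0,-1,-1]]

lemma starExists_four (m : ℕ) : StarExists (Fin (4 + 3 * m)) (Pts 4 7 m) :=
  starExists_of_OK (b := bC 4 4 b4) (g := gC 4 7 g4) (k₀ := 0) (y := yC 4 y4)
    (z₁ := 1) (z₂ := 2) (z₃ := 3) m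
    (baseOK_of_check (by norm_num) (by decide) (by decide +kernel))
    (blockOK_of_check (by norm_num) (by decide +kernel))
    ⟨_, pairOK_of_check (P := P4) (by norm_num) (by decide +kernel)⟩
    ⟨_, tripleOK_of_check (T := trip 4) (by norm_num) (by decide +kernel)⟩

/-! ### Existence of the points, and the generic statement -/

/-- Base points for five base coordinates. -/
def b5 : List (List ℤ) := [[1,0,0,0,0],[0,1,0,0,0],[0,0,1,0,0],[0,0,0,1,0],[0,0,0,0,1],[1,1,1,1,1]]
/-- The residual direction for five base coordinates. -/
def y5 : List ℤ := [0,1,2,3,4]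

/-- Block points for five base coordinates. -/
def g5 : List (List ℤ) := [[0,0,0,0,0,1,0,0],[0,0,0,0,0,0,1,0],[0,0,0,0,0,0,0,1],
  [-1,0,1,2,0,1,-1,0],[1,2,0,0,1,1,2,0],[1,1,2,0,0,0,1,1],[1,0,2,2,0,2,0,-1],
  [0,0,2,-1,1,-1,0,2]]
/-- Pair points for five base coordinates. -/
def P5 : List (List ℤ) :=
  [[0,0,-1,0,0,0,2,-1,2,1,2],[1,0,1,1,1,0,1,-1,1,0,1],[0,1,0,0,1,-1,0,-1,1,1,1]]

lemma starExists_five (m : ℕ) : StarExists (Fin (5 + 3 * m)) (Pts 6 8 m) :=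
  starExists_of_OK (b := bC 5 6 b5) (g := gC 5 8 g5) (k₀ := 0) (y := yC 5 y5)
    (z₁ := 1) (z₂ := 2) (z₃ := 3) m
    (baseOK_of_check (by norm_num) (by decide) (by decide +kernel))
    (blockOK_of_check (by norm_num) (by decide +kernel))
    ⟨_, pairOK_of_check (P := P5) (by norm_num) (by decide +kernel)⟩
    ⟨_, tripleOK_of_check (T := trip 5) (by norm_num) (by decide +kernel)⟩

lemma starExists_two : StarExists (Fin 2) (Fin 1) := by
  refine ⟨fun _ => vec ℂ [1, 0], 0, vec ℂ [0, 1], 1, 1, 1, ?_⟩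
  refine nondeg_of_check (z := fun a b c => a == 1 && b == 1 && c == 1) (by norm_num)
    [none, some 0] (fun _ => [1, 0]) (fun o => o.elim [0, 1] fun _ => [1, 0])
    ?_ ?_ ?_ (by decide +kernel)
  · rintro (_ | i) <;> rfl
  · rintro (_ | i) <;> rfl
  · intro F _ hz a b c h
    simp only [Bool.and_eq_true, beq_iff_eq] at h
    obtain ⟨⟨h1, h2⟩, h3⟩ := h
    exact hz _ _ _ ⟨Fin.ext h1, Fin.ext h2, Fin.ext h3⟩

lemma StarExists.reindex {ι κ κ' : Type} [Fintype ι] (h : StarExists ι κ) (e : κ' ≃ κ) :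
    StarExists ι κ' := by
  obtain ⟨p, k₀, y, z₁, z₂, z₃, h⟩ := h
  refine ⟨p ∘ e, e.symm k₀, y, z₁, z₂, z₃, fun F hF hz hc => h F hF hz ?_⟩
  rintro (_ | k) l
  · simpa using hc none l
  · simpa using hc (some (e.symm k)) l

/-- The required points exist for `n = 1`, for `n = 3 + 3m` from a base of four coordinates and for
`n = 4 + 3m` from a base of five, with `m` blocks. -/
lemma starExists (n : ℕ) (hn : 1 ≤ n) (h3 : n % 3 ≠ 2) :
    StarExists (Fin (n + 1)) (Fin ((n + 3) * (n + 2) / 6 - 1)) := by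
  obtain rfl | ⟨m, rfl⟩ | ⟨m, rfl⟩ : n = 1 ∨ (∃ m, n = 3 + 3 * m) ∨ ∃ m, n = 4 + 3 * m := by
    rcases (by omega : n = 1 ∨ (n % 3 = 0 ∧ 3 ≤ n) ∨ (n % 3 = 1 ∧ 4 ≤ n)) with h | h | h
    · exact Or.inl h
    · exact Or.inr (Or.inl ⟨(n - 3) / 3, by omega⟩)
    · exact Or.inr (Or.inr ⟨(n - 4) / 3, by omega⟩)
  · exact starExists_two
  all_goals
    have h2 : 2 * m.choose 2 + m = m * m := by
      rw [Nat.choose_two_right, Nat.mul_div_cancel' (Nat.even_mul_pred_self m).two_dvd]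
      cases m <;> simp; ring
  · have h := starExists_four m
    rw [show 4 + 3 * m = 3 + 3 * m + 1 by ring] at h
    refine h.reindex (Fintype.equivOfCardEq ?_).symm
    rw [card_pts, Fintype.card_fin,
      show (3 + 3 * m + 3) * (3 + 3 * m + 2) = 6 * (3 * m.choose 2 + 7 * m + 5) by nlinarith,
      Nat.mul_div_cancel_left _ (by norm_num)]
    omega
  · have h := starExists_five m
    rw [show 5 + 3 * m = 4 + 3 * m + 1 by ring] at h
    refine h.reindex (Fintype.equivOfCardEq ?_).symm
    rw [card_pts, Fintype.card_fin,
      show (4 + 3 * m + 3) * (4 + 3 * m + 2) = 6 * (3 * m.choose 2 + 8 * m + 7) by nlinarith,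
      Nat.mul_div_cancel_left _ (by norm_num)]
    omega

/-- Generic points satisfy the nondegeneracy with every point marked, over every field to which the
parameter ring maps. A permutation of the points moves the given mark `k₀` to any other. -/
lemma star_generic {ι κ : Type} [Fintype ι] [DecidableEq ι] [Fintype κ] [DecidableEq κ]
    (h : StarExists ι κ) :
    ∃ (y : ι → ℂ) (z₁ z₂ z₃ : ι) (D : MvPolynomial (κ × ι) ℂ), D ≠ 0 ∧
      ∀ {K : Type} [Field K] (g : MvPolynomial (κ × ι) ℂ →+* K), g D ≠ 0 → ∀ k : κ,
        Nondeg (fun a b c => a = z₁ ∧ b = z₂ ∧ c = z₃)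
          (optFam (fun k a => g (X (k, a))) (fun a => g (X (k, a))))
          (optFam (fun k a => g (X (k, a))) (fun a => g (C (y a)))) := by
  obtain ⟨p, k₀, y, z₁, z₂, z₃, h⟩ := h
  have : ∀ k : κ, ∃ D : MvPolynomial (κ × ι) ℂ, D ≠ 0 ∧
      ∀ {K : Type} [Field K] (g : MvPolynomial (κ × ι) ℂ →+* K), g D ≠ 0 →
        Nondeg (fun a b c => a = z₁ ∧ b = z₂ ∧ c = z₃)
          (optFam (fun k a => g (X (k, a))) (fun a => g (X (k, a))))
          (optFam (fun k a => g (X (k, a))) (fun a => g (C (y a)))) := by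
    intro k
    let e := Equiv.swap k k₀
    let u : Option κ → ι → MvPolynomial (κ × ι) ℂ :=
      optFam (fun k a => X (k, a)) (fun a => X (k, a))
    let v : Option κ → ι → MvPolynomial (κ × ι) ℂ :=
      optFam (fun k a => X (k, a)) (fun a => C (y a))
    obtain ⟨D, h1, h2⟩ := nondeg_open (fun a b c => a = z₁ ∧ b = z₂ ∧ c = z₃) u v
      (fun x => p (e x.1) x.2) (by
        intro F hF hz hc
        refine h F hF hz ?_
        rintro (_ | j) l
        · simpa [u, v, e] using hc none l
        · simpa [u, v, e] using hc (some (e j)) l)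
    refine ⟨D, by rintro rfl; simp at h1, ?_⟩
    intro K _ g hg F hF hz hc
    refine h2 g hg F hF hz ?_
    rintro (_ | j) l
    · exact hc none l
    · exact hc (some j) l
  choose D hD hD' using this
  refine ⟨y, z₁, z₂, z₃, ∏ k, D k, Finset.prod_ne_zero_iff.2 fun k _ => hD k, ?_⟩
  intro K _ g hg k
  rw [map_prod] at hg
  exact hD' k g (Finset.prod_ne_zero_iff.1 hg k (Finset.mem_univ _))

/-! ### Linear algebra at nondegenerate points -/

section Linear
variable {ι κ K : Type*} [Fintype ι] [DecidableEq ι] [Fintype κ] [DecidableEq κ] [Field K]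

/-- The space of symmetric tensors. -/
def symT (ι K : Type*) [Field K] : Submodule K (ι → ι → ι → K) where
  carrier := {F | IsSym F}
  add_mem' := fun {F G} hF hG => ⟨fun a b c => by simp [hF.1 a b c, hG.1 a b c],
    fun a b c => by simp [hF.2 a b c, hG.2 a b c]⟩
  zero_mem' := ⟨fun _ _ _ => rfl, fun _ _ _ => rfl⟩
  smul_mem' := fun r F hF => ⟨fun a b c => by simp [hF.1 a b c], fun a b c => by simp [hF.2 a b c]⟩

lemma le_finrank_symT : (Fintype.card ι + 2).choose 3 ≤ Module.finrank K (symT ι K) := by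
  let f : (Sym ι 3 → K) →ₗ[K] symT ι K :=
    { toFun := fun φ => ⟨fun a b c => φ (a ::ₛ b ::ₛ c ::ₛ Sym.nil),
        fun a b c => congrArg φ (Sym.cons_swap a b _),
        fun a b c => congrArg φ (congrArg (Sym.cons a) (Sym.cons_swap b c _))⟩
      map_add' := fun _ _ => rfl
      map_smul' := fun _ _ => rfl }
  have hf : Function.Injective f := by
    intro φ ψ h
    funext s
    obtain ⟨a, s, rfl⟩ := s.exists_eq_cons_of_succ
    obtain ⟨b, s, rfl⟩ := s.exists_eq_cons_of_succ
    obtain ⟨c, s, rfl⟩ := s.exists_eq_cons_of_succ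
    rw [Sym.eq_nil_of_card_zero s]
    exact congrFun (congrFun (congrFun (congrArg Subtype.val h) a) b) c
  have := LinearMap.finrank_le_finrank_of_injective hf
  rw [Module.finrank_fintype_fun_eq_card, Sym.card_sym_eq_choose] at this
  exact this

/-- The contraction as a linear map in the tensor. -/
def conL (u v : ι → K) : (ι → ι → ι → K) →ₗ[K] (ι → K) where
  toFun F := con F u v
  map_add' F G := by
    funext c; simp [con, mul_add, Finset.sum_add_distrib]
  map_smul' r F := by
    funext c; simp only [con, Pi.smul_apply, smul_eq_mul, RingHom.id_apply, Finset.mul_sum]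
    exact Finset.sum_congr rfl fun a _ => Finset.sum_congr rfl fun b _ => by ring

lemma con_rotate {F : ι → ι → ι → K} (hF : IsSym F) (u v w : ι → K) :
    ∑ c, con F u v c * w c = ∑ c, con F u w c * v c := by
  simp only [con, Finset.sum_mul]
  have h : ∀ f : ι → ι → ι → K, ∑ a, ∑ b, ∑ c, f a b c = ∑ c, ∑ b, ∑ a, f a b c := by
    intro f
    have : ∀ b, ∑ a, ∑ c, f a b c = ∑ c, ∑ a, f a b c := fun b => Finset.sum_comm
    rw [Finset.sum_comm]
    simp_rw [this]
    exact Finset.sum_comm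
  have h1 : ∀ f : ι → ι → ι → K, ∑ c, ∑ a, ∑ b, f c a b = ∑ b, ∑ a, ∑ c, f c a b := h
  rw [h1]
  refine Finset.sum_congr rfl fun b _ => Finset.sum_congr rfl fun a _ =>
    Finset.sum_congr rfl fun c _ => ?_
  rw [hF.2 a b c]
  ring

/-- The symmetric tensors with `F(p k, p k, ·) = 0` for all `k`; they correspond to the cubics singular
at all the points. -/
def SigmaS (p : κ → ι → K) : Submodule K (ι → ι → ι → K) :=
  symT ι K ⊓ ⨅ k, LinearMap.ker (conL (p k) (p k))

lemma mem_SigmaS {p : κ → ι → K} {F} : F ∈ SigmaS p ↔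
    IsSym F ∧ ∀ k l, con F (p k) (p k) l = 0 := by
  simp only [SigmaS, Submodule.mem_inf, Submodule.mem_iInf, LinearMap.mem_ker, conL, LinearMap.coe_mk,
    AddHom.coe_mk, funext_iff]
  rfl

/-- Consequences of nondegeneracy by counting dimensions. The space `SigmaS p` has dimension at least
`n + 1`, and it injects by `F ↦ (F(p k, y, ·), F z₁ z₂ z₃)` into a space of dimension `n + 1`, since
`F(p k, y, p k) = 0`. Hence this map and the evaluation at all points are surjective. -/
lemma star_conseq {p : κ → ι → K} {y : ι → K} {z₁ z₂ z₃ : ι}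
    (hstar : ∀ k, Nondeg (fun a b c => a = z₁ ∧ b = z₂ ∧ c = z₃)
      (optFam p (p k)) (optFam p y))
    (hcard : (Fintype.card κ + 1) * Fintype.card ι = (Fintype.card ι + 2).choose 3)
    (hι : 2 ≤ Fintype.card ι) (hκ : Nonempty κ) :
    Module.finrank K (SigmaS p) = Fintype.card ι ∧ (∀ k, p k ≠ 0) ∧
    (∀ φ : κ → ι → K, ∃ F, IsSym F ∧ ∀ k l, con F (p k) (p k) l = φ k l) ∧
    ∀ k x, (∀ F ∈ SigmaS p, ∑ l, con F (p k) y l * x l = 0) → ∃ c : K, x = c • p k := by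
  -- evaluation of a tensor at all points
  let Ev : symT ι K →ₗ[K] (κ → ι → K) :=
    (LinearMap.pi fun k => conL (p k) (p k)) ∘ₗ (symT ι K).subtype
  have hker : (LinearMap.ker Ev).map (symT ι K).subtype = SigmaS p := by
    ext F
    simp only [Submodule.mem_map, LinearMap.mem_ker, Subtype.exists, mem_SigmaS]
    constructor
    · rintro ⟨F, hF, h, rfl⟩
      exact ⟨hF, fun k l => congrFun (congrFun h k) l⟩
    · rintro ⟨hF, h⟩
      exact ⟨F, hF, funext fun k => funext fun l => h k l, rfl⟩
  have hkd : Module.finrank K (LinearMap.ker Ev) = Module.finrank K (SigmaS p) := by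
    rw [← hker]
    exact (Submodule.finrank_map_subtype_eq _ _).symm
  have hrn := LinearMap.finrank_range_add_finrank_ker Ev
  have hle := le_finrank_symT (ι := ι) (K := K)
  have hr : Module.finrank K (LinearMap.range Ev) ≤ Fintype.card κ * Fintype.card ι := by
    refine (Submodule.finrank_le _).trans_eq ?_
    simp [Module.finrank_pi_fintype]
  rw [hkd] at hrn
  rw [← hcard, add_mul, one_mul] at hle
  have hge : Fintype.card ι ≤ Module.finrank K (SigmaS p) := by omega
  -- the residual map
  let dot : (k : κ) → (ι → K) →ₗ[K] K := fun k => ∑ l, p k l • LinearMap.proj l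
  have hdot : ∀ k w, dot k w = ∑ l, p k l * w l := fun k w => by simp [dot]
  let A : (k : κ) → SigmaS p →ₗ[K] LinearMap.ker (dot k) := fun k =>
    (conL (p k) y ∘ₗ (SigmaS p).subtype).codRestrict _ (by
      rintro ⟨F, hF⟩
      rw [mem_SigmaS] at hF
      rw [LinearMap.mem_ker, hdot]
      have := con_rotate hF.1 (p k) y (p k)
      simp only [hF.2, zero_mul, Finset.sum_const_zero] at this
      rw [← this]
      exact Finset.sum_congr rfl fun l _ => mul_comm _ _)
  let c₀ : SigmaS p →ₗ[K] K :=
    { toFun := fun F => F.1 z₁ z₂ z₃, map_add' := fun _ _ => rfl, map_smul' := fun _ _ => rfl }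
  have hinj : ∀ k, Function.Injective ((A k).prod c₀) := by
    intro k
    rw [← LinearMap.ker_eq_bot, LinearMap.ker_eq_bot']
    rintro ⟨F, hF⟩ h
    have hF' := mem_SigmaS.1 hF
    simp only [LinearMap.prod_apply, Function.prod, Prod.mk_eq_zero] at h
    have h1 : con F (p k) y = 0 := congrArg Subtype.val h.1
    apply Subtype.ext
    apply hstar k F hF'.1
    · rintro _ _ _ ⟨rfl, rfl, rfl⟩
      exact h.2
    · rintro (_ | j) l
      · exact congrFun h1 l
      · exact hF'.2 j l
  have hp0 : ∀ k, p k ≠ 0 := by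
    intro k hk
    have : Function.Injective c₀ := by
      intro F G h
      apply hinj k
      have hA : ∀ F : SigmaS p, A k F = 0 := by
        intro F
        apply Subtype.ext
        change con F.1 (p k) y = 0
        funext c
        simp [con, hk]
      simp only [LinearMap.prod_apply, Function.prod, hA, h]
    have := LinearMap.finrank_le_finrank_of_injective this
    rw [Module.finrank_self] at this
    omega
  have hd : ∀ k, Module.finrank K (LinearMap.ker (dot k)) + 1 = Fintype.card ι := by
    intro k
    obtain ⟨a, ha⟩ : ∃ a, p k a ≠ 0 := by
      by_contra! h
      exact hp0 k (funext h)
    have hne : dot k ≠ 0 := by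
      intro h
      have := hdot k (Pi.single a 1)
      rw [h] at this
      simp [Pi.single_apply] at this
      exact ha this.symm
    have := LinearMap.finrank_range_add_finrank_ker (dot k)
    rw [LinearMap.range_eq_top.2 (LinearMap.surjective hne), finrank_top, Module.finrank_self,
      Module.finrank_fintype_fun_eq_card] at this
    omega
  have heq : Module.finrank K (SigmaS p) = Fintype.card ι := by
    obtain ⟨k⟩ := hκ
    have := LinearMap.finrank_le_finrank_of_injective (hinj k)
    rw [Module.finrank_prod, Module.finrank_self, hd k] at this
    omega
  refine ⟨heq, hp0, ?_, ?_⟩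
  · have : LinearMap.range Ev = ⊤ := by
      apply Submodule.eq_top_of_finrank_eq
      have h2 : Module.finrank K (κ → ι → K) = Fintype.card κ * Fintype.card ι := by
        simp [Module.finrank_pi_fintype]
      omega
    intro φ
    obtain ⟨F, hF⟩ := LinearMap.range_eq_top.1 this φ
    exact ⟨F.1, F.2, fun k l => congrFun (congrFun hF k) l⟩
  · intro k x hx
    have hsurj : Function.Surjective ((A k).prod c₀) := by
      refine (LinearMap.injective_iff_surjective_of_finrank_eq_finrank ?_).1 (hinj k)
      rw [Module.finrank_prod, Module.finrank_self, hd k, heq]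
    obtain ⟨a, ha⟩ : ∃ a, p k a ≠ 0 := by
      by_contra! h
      exact hp0 k (funext h)
    have key : ∀ b, p k a * x b = p k b * x a := by
      intro b
      let w : ι → K := p k a • Pi.single b 1 - p k b • Pi.single a 1
      have hw : w ∈ LinearMap.ker (dot k) := by
        rw [LinearMap.mem_ker]
        simp only [w, hdot]
        simp [Pi.single_apply, mul_sub, Finset.sum_sub_distrib]
        ring
      obtain ⟨F, hF⟩ := hsurj (⟨w, hw⟩, 0)
      have h1 : con F.1 (p k) y = w := congrArg (fun t => (t.1 : ι → K)) hF
      have := hx F.1 F.2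
      rw [h1] at this
      simp only [w, Pi.sub_apply, Pi.smul_apply, smul_eq_mul, sub_mul, Finset.sum_sub_distrib,
        Pi.single_apply, mul_ite, ite_mul, mul_one, mul_zero, zero_mul, Finset.sum_ite_eq',
        Finset.mem_univ, if_true] at this
      exact sub_eq_zero.1 this
    refine ⟨x a / p k a, funext fun b => ?_⟩
    simp only [Pi.smul_apply, smul_eq_mul]
    field_simp
    rw [mul_comm (x a)]
    linear_combination key b
end Linear

/-! ### Cubics as symmetric tensors -/

section Cubics
variable {n : ℕ} {κ : Type} [Fintype κ] [DecidableEq κ]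

/-- The cubic form of a tensor. -/
noncomputable def cubic (F : Fin (n + 1) → Fin (n + 1) → Fin (n + 1) → ℂ) : MvPolynomial (Fin (n + 1)) ℂ :=
  ∑ a, ∑ b, ∑ c, C (F a b c) * (X a * X b * X c)

/-- `cubic` as a linear map. -/
noncomputable def cubicL : (Fin (n + 1) → Fin (n + 1) → Fin (n + 1) → ℂ) →ₗ[ℂ] MvPolynomial (Fin (n + 1)) ℂ where
  toFun := cubic
  map_add' F G := by
    simp [cubic, add_mul, Finset.sum_add_distrib]
  map_smul' r F := by
    simp [cubic, smul_eq_C_mul, Finset.mul_sum, mul_assoc]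

lemma cubic_homogeneous (F : Fin (n + 1) → Fin (n + 1) → Fin (n + 1) → ℂ) : (cubic F).IsHomogeneous 3 := by
  refine IsHomogeneous.sum _ _ _ fun a _ => IsHomogeneous.sum _ _ _ fun b _ =>
    IsHomogeneous.sum _ _ _ fun c _ => ?_
  have h := ((isHomogeneous_C (Fin (n + 1)) (F a b c)).mul
    (((isHomogeneous_X ℂ a).mul (isHomogeneous_X ℂ b)).mul (isHomogeneous_X ℂ c)))
  exact h

lemma evalPDeriv_cubic_s8 {F : Fin (n + 1) → Fin (n + 1) → Fin (n + 1) → ℂ}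
    (hF : IsSym F) (q : Fin (n + 1) → ℂ) (l : Fin (n + 1)) :
    evalPDeriv q l (cubic F) = 3 * con F q q l := by
  have h : evalPDeriv q l (cubic F) = ∑ a, ∑ b, ∑ c, F a b c *
      ((if a = l then 1 else 0) * q b * q c + q a * (if b = l then 1 else 0) * q c
        + q a * q b * (if c = l then 1 else 0)) := by
    simp only [evalPDeriv, evalAt, cubic, LinearMap.comp_apply, Derivation.coeFn_coe,
      AlgHom.toLinearMap_apply, map_sum, pderiv_C, map_zero, zero_mul, zero_add, pderiv_mul, pderiv_X, map_mul, map_add,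
      aeval_X, algHom_C, Algebra.algebraMap_self, RingHom.id_apply]
    refine Finset.sum_congr rfl fun a _ => Finset.sum_congr rfl fun b _ =>
      Finset.sum_congr rfl fun c _ => ?_
    simp only [Pi.single_apply, apply_ite (aeval q), map_one, map_zero]
    ring
  rw [h]
  simp only [mul_add, Finset.sum_add_distrib]
  have h1 : ∑ a, ∑ b, ∑ c, F a b c * ((if a = l then 1 else 0) * q b * q c) = con F q q l := by
    rw [Finset.sum_eq_single l (by intro b _ hb; simp [hb]) (by simp)]
    refine Finset.sum_congr rfl fun a _ => Finset.sum_congr rfl fun b _ => ?_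
    rw [← hF.2 a l b, ← hF.1 l a b]; simp; ring
  have h2 : ∑ a, ∑ b, ∑ c, F a b c * (q a * (if b = l then 1 else 0) * q c) = con F q q l := by
    refine Finset.sum_congr rfl fun a _ => ?_
    rw [Finset.sum_eq_single l (by intro b _ hb; simp [hb]) (by simp)]
    refine Finset.sum_congr rfl fun b _ => ?_
    rw [← hF.2 a l b]; simp; ring
  have h3 : ∑ a, ∑ b, ∑ c, F a b c * (q a * q b * (if c = l then 1 else 0)) = con F q q l := by
    refine Finset.sum_congr rfl fun a _ => Finset.sum_congr rfl fun b _ => ?_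
    rw [Finset.sum_eq_single l (by intro b _ hb; simp [hb]) (by simp)]
    simp; ring
  rw [h1, h2, h3]
  ring

lemma con_add_self {ι K : Type*} [Fintype ι] [Field K] {F : ι → ι → ι → K} (hF : IsSym F)
    (u v : ι → K) (l : ι) :
    con F (u + v) (u + v) l = con F u u l + 2 * con F u v l + con F v v l := by
  have h : con F v u l = con F u v l := by
    rw [con, con, Finset.sum_comm]
    refine Finset.sum_congr rfl fun a _ => Finset.sum_congr rfl fun b _ => ?_
    rw [hF.1 a b l]; ring
  have h2 : con F (u + v) (u + v) l = con F u u l + con F u v l + con F v u l + con F v v l := by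
    simp only [con, Pi.add_apply, add_mul, mul_add, Finset.sum_add_distrib]
    ring
  rw [h2, h]; ring

/-- Polarisation: a symmetric tensor is determined by its values `F(q, q, ·)`. -/
lemma eq_zero_of_con_self {ι K : Type*} [Fintype ι] [DecidableEq ι] [Field K] [CharZero K] {F : ι → ι → ι → K}
    (hF : IsSym F) (h : ∀ q l, con F q q l = 0) : F = 0 := by
  funext a b c
  have h1 := con_add_self hF (Pi.single a 1) (Pi.single b 1) c
  rw [h, h, h] at h1
  have : con F (Pi.single a 1) (Pi.single b 1) c = F a b c := by
    simp [con, Pi.single_apply]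
  rw [this] at h1
  simpa using h1.symm

/-- Partial derivatives commute. -/
lemma pderiv_comm' (i j : Fin (n + 1)) (f : MvPolynomial (Fin (n + 1)) ℂ) :
    pderiv i (pderiv j f) = pderiv j (pderiv i f) := by
  have : ⁅(pderiv i : Derivation ℂ (MvPolynomial (Fin (n + 1)) ℂ) (MvPolynomial (Fin (n + 1)) ℂ)),
      (pderiv j : Derivation ℂ (MvPolynomial (Fin (n + 1)) ℂ) (MvPolynomial (Fin (n + 1)) ℂ))⁆ = 0 := by
    apply derivation_ext
    intro k
    rw [Derivation.commutator_apply]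
    simp only [pderiv_X, Pi.single_apply]
    split_ifs <;> simp
  have h := congrArg (fun D => D f) this
  simp only [Derivation.commutator_apply] at h
  exact sub_eq_zero.1 h

/-- Every cubic form comes from the symmetric tensor of its third derivatives, by Euler's identity
applied three times. -/
lemma exists_cubic {f : MvPolynomial (Fin (n + 1)) ℂ} (hf : f.IsHomogeneous 3) :
    ∃ F, IsSym F ∧ cubic F = f := by
  let F : Fin (n + 1) → Fin (n + 1) → Fin (n + 1) → ℂ := fun a b c => coeff 0 (pderiv a (pderiv b (pderiv c f))) / 6
  refine ⟨F, ⟨fun a b c => ?_, fun a b c => ?_⟩, ?_⟩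
  · simp only [F]; rw [pderiv_comm']
  · simp only [F]; rw [pderiv_comm' b c]
  · have h0 : ∀ a b c, pderiv a (pderiv b (pderiv c f)) = C (6 * F a b c) := by
      intro a b c
      have : (pderiv a (pderiv b (pderiv c f))).IsHomogeneous 0 := ((hf.pderiv).pderiv).pderiv
      simp only [F]
      rw [mul_div_cancel₀ _ (by norm_num)]
      exact totalDegree_eq_zero_iff_eq_C.1 ((totalDegree_zero_iff_isHomogeneous _).2 this)
    have h1 : ∀ a b, ∑ c, X c * pderiv c (pderiv a (pderiv b f)) = pderiv a (pderiv b f) := by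
      intro a b
      simpa using IsHomogeneous.sum_X_mul_pderiv ((hf.pderiv (i := b)).pderiv (i := a))
    have h2 : ∀ a, ∑ c, X c * pderiv c (pderiv a f) = 2 * pderiv a f := by
      intro a
      simpa using IsHomogeneous.sum_X_mul_pderiv (hf.pderiv (i := a))
    have h3 : ∑ c, X c * pderiv c f = 3 * f := by
      simpa using IsHomogeneous.sum_X_mul_pderiv hf
    have h4 : 6 * f = 6 * cubic F := by
      calc 6 * f = 2 * (3 * f) := by ring
        _ = ∑ a, X a * (2 * pderiv a f) := by
          rw [← h3, Finset.mul_sum]; exact Finset.sum_congr rfl fun a _ => by ring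
        _ = ∑ a, X a * ∑ b, X b * ∑ c, X c * C (6 * F c b a) := by
          simp_rw [← h0, h1, h2]
        _ = 6 * cubic F := by
          simp only [cubic, Finset.mul_sum]
          refine Finset.sum_congr rfl fun a _ => Finset.sum_congr rfl fun b _ =>
            Finset.sum_congr rfl fun c _ => ?_
          have : F c b a = F a b c := by
            simp only [F]
            rw [pderiv_comm' c b, pderiv_comm' c a, pderiv_comm' b a]
          rw [this, C_mul]
          simp only [map_ofNat]
          ring
    exact (mul_left_cancel₀ (by norm_num) h4).symm

lemma mem_singSpace (p : κ → Fin (n + 1) → ℂ) (f) : f ∈ SingSpace n 3 (Set.range p) ∅ ↔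
    f.IsHomogeneous 3 ∧ ∀ k, SingularAt f (p k) := by
  simp [SingSpace, SingularAt, mem_homogeneousSubmodule]

lemma singSpace_eq (p : κ → Fin (n + 1) → ℂ) :
    SingSpace n 3 (Set.range p) ∅ = (SigmaS p).map cubicL := by
  ext f
  rw [mem_singSpace, Submodule.mem_map]
  constructor
  · rintro ⟨h1, h2⟩
    obtain ⟨F, hF, rfl⟩ := exists_cubic h1
    refine ⟨F, mem_SigmaS.2 ⟨hF, fun k l => ?_⟩, rfl⟩
    have := h2 k l
    rw [evalPDeriv_cubic_s8 hF] at this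
    simpa using this
  · rintro ⟨F, hF, rfl⟩
    rw [mem_SigmaS] at hF
    refine ⟨cubic_homogeneous F, fun k l => ?_⟩
    change evalPDeriv (p k) l (cubic F) = 0
    rw [evalPDeriv_cubic_s8 hF.1, hF.2, mul_zero]

lemma finrank_singSpace (p : κ → Fin (n + 1) → ℂ) :
    Module.finrank ℂ (SingSpace n 3 (Set.range p) ∅) = Module.finrank ℂ (SigmaS p) := by
  rw [singSpace_eq, ← LinearMap.range_domRestrict]
  apply LinearMap.finrank_range_of_inj
  rw [← LinearMap.ker_eq_bot, LinearMap.ker_eq_bot']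
  rintro ⟨F, hF⟩ h
  have hF := (mem_SigmaS.1 hF).1
  have h : cubic F = 0 := h
  apply Subtype.ext
  apply eq_zero_of_con_self hF
  intro q l
  have := evalPDeriv_cubic_s8 hF q l
  rw [h, map_zero] at this
  simpa using this.symm

lemma con_of_singular (p : κ → Fin (n + 1) → ℂ) (q : Fin (n + 1) → ℂ)
    (h : ∀ f ∈ SingSpace n 3 (Set.range p) ∅, SingularAt f q) :
    ∀ F ∈ SigmaS p, ∀ l, con F q q l = 0 := by
  intro F hF l
  have := h (cubic F) (by rw [singSpace_eq]; exact ⟨F, hF, rfl⟩) l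
  rw [evalPDeriv_cubic_s8 (mem_SigmaS.1 hF).1] at this
  simpa using this
end Cubics

/-! ### The differential argument -/

section Core
variable {ι κ K : Type*} [Fintype ι] [DecidableEq ι] [Fintype κ] [DecidableEq κ] [Field K]

/-- The tangent vector to the cone of cubes: the derivative of `u ⊗ u ⊗ u` in the direction `w`. -/
def tanT (u w : ι → K) (a b c : ι) : K := u a * u b * w c + u a * u c * w b + u b * u c * w a

lemma tanT_sum {J : Type*} (s : Finset J) (u : ι → K) (f : J → K) (w : J → ι → K) (a b c : ι) :
    tanT u (fun l => ∑ j ∈ s, f j * w j l) a b c = ∑ j ∈ s, f j * tanT u (w j) a b c := by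
  simp only [tanT, Finset.mul_sum, ← Finset.sum_add_distrib]
  exact Finset.sum_congr rfl fun j _ => by ring

lemma tanT_expand (u w : ι → K) (a b c : ι) :
    tanT u w a b c = ∑ l, w l * tanT u (Pi.single l 1) a b c := by
  rw [← tanT_sum]
  congr 1
  funext l
  simp [Pi.single_apply]

lemma sum_perm1 (F : ι → ι → ι → K) (u v w : ι → K) :
    ∑ a, ∑ b, ∑ c, F a b c * (u a * v b * w c) = ∑ c, con F u v c * w c := by
  simp only [con, Finset.sum_mul]
  symm
  rw [Finset.sum_comm]
  refine Finset.sum_congr rfl fun a _ => ?_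
  rw [Finset.sum_comm]
  exact Finset.sum_congr rfl fun b _ => Finset.sum_congr rfl fun c _ => by ring

lemma con_symm {F : ι → ι → ι → K} (hF : IsSym F) (u v : ι → K) (c) :
    con F u v c = con F v u c := by
  simp only [con]
  rw [Finset.sum_comm]
  exact Finset.sum_congr rfl fun a _ => Finset.sum_congr rfl fun b _ => by
    rw [hF.1 b a c]; ring

lemma sum_tanT {F : ι → ι → ι → K} (hF : IsSym F) (u w : ι → K) :
    ∑ a, ∑ b, ∑ c, F a b c * tanT u w a b c = 3 * ∑ c, con F u u c * w c := by
  have h1 := sum_perm1 F u u w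
  have h2 := sum_perm1 F u w u
  have h3 := sum_perm1 F w u u
  simp only [con_symm hF w u, ← con_rotate hF u u w] at h2 h3
  have : ∑ a, ∑ b, ∑ c, F a b c * tanT u w a b c =
      ∑ a, ∑ b, ∑ c, F a b c * (u a * u b * w c) + ∑ a, ∑ b, ∑ c, F a b c * (u a * w b * u c)
       + ∑ a, ∑ b, ∑ c, F a b c * (w a * u b * u c) := by
    simp only [← Finset.sum_add_distrib]
    exact Finset.sum_congr rfl fun a _ => Finset.sum_congr rfl fun b _ =>
      Finset.sum_congr rfl fun c _ => by simp only [tanT]; ring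
  rw [this, h1, h2, h3]; ring

/-- The sum of the six permutations of `u ⊗ v ⊗ w`. -/
def polT (u v w : ι → K) (a b c : ι) : K :=
  u a * v b * w c + v a * u b * w c + u a * v c * w b + v a * u c * w b
    + u b * v c * w a + v b * u c * w a

lemma sum_polT {F : ι → ι → ι → K} (hF : IsSym F) (u v w : ι → K) :
    ∑ a, ∑ b, ∑ c, F a b c * polT u v w a b c = 6 * ∑ c, con F u w c * v c := by
  have h1 := sum_perm1 F u v w
  have h2 := sum_perm1 F v u w
  have h3 := sum_perm1 F u w v
  have h4 := sum_perm1 F v w u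
  have h5 := sum_perm1 F w u v
  have h6 := sum_perm1 F w v u
  have hs : ∀ u v w : ι → K, ∑ c, con F u v c * w c = ∑ c, con F v u c * w c := fun u v w =>
    Finset.sum_congr rfl fun c _ => by rw [con_symm hF]
  have hr := con_rotate hF
  rw [hr u v w] at h1
  rw [hs v u w, hr u v w] at h2
  rw [hr v w u, hs v u w, hr u v w] at h4
  rw [hs w u v] at h5
  rw [hr w v u, hs w u v] at h6
  have : ∑ a, ∑ b, ∑ c, F a b c * polT u v w a b c =
      ∑ a, ∑ b, ∑ c, F a b c * (u a * v b * w c) + ∑ a, ∑ b, ∑ c, F a b c * (v a * u b * w c)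
       + ∑ a, ∑ b, ∑ c, F a b c * (u a * w b * v c) + ∑ a, ∑ b, ∑ c, F a b c * (v a * w b * u c)
       + ∑ a, ∑ b, ∑ c, F a b c * (w a * u b * v c) + ∑ a, ∑ b, ∑ c, F a b c * (w a * v b * u c) := by
    simp only [← Finset.sum_add_distrib]
    exact Finset.sum_congr rfl fun a _ => Finset.sum_congr rfl fun b _ =>
      Finset.sum_congr rfl fun c _ => by simp only [polT]; ring
  rw [this, h1, h2, h3, h4, h5, h6]
  ring


/-- The differential argument: if every `tanT q e_j` lies in the span of the tangent spaces at the
`p k`, and there are derivations dual to the coordinates of the `p k`, then `q` is proportional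
to one of the `p k`.

Writing `q³` as a sum of tangent vectors `tanT (p i) (x i)` and differentiating along the coordinate
`p i j` gives `F(p i, x i, e_j) = 0` for `F ∈ SigmaS p`, so `x i` is a multiple of `p i` by `hres`.
Thus `q³` is a combination of the `(p i)³`, which by `hsurj` forces proportionality. -/
lemma contact_core [CharZero K] {p : κ → ι → K} {y : ι → K} {q : ι → K} (hq : q ≠ 0)
    (hp : ∀ k, p k ≠ 0)
    (hsurj : ∀ φ : κ → ι → K, ∃ F, IsSym F ∧ ∀ k l, con F (p k) (p k) l = φ k l)
    (hres : ∀ k x, (∀ F ∈ SigmaS p, ∑ l, con F (p k) y l * x l = 0) → ∃ c : K, x = c • p k)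
    (Y : ι → κ → ι → K)
    (hY : ∀ a b c j, tanT q (Pi.single j 1) a b c =
      ∑ i, ∑ l, Y j i l * tanT (p i) (Pi.single l 1) a b c)
    (D : κ → ι → Derivation ℤ K K)
    (hD : ∀ i j k l, D i j (p k l) = if k = i ∧ l = j then 1 else 0) :
    ∃ (i : κ) (c : K), q = c • p i := by
  -- any tangent vector at `q` is a combination of tangent vectors at the `p i`
  have htan : ∀ w a b c, tanT q w a b c =
      ∑ i, tanT (p i) (fun l => ∑ j, w j * Y j i l) a b c := by
    intro w a b c
    rw [tanT_expand]
    simp_rw [hY, Finset.mul_sum]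
    rw [Finset.sum_comm]
    refine Finset.sum_congr rfl fun i _ => ?_
    rw [Finset.sum_comm, tanT_expand (p i)]
    refine Finset.sum_congr rfl fun l _ => ?_
    rw [Finset.sum_mul]
    exact Finset.sum_congr rfl fun j _ => by ring
  let x : κ → ι → K := fun i l => ∑ j, q j * Y j i l
  have hx : ∀ i, ∃ c : K, x i = c • p i := by
    intro i
    apply hres
    intro F hF
    rw [mem_SigmaS] at hF
    -- differentiate along the coordinate `p i j`
    have hdiff : ∀ j a b c, 3 * tanT q (fun l => D i j (q l)) a b c =
        polT (p i) (x i) (Pi.single j 1) a b c + ∑ k, tanT (p k) (fun l => D i j (x k l)) a b c := by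
      intro j a b c
      have h0 := congrArg (D i j) (htan q a b c)
      have h1 : D i j (tanT q q a b c) = 3 * tanT q (fun l => D i j (q l)) a b c := by
        simp only [tanT, map_add, Derivation.leibniz, smul_eq_mul]; ring
      have h2 : ∀ k, D i j (tanT (p k) (x k) a b c) =
          polT (p k) (x k) (fun l => D i j (p k l)) a b c
            + tanT (p k) (fun l => D i j (x k l)) a b c := by
        intro k
        simp only [tanT, polT, map_add, Derivation.leibniz, smul_eq_mul]; ring
      rw [h1, map_sum] at h0
      rw [h0]
      change ∑ k, D i j (tanT (p k) (x k) a b c) = _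
      simp_rw [h2]
      rw [Finset.sum_add_distrib]
      congr 1
      rw [Finset.sum_eq_single i]
      · congr 1
        funext l
        rw [hD]
        simp [Pi.single_apply]
      · intro k _ hk
        simp [polT, hD, hk]
      · simp
    have hj : ∀ j, con F (p i) (x i) j = 0 := by
      intro j
      have htz : ∀ k w, ∑ a, ∑ b, ∑ c, F a b c * tanT (p k) w a b c = 0 := by
        intro k w
        rw [sum_tanT hF.1]
        simp [hF.2]
      have hsz : ∀ w : κ → ι → K,
          ∑ a, ∑ b, ∑ c, F a b c * ∑ k, tanT (p k) (w k) a b c = 0 := by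
        intro w
        simp_rw [Finset.mul_sum]
        have : ∀ a b, ∑ c, ∑ k, F a b c * tanT (p k) (w k) a b c =
          ∑ k, ∑ c, F a b c * tanT (p k) (w k) a b c := fun a b => Finset.sum_comm
        simp_rw [this]
        have : ∀ a, ∑ b, ∑ k, ∑ c, F a b c * tanT (p k) (w k) a b c =
          ∑ k, ∑ b, ∑ c, F a b c * tanT (p k) (w k) a b c := fun a => Finset.sum_comm
        simp_rw [this]
        rw [Finset.sum_comm]
        exact Finset.sum_eq_zero fun k _ => htz k (w k)
      have h3 : ∑ a, ∑ b, ∑ c, F a b c * polT (p i) (x i) (Pi.single j 1) a b c = 0 := by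
        have : ∀ a b c, F a b c * polT (p i) (x i) (Pi.single j 1) a b c =
            3 * (F a b c * ∑ k, tanT (p k) (fun l => ∑ m, D i j (q m) * Y m k l) a b c)
              - F a b c * ∑ k, tanT (p k) (fun l => D i j (x k l)) a b c := by
          intro a b c
          rw [← htan]
          linear_combination - F a b c * hdiff j a b c
        simp_rw [this, Finset.sum_sub_distrib, ← Finset.mul_sum]
        rw [hsz, hsz]
        ring
      rw [sum_polT hF.1, ← con_rotate hF.1] at h3
      simpa [Pi.single_apply] using h3
    rw [con_rotate hF.1]
    simp [hj]
  choose c hc using hx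
  have hcube : ∀ a b d, q a * q b * q d = ∑ i, c i * (p i a * p i b * p i d) := by
    intro a b d
    have h := htan q a b d
    have : ∀ i, tanT (p i) (fun l => ∑ j, q j * Y j i l) a b d =
        3 * (c i * (p i a * p i b * p i d)) := by
      intro i
      change tanT (p i) (x i) a b d = _
      rw [hc]
      simp only [tanT, Pi.smul_apply, smul_eq_mul]; ring
    simp_rw [this] at h
    rw [← Finset.mul_sum] at h
    apply mul_left_cancel₀ (show (3 : K) ≠ 0 by norm_num)
    rw [← h]
    simp only [tanT]; ring
  obtain ⟨a, ha⟩ : ∃ a, q a ≠ 0 := by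
    by_contra! h
    exact hq (funext h)
  -- some coefficient is nonzero
  obtain ⟨i, -, hi⟩ : ∃ i ∈ Finset.univ, c i * (p i a * p i a * p i a) ≠ 0 := by
    apply Finset.exists_ne_zero_of_sum_ne_zero
    rw [← hcube]
    simp [ha]
  have hi : c i ≠ 0 := left_ne_zero_of_mul hi
  have hprop : ∀ b, q b * p i a = q a * p i b := by
    intro b
    have hrel : ∀ d e, ∑ k, c k * (q b * p k a - q a * p k b) * (p k d * p k e) = 0 := by
      intro d e
      have : ∑ k, c k * (q b * p k a - q a * p k b) * (p k d * p k e) =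
          q b * ∑ k, c k * (p k a * p k d * p k e) - q a * ∑ k, c k * (p k b * p k d * p k e) := by
        rw [Finset.mul_sum, Finset.mul_sum, ← Finset.sum_sub_distrib]
        exact Finset.sum_congr rfl fun k _ => by ring
      rw [this, ← hcube, ← hcube]; ring
    obtain ⟨F, hF, hF'⟩ := hsurj (fun k _ => if k = i then 1 else 0)
    have h1 : ∑ k, c k * (q b * p k a - q a * p k b) * con F (p k) (p k) a = 0 := by
      have : ∀ k, c k * (q b * p k a - q a * p k b) * con F (p k) (p k) a =
          ∑ d, ∑ e, F d e a * (c k * (q b * p k a - q a * p k b) * (p k d * p k e)) := by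
        intro k
        simp only [con, Finset.mul_sum]
        exact Finset.sum_congr rfl fun d _ => Finset.sum_congr rfl fun e _ => by ring
      simp_rw [this]
      rw [Finset.sum_comm]
      refine Finset.sum_eq_zero fun d _ => ?_
      rw [Finset.sum_comm]
      refine Finset.sum_eq_zero fun e _ => ?_
      rw [← Finset.mul_sum, hrel, mul_zero]
    simp only [hF', mul_ite, mul_one, mul_zero, Finset.sum_ite_eq', Finset.mem_univ, if_true] at h1
    have := (mul_eq_zero.1 h1).resolve_left hi
    exact sub_eq_zero.1 this
  have hpa : p i a ≠ 0 := by
    intro h0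
    apply hp i
    funext b
    have := hprop b
    rw [h0, mul_zero] at this
    exact (mul_eq_zero.1 this.symm).resolve_left ha
  refine ⟨i, q a / p i a, funext fun b => ?_⟩
  simp only [Pi.smul_apply, smul_eq_mul]
  field_simp
  exact hprop b

end Core

open MvPolynomial TensorProduct

/-! ### Dual derivations -/

section Deriv
variable {k K σ : Type} [Field k] [CharZero k] [Field K] [DecidableEq σ]

/-- Algebraically independent elements of a field of characteristic zero have dual derivations: a
derivation of the polynomial ring extends to the field because the extension is formally smooth, so
that the differentials of the polynomial ring inject after base change. -/
lemma exists_dual_derivation (g : MvPolynomial σ k →+* K) (hg : Function.Injective g) (i : σ) :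
    ∃ D : Derivation ℤ K K, ∀ j, D (g (X j)) = if j = i then 1 else 0 := by
  let S := MvPolynomial σ k
  let : Algebra k K := (g.comp C).toAlgebra
  let : Algebra S K := g.toAlgebra
  have : IsScalarTower k S K := .of_algebraMap_eq fun r => rfl
  have : FaithfulSMul S K := (faithfulSMul_iff_algebraMap_injective S K).2 hg
  let : Algebra (FractionRing S) K := FractionRing.liftAlgebra S K
  have : IsScalarTower S (FractionRing S) K := FractionRing.isScalarTower_liftAlgebra S K
  have : CharZero S := inferInstance
  have : CharZero (FractionRing S) := inferInstance
  have : Algebra.FormallySmooth (FractionRing S) K := by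
    obtain ⟨B, hB⟩ := exists_isTranscendenceBasis (FractionRing S) K
    have := hB.isAlgebraic_field
    exact .of_algebraicIndependent_of_isSeparable hB.1
  have : Algebra.FormallyEtale S (FractionRing S) :=
    Algebra.FormallyEtale.of_isLocalization (nonZeroDivisors S)
  have : Algebra.FormallySmooth S K := Algebra.FormallySmooth.comp S (FractionRing S) K
  have hinj : Function.Injective (KaehlerDifferential.mapBaseChange k S K) := by
    rw [injective_iff_map_eq_zero]
    intro x hx
    obtain ⟨x, rfl⟩ := (Algebra.H1Cotangent.exact_δ_mapBaseChange k S K x).mp hx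
    rw [Subsingleton.elim x 0, map_zero]
  obtain ⟨r, hr⟩ := LinearMap.exists_leftInverse_of_injective _ (LinearMap.ker_eq_bot.2 hinj)
  let d : Derivation k S K := mkDerivation k (fun j => if j = i then 1 else 0)
  let e : Ω[K⁄k] →ₗ[K] K := d.liftKaehlerDifferential.liftBaseChange K ∘ₗ r
  refine ⟨(e.compDer (KaehlerDifferential.D k K)).restrictScalars ℤ, fun j => ?_⟩
  have h1 : KaehlerDifferential.D k K (g (X j)) =
      KaehlerDifferential.mapBaseChange k S K (1 ⊗ₜ KaehlerDifferential.D k S (X j)) := by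
    rw [KaehlerDifferential.mapBaseChange_tmul, KaehlerDifferential.map_D, one_smul]; rfl
  have h2 := LinearMap.congr_fun hr (1 ⊗ₜ KaehlerDifferential.D k S (X j))
  simp only [LinearMap.comp_apply, LinearMap.id_apply] at h2
  change e (KaehlerDifferential.D k K (g (X j))) = _
  rw [h1]
  simp only [e, LinearMap.comp_apply]
  rw [h2]
  simp [d, S]
end Deriv

/-! ### Duality and passage to an ultraproduct -/

section Duality
variable {ι κ K : Type*} [Fintype ι] [DecidableEq ι] [Fintype κ] [DecidableEq κ] [Field K]

lemma polT_isSym (u v w : ι → K) : IsSym (polT u v w) :=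
  ⟨fun a b c => by simp only [polT]; ring, fun a b c => by simp only [polT]; ring⟩

lemma con_polT_single (u : ι → K) (a b c j : ι) :
    con (polT (Pi.single a 1) (Pi.single b 1) (Pi.single c 1)) u u j =
      2 * tanT u (Pi.single j 1) a b c := by
  have h : ∀ (x y : ι) (r : K), ∑ d, ∑ e, u d * u e *
      ((Pi.single x 1 : ι → K) d * (Pi.single y 1 : ι → K) e * r) = u x * u y * r := by
    intro x y r
    simp [Pi.single_apply]
  have h' : ∀ (x y : ι) (r : K), ∑ d, ∑ e, u d * u e *
      ((Pi.single x 1 : ι → K) d * r * (Pi.single y 1 : ι → K) e) = u x * u y * r := by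
    intro x y r
    rw [← h]
    exact Finset.sum_congr rfl fun d _ => Finset.sum_congr rfl fun e _ => by ring
  have h'' : ∀ (x y : ι) (r : K), ∑ d, ∑ e, u d * u e *
      ((Pi.single y 1 : ι → K) e * r * (Pi.single x 1 : ι → K) d) = u x * u y * r := by
    intro x y r
    rw [← h]
    exact Finset.sum_congr rfl fun d _ => Finset.sum_congr rfl fun e _ => by ring
  have hs : ∀ x : ι, (Pi.single x 1 : ι → K) j = (Pi.single j 1 : ι → K) x := by
    intro x; simp [Pi.single_apply, eq_comm]
  simp only [con, polT, mul_add, Finset.sum_add_distrib, h, h', h'', tanT, hs]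
  ring

/-- By duality, if every tensor singular at the `p k` is singular at `q`, the tangent vectors
`tanT q e_j` at `q` are combinations of those at the `p k`. -/
lemma exists_tangent_coeff [CharZero K] {p : κ → ι → K} {q : ι → K}
    (h : ∀ F ∈ SigmaS p, ∀ l, con F q q l = 0) :
    ∃ Y : ι → κ → ι → K, ∀ a b c j, tanT q (Pi.single j 1) a b c =
      ∑ i, ∑ l, Y j i l * tanT (p i) (Pi.single l 1) a b c := by
  let L : (ι → K) → ι → symT ι K →ₗ[K] K := fun u l =>
    LinearMap.proj l ∘ₗ conL u u ∘ₗ (symT ι K).subtype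
  have key : ∀ j, ∃ Y : κ × ι → K, ∑ x, Y x • L (p x.1) x.2 = L q j := by
    intro j
    rw [← Submodule.mem_span_range_iff_exists_fun]
    apply mem_span_of_iInf_ker_le_ker
    rintro ⟨F, hF⟩ hx
    simp only [Submodule.mem_iInf, LinearMap.mem_ker] at hx ⊢
    exact h F (mem_SigmaS.2 ⟨hF, fun k l => hx (k, l)⟩) j
  choose Y hY using key
  refine ⟨fun j i l => Y j (i, l), fun a b c j => ?_⟩
  have h1 := LinearMap.congr_fun (hY j) ⟨_, polT_isSym (Pi.single a 1) (Pi.single b 1) (Pi.single c 1)⟩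
  have h2 : ∀ u l, L u l ⟨_, polT_isSym (Pi.single a 1) (Pi.single b 1) (Pi.single c 1)⟩ =
      2 * tanT u (Pi.single l 1) a b c := fun u l => con_polT_single u a b c l
  simp only [LinearMap.sum_apply, LinearMap.smul_apply, h2, smul_eq_mul] at h1
  apply mul_left_cancel₀ (two_ne_zero (α := K))
  rw [← h1, Fintype.sum_prod_type, Finset.mul_sum]
  refine Finset.sum_congr rfl fun i _ => ?_
  rw [Finset.mul_sum]
  exact Finset.sum_congr rfl fun l _ => by ring
end Duality

section Ultra
variable {ι κ : Type} [Fintype ι] [DecidableEq ι] [Fintype κ] [DecidableEq κ]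

/-- The filter of the sets containing all parameters satisfying `B` outside some hypersurface. It is
proper if and only if these parameters are Zariski dense. -/
def genericFilter (B : (κ × ι → ℂ) → Prop) : Filter (κ × ι → ℂ) where
  sets := {s | ∃ F : MvPolynomial (κ × ι) ℂ, F ≠ 0 ∧ ∀ t, eval t F ≠ 0 → B t → t ∈ s}
  univ_sets := ⟨1, one_ne_zero, fun _ _ _ => trivial⟩
  sets_of_superset := fun ⟨F, hF, h⟩ hs => ⟨F, hF, fun t h1 h2 => hs (h t h1 h2)⟩
  inter_sets := fun ⟨F, hF, h⟩ ⟨G, hG, h'⟩ => ⟨F * G, mul_ne_zero hF hG, fun t h1 h2 => by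
    rw [map_mul] at h1
    exact ⟨h t (left_ne_zero_of_mul h1) h2, h' t (right_ne_zero_of_mul h1) h2⟩⟩

lemma tanT_germ {T : Type} {l : Filter T} {R : (T → ℂ) →+* l.Germ ℂ}
    (f w : T → ι → ℂ) (a b c : ι) :
    R (fun t => tanT (f t) (w t) a b c) =
      R (fun t => f t a) * R (fun t => f t b) * R (fun t => w t c)
      + R (fun t => f t a) * R (fun t => f t c) * R (fun t => w t b)
      + R (fun t => f t b) * R (fun t => f t c) * R (fun t => w t a) := by
  simp only [← map_mul, ← map_add]
  rfl

/-- For generic points the common singular locus of the cubics singular at them consists of the points.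
Otherwise the parameters for which it fails are Zariski dense, and an ultrafilter on them yields an
ultrapower `K` of `ℂ` in which the coordinates of the tautological points are algebraically
independent while a further singular point `q` exists, contradicting `contact_core`. -/
lemma contact_generic (h : StarExists ι κ)
    (hcard : (Fintype.card κ + 1) * Fintype.card ι = (Fintype.card ι + 2).choose 3)
    (hι : 2 ≤ Fintype.card ι) (hκ : Nonempty κ) :
    ∃ F : MvPolynomial (κ × ι) ℂ, F ≠ 0 ∧ ∀ t, eval t F ≠ 0 → ∀ q : ι → ℂ, q ≠ 0 →
      (∀ G ∈ SigmaS (fun k a => t (k, a)), ∀ l, con G q q l = 0) →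
      ∃ (k : κ) (c : ℂ), q = c • fun a => t (k, a) := by
  obtain ⟨y, z₁, z₂, z₃, D, hD, hstar⟩ := star_generic h
  let B : (κ × ι → ℂ) → Prop := fun t => ∃ q : ι → ℂ, q ≠ 0 ∧
    (∀ G ∈ SigmaS (fun k a => t (k, a)), ∀ l, con G q q l = 0) ∧
    ∀ (k : κ) (c : ℂ), q ≠ c • fun a => t (k, a)
  by_contra hcon
  have hne : (genericFilter B).NeBot := by
    rw [← Filter.empty_mem_iff_bot.not.trans Filter.neBot_iff.symm]
    rintro ⟨F, hF, hF'⟩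
    refine hcon ⟨F, hF, fun t ht q hq hs => ?_⟩
    by_contra! hn
    exact hF' t ht ⟨q, hq, hs, hn⟩
  -- the coordinates of the points become algebraically independent in the ultrapower `K`
  let φ := Ultrafilter.of (genericFilter B)
  have hφ : (φ : Filter _) ≤ genericFilter B := Ultrafilter.of_le _
  have hB : ∀ᶠ t in (φ : Filter _), B t := hφ ⟨1, one_ne_zero, fun t _ h => h⟩
  have hP : ∀ F : MvPolynomial (κ × ι) ℂ, F ≠ 0 → ∀ᶠ t in (φ : Filter _), eval t F ≠ 0 :=
    fun F hF => hφ ⟨F, hF, fun t h _ => h⟩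
  let K := (φ : Filter (κ × ι → ℂ)).Germ ℂ
  let R : ((κ × ι → ℂ) → ℂ) →+* K := Filter.Germ.coeRingHom (φ : Filter (κ × ι → ℂ))
  have hR : ∀ f g, R f = R g ↔ ∀ᶠ t in (φ : Filter _), f t = g t := fun f g =>
    Filter.Germ.coe_eq
  have hRs : Function.Surjective R := fun x => x.inductionOn fun f => ⟨f, rfl⟩
  let g : MvPolynomial (κ × ι) ℂ →+* K := R.comp (RingHom.pi fun t => eval t)
  have hg : ∀ F, g F = R (fun t => eval t F) := fun F => rfl
  have hg0 : ∀ F, F ≠ 0 → g F ≠ 0 := by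
    intro F hF h0
    rw [hg, ← map_zero R, hR] at h0
    obtain ⟨t, h1, h2⟩ := (h0.and (hP F hF)).exists
    exact h2 h1
  have hCZ : CharZero K := charZero_of_injective_ringHom (g.comp C).injective
  have hgi : Function.Injective g := by
    rw [injective_iff_map_eq_zero]
    intro F hF
    by_contra h0
    exact hg0 F h0 hF
  let p : κ → ι → K := fun k a => g (X (k, a))
  obtain ⟨-, hp0, hsurj, hres⟩ := star_conseq (p := p) (y := fun a => g (C (y a)))
    (hstar g (hg0 D hD)) hcard hι hκ
  -- a bad point and the coefficients of its tangent vectors, chosen for each parameter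
  have hch : ∀ t, ∃ (q : ι → ℂ) (Y : ι → κ → ι → ℂ), B t → q ≠ 0 ∧
      (∀ (k : κ) (c : ℂ), q ≠ c • fun a => t (k, a)) ∧
      ∀ a b c j, tanT q (Pi.single j 1) a b c =
        ∑ i, ∑ l, Y j i l * tanT (fun a => t (i, a)) (Pi.single l 1) a b c := by
    intro t
    by_cases hb : B t
    · obtain ⟨q, h1, h2, h3⟩ := hb
      obtain ⟨Y, hY⟩ := exists_tangent_coeff h2
      exact ⟨q, Y, fun _ => ⟨h1, h3, hY⟩⟩
    · exact ⟨0, 0, fun h => absurd h hb⟩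
  choose q Y hqY using hch
  have hqY' := hB.mono hqY
  have hq : (fun a => R fun t => q t a) ≠ (0 : ι → K) := by
    intro h0
    have h1 : ∀ᶠ t in (φ : Filter _), ∀ a, q t a = 0 := by
      rw [Filter.eventually_all]
      intro a
      have := congrFun h0 a
      rwa [Pi.zero_apply, ← map_zero R, hR] at this
    obtain ⟨t, h1, h2⟩ := (h1.and hqY').exists
    exact h2.1 (funext h1)
  choose d hd using fun x : κ × ι => exists_dual_derivation g hgi x
  obtain ⟨k, c, hc⟩ := contact_core (q := fun a => R fun t => q t a) hq hp0 hsurj hres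
    (fun j i l => R fun t => Y t j i l) (by
      intro a b c j
      have hs : ∀ j a : ι, (Pi.single j 1 : ι → K) a = R fun t => (Pi.single j 1 : ι → ℂ) a := by
        intro j a
        by_cases hja : a = j
        · subst hja; simp only [Pi.single_eq_same]; exact (map_one R).symm
        · simp only [Pi.single_eq_of_ne hja]; exact (map_zero R).symm
      have hp : ∀ i a, p i a = R fun t => t (i, a) := by
        intro i a
        simp only [p, hg, eval_X]
      have h1 : tanT (fun a => R fun t => q t a) (Pi.single j 1) a b c =
          R fun t => tanT (q t) (Pi.single j 1) a b c := by
        rw [tanT_germ]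
        simp only [tanT, hs]
      have h2 : ∀ i l, tanT (p i) (Pi.single l 1) a b c =
          R fun t => tanT (fun a => t (i, a)) (Pi.single l 1) a b c := by
        intro i l
        rw [tanT_germ]
        simp only [tanT, hs, hp]
      rw [h1]
      simp only [h2, ← map_mul, ← map_sum]
      rw [hR]
      filter_upwards [hqY'] with t ht
      simpa using ht.2.2 a b c j)
    (fun k a => d (k, a)) (by
      intro i j k l
      exact (hd (i, j) (k, l)).trans (by simp [Prod.ext_iff]))
  obtain ⟨c, rfl⟩ := hRs c
  have h1 : ∀ᶠ t in (φ : Filter _), ∀ a, q t a = c t * t (k, a) := by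
    rw [Filter.eventually_all]
    intro a
    have := congrFun hc a
    simp only [Pi.smul_apply, smul_eq_mul, p, hg, eval_X, ← map_mul] at this
    rwa [hR] at this
  obtain ⟨t, h1, h2⟩ := (h1.and hqY').exists
  exact h2.2.1 k (c t) (funext h1)
end Ultra

/-! ### Conclusion -/

lemma card_aux (n : ℕ) (h3 : n % 3 ≠ 2) :
    6 * ((n + 3) * (n + 2) / 6) = (n + 3) * (n + 2) := by
  apply Nat.mul_div_cancel'
  obtain ⟨m, hm⟩ : ∃ m, n = 6 * m ∨ n = 6 * m + 1 ∨ n = 6 * m + 3 ∨ n = 6 * m + 4 :=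
    ⟨n / 6, by omega⟩
  rcases hm with rfl | rfl | rfl | rfl
  · exact ⟨(2 * m + 1) * (3 * m + 1), by ring⟩
  · exact ⟨(3 * m + 2) * (2 * m + 1), by ring⟩
  · exact ⟨(m + 1) * (6 * m + 5), by ring⟩
  · exact ⟨(6 * m + 7) * (m + 1), by ring⟩

lemma choose_aux (n m : ℕ) (h : 6 * m = (n + 3) * (n + 2)) :
    m * (n + 1) = (n + 1 + 2).choose 3 := by
  have h1 := Nat.add_one_mul_choose_eq (n + 2) 2
  have h2 := Nat.add_one_mul_choose_eq (n + 1) 1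
  rw [Nat.choose_one_right] at h2
  change (n + 3) * (n + 2).choose 2 = (n + 3).choose 3 * 3 at h1
  change (n + 2) * (n + 1) = (n + 2).choose 2 * 2 at h2
  change m * (n + 1) = (n + 3).choose 3
  generalize (n + 3).choose 3 = x at *
  generalize (n + 2).choose 2 = z at *
  have : 6 * (m * (n + 1)) = 6 * x := by
    linear_combination (n + 1) * h + 2 * h1 + (n + 3) * h2
  omega

lemma finrank_generic {ι κ : Type} [Fintype ι] [DecidableEq ι] [Fintype κ] [DecidableEq κ]
    (h : StarExists ι κ)
    (hcard : (Fintype.card κ + 1) * Fintype.card ι = (Fintype.card ι + 2).choose 3)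
    (hι : 2 ≤ Fintype.card ι) (hκ : Nonempty κ) :
    ∃ D : MvPolynomial (κ × ι) ℂ, D ≠ 0 ∧ ∀ t, eval t D ≠ 0 →
      Module.finrank ℂ (SigmaS fun k a => t (k, a)) = Fintype.card ι := by
  obtain ⟨y, z₁, z₂, z₃, D, hD, hD'⟩ := star_generic h
  refine ⟨D, hD, fun t ht => ?_⟩
  have h' := @hD' ℂ _ (eval t) ht
  simp only [eval_X, eval_C] at h'
  exact (star_conseq h' hcard hι hκ).1

/-- The theorem for an arbitrary index type of points with the right cardinality. -/
lemma contact_aux {κ : Type} [Fintype κ] [DecidableEq κ] (n : ℕ) (hn : 1 ≤ n)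
    (hstar : StarExists (Fin (n + 1)) κ) (hκ : Nonempty κ)
    (hcard : 6 * (Fintype.card κ + 1) = (n + 3) * (n + 2)) :
    Generic (ι := κ × Fin (n + 1)) fun t =>
      let p : κ → Fin (n + 1) → ℂ := fun i j => t (i, j)
      Module.finrank ℂ (SingSpace n 3 (Set.range p) ∅) = n + 1 ∧
      ∀ q : Fin (n + 1) → ℂ, q ≠ 0 →
        (∀ f ∈ SingSpace n 3 (Set.range p) ∅, SingularAt f q) →
        ∃ (i : κ) (c : ℂ), q = c • p i := by
  have hcard' : (Fintype.card κ + 1) * Fintype.card (Fin (n + 1)) =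
      (Fintype.card (Fin (n + 1)) + 2).choose 3 := by
    rw [Fintype.card_fin]
    exact choose_aux n _ hcard
  have hι : 2 ≤ Fintype.card (Fin (n + 1)) := by rw [Fintype.card_fin]; omega
  obtain ⟨F, hF, hF'⟩ := contact_generic hstar hcard' hι hκ
  obtain ⟨D, hD, hD'⟩ := finrank_generic hstar hcard' hι hκ
  refine ⟨D * F, mul_ne_zero hD hF, fun t ht => ?_⟩
  rw [map_mul] at ht
  intro p
  refine ⟨?_, fun q hq hs => hF' t (right_ne_zero_of_mul ht) q hq (con_of_singular p q hs)⟩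
  rw [finrank_singSpace]
  rw [hD' t (left_ne_zero_of_mul ht), Fintype.card_fin]

theorem cubics_contact_locus_case1 (n : ℕ) (hn : 1 ≤ n) (h3 : n % 3 ≠ 2) :
    Generic (ι := Fin ((n + 3) * (n + 2) / 6 - 1) × Fin (n + 1)) fun t =>
      let p : Fin ((n + 3) * (n + 2) / 6 - 1) → Fin (n + 1) → ℂ := fun i j => t (i, j)
      Module.finrank ℂ (SingSpace n 3 (Set.range p) ∅) = n + 1 ∧
      ∀ q : Fin (n + 1) → ℂ, q ≠ 0 →
        (∀ f ∈ SingSpace n 3 (Set.range p) ∅, SingularAt f q) →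
        ∃ (i : Fin ((n + 3) * (n + 2) / 6 - 1)) (c : ℂ), q = c • p i := by
  have h6 := card_aux n h3
  have hlow : 2 ≤ (n + 3) * (n + 2) / 6 := by
    rw [Nat.le_div_iff_mul_le (by norm_num)]; nlinarith
  refine contact_aux n hn (starExists n hn h3) ⟨⟨0, by omega⟩⟩ ?_
  rw [Fintype.card_fin, Nat.sub_add_cancel (by omega), h6]
end Certificates
end
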